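/- arXiv:1907.07801 — 5 statements merged into one kernel-verified Lean document; each statement's English description precedes it below -/
import Mathlib

section
/- Let P and Q be finite posets and let f, g : P → Q be monotone maps with f ≤ g pointwise. Let s(f), s(g) : s(P) → s(Q) be the induced maps on nonempty chains (given by taking images). Then s(f) and s(g) are strongly homotopic, i.e. they are related by the reflexive-transitive closure of pointwise comparability of monotone maps s(P) → s(Q). Consequently, if f and g lie in the same connected component of the poset of monotone maps P → Q, then s(f) and s(g) lie in the same connected component of the poset of monotone maps s(P) → s(Q). -/
/-- The poset `s(P)` of nonempty chains in `P`, ordered by inclusion. -/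
abbrev Chains (P : Type*) [Preorder P] : Type _ :=
  {s : Set P // s.Nonempty ∧ IsChain (· ≤ ·) s}

/-- The map `s(f) : s(P) → s(Q)` induced by a monotone map `f : P → Q`,
sending a nonempty chain to its image. -/
def sMap {P Q : Type*} [Preorder P] [Preorder Q] (f : P →o Q) : Chains P →o Chains Q where
  toFun σ := ⟨f '' σ.1, σ.2.1.image f, σ.2.2.image_of_map_rel _ _ f (fun _ _ h => f.monotone h)⟩
  monotone' := fun _ _ h => Set.image_mono h

/-!
If `f ≤ g` and `g x ≤ f y` whenever `x < y`, then `f(σ) ∪ g(σ)` is a chain for every chain `σ`, so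
`σ ↦ f(σ) ∪ g(σ)` is a monotone map above both `s(f)` and `s(g)`. A general pair `f ≤ g` is
interpolated by the maps equal to `f` at the points of height `< n` and to `g` at the others:
increasing `n` by one changes values only at points of height `n`, no two of which are strictly
comparable, so consecutive maps satisfy that criterion.
-/

section

open Relation

/-- Strong homotopy of monotone maps: they are joined by a fence of monotone maps, that is, they lie
in the same connected component of the poset `R →o S`. -/
abbrev StronglyHomotopic {R S : Type*} [Preorder R] [Preorder S] (h k : R →o S) : Prop :=
  ReflTransGen (SymmGen (· ≤ ·)) h k

theorem StronglyHomotopic.symm {R S : Type*} [Preorder R] [Preorder S] {h k : R →o S}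
    (H : StronglyHomotopic h k) : StronglyHomotopic k h :=
  symm_of (ReflTransGen (SymmGen (· ≤ ·))) H

variable {P Q : Type*} [Preorder P] [Preorder Q] {f g : P →o Q}

theorem isChain_image_union_image {σ : Set P} (hσ : IsChain (· ≤ ·) σ)
    (hfg : ∀ x y, SymmGen (· ≤ ·) x y → SymmGen (· ≤ ·) (f x) (g y)) :
    IsChain (· ≤ ·) (f '' σ ∪ g '' σ) := by
  refine isChain_union.2 ⟨f.monotone.isChain_image hσ, g.monotone.isChain_image hσ, ?_⟩
  rintro _ ⟨x, hx, rfl⟩ _ ⟨y, hy, rfl⟩ _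
  exact hfg x y (hσ.total hx hy)

theorem stronglyHomotopic_sMap_of_symmGen
    (hfg : ∀ x y, SymmGen (· ≤ ·) x y → SymmGen (· ≤ ·) (f x) (g y)) :
    StronglyHomotopic (sMap f) (sMap g) := by
  let imageUnion : Chains P →o Chains Q :=
    { toFun σ := ⟨f '' σ.1 ∪ g '' σ.1, (σ.2.1.image f).inl, isChain_image_union_image σ.2.2 hfg⟩
      monotone' _ _ h := Set.union_subset_union (Set.image_mono h) (Set.image_mono h) }
  have left_le : sMap f ≤ imageUnion := fun _ ↦ Set.subset_union_left
  have right_le : sMap g ≤ imageUnion := fun _ ↦ Set.subset_union_right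
  exact .head (.of_le left_le) (.single (.of_ge right_le))

theorem stronglyHomotopic_sMap_of_forall_lt (hfg : f ≤ g) (hlt : ∀ x y, x < y → g x ≤ f y) :
    StronglyHomotopic (sMap f) (sMap g) := by
  refine stronglyHomotopic_sMap_of_symmGen fun x y hxy ↦ ?_
  by_cases hle : x ≤ y
  · exact .of_le ((f.monotone hle).trans (hfg y))
  · exact .of_ge (hlt y x ((hxy.resolve_left hle).lt_of_not_ge hle))

open Classical in
/-- The monotone map equal to `f` on the lower set `L` and to `g ≥ f` off it, an interpolation
between `g` (for `L = ⊥`) and `f` (for `L = ⊤`). -/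
noncomputable def lowerPiecewise (hfg : f ≤ g) (L : LowerSet P) : P →o Q where
  toFun := (L : Set P).piecewise f g
  monotone' x y hxy := by
    by_cases hy : y ∈ L
    · simpa [hy, L.lower hxy hy] using f.monotone hxy
    · by_cases hx : x ∈ L
      · simpa [hx, hy] using (hfg x).trans (g.monotone hxy)
      · simpa [hx, hy] using g.monotone hxy

variable {hfg : f ≤ g} {L M : LowerSet P} {x : P}

theorem lowerPiecewise_apply_of_mem (hx : x ∈ L) : lowerPiecewise hfg L x = f x :=
  if_pos hx

theorem lowerPiecewise_apply_of_notMem (hx : x ∉ L) : lowerPiecewise hfg L x = g x :=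
  if_neg hx

theorem lowerPiecewise_le : lowerPiecewise hfg L ≤ g := fun x ↦ by
  by_cases hx : x ∈ L
  · exact (lowerPiecewise_apply_of_mem hx).trans_le (hfg x)
  · exact (lowerPiecewise_apply_of_notMem hx).le

theorem le_lowerPiecewise : f ≤ lowerPiecewise hfg L := fun x ↦ by
  by_cases hx : x ∈ L
  · exact (lowerPiecewise_apply_of_mem hx).ge
  · exact (hfg x).trans (lowerPiecewise_apply_of_notMem hx).ge

theorem lowerPiecewise_antitone (hfg : f ≤ g) : Antitone (lowerPiecewise hfg) := fun L M hLM x ↦ by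
  by_cases hx : x ∈ L
  · exact (lowerPiecewise_apply_of_mem (hLM hx)).trans_le (le_lowerPiecewise x)
  · exact (lowerPiecewise_le x).trans (lowerPiecewise_apply_of_notMem hx).ge

theorem lowerPiecewise_bot (hfg : f ≤ g) : lowerPiecewise hfg ⊥ = g :=
  OrderHom.ext _ _ <| funext fun _ ↦ lowerPiecewise_apply_of_notMem LowerSet.notMem_bot

theorem lowerPiecewise_top (hfg : f ≤ g) : lowerPiecewise hfg ⊤ = f :=
  OrderHom.ext _ _ <| funext fun _ ↦ lowerPiecewise_apply_of_mem LowerSet.mem_top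

theorem stronglyHomotopic_sMap_lowerPiecewise (hfg : f ≤ g) (hLM : L ≤ M)
    (hlt : ∀ x y, x < y → y ∈ M → x ∈ L) :
    StronglyHomotopic (sMap (lowerPiecewise hfg M)) (sMap (lowerPiecewise hfg L)) := by
  refine stronglyHomotopic_sMap_of_forall_lt (lowerPiecewise_antitone hfg hLM) fun x y hxy ↦ ?_
  by_cases hy : y ∈ M
  · calc lowerPiecewise hfg L x
      _ = f x := lowerPiecewise_apply_of_mem (hlt x y hxy hy)
      _ ≤ f y := f.monotone hxy.le
      _ ≤ lowerPiecewise hfg M y := le_lowerPiecewise y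
  · calc lowerPiecewise hfg L x
      _ ≤ g x := lowerPiecewise_le x
      _ ≤ g y := g.monotone hxy.le
      _ = lowerPiecewise hfg M y := (lowerPiecewise_apply_of_notMem hy).symm

/-- The lower set of points of height less than `n`, the stages at which `g` is turned into `f`. -/
noncomputable def heightLT (P : Type*) [Preorder P] (n : ℕ) : LowerSet P where
  carrier := {x | Order.height x < n}
  lower' _ _ hyx hx := (Order.height_mono hyx).trans_lt hx

theorem mem_heightLT {n : ℕ} {x : P} : x ∈ heightLT P n ↔ Order.height x < n := Iff.rfl

theorem heightLT_mono : Monotone (heightLT P) := fun _ _ hmn _ hx ↦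
  mem_heightLT.2 ((mem_heightLT.1 hx).trans_le (Nat.cast_le.2 hmn))

theorem heightLT_zero : heightLT P 0 = ⊥ := by
  ext x
  simp [mem_heightLT]

theorem mem_heightLT_of_lt {n : ℕ} {x y : P} (hxy : x < y) (hy : y ∈ heightLT P (n + 1)) :
    x ∈ heightLT P n := by
  have hx : Order.height x + 1 < n + 1 := (Order.height_add_one_le hxy).trans_lt (mod_cast hy)
  exact lt_of_add_lt_add_right hx

theorem exists_heightLT_eq_top (hP : Order.krullDim P ≠ ⊤) : ∃ n, heightLT P n = ⊤ := by
  obtain ⟨n, hn⟩ : ∃ n : ℕ, Order.krullDim P < n := by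
    simpa [ENat.WithBot.eq_top_iff_forall_ge] using hP
  refine ⟨n, top_unique fun x _ ↦ mem_heightLT.2 ?_⟩
  exact_mod_cast (Order.height_le_krullDim x).trans_lt hn

theorem stronglyHomotopic_sMap_lowerPiecewise_heightLT (hfg : f ≤ g) (n : ℕ) :
    StronglyHomotopic (sMap (lowerPiecewise hfg (heightLT P n))) (sMap g) := by
  induction n with
  | zero => rw [heightLT_zero, lowerPiecewise_bot]
  | succ n ih =>
    exact (stronglyHomotopic_sMap_lowerPiecewise hfg (heightLT_mono n.le_succ)
      fun _ _ ↦ mem_heightLT_of_lt).trans ih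

theorem stronglyHomotopic_sMap_of_le (hP : Order.krullDim P ≠ ⊤) (hfg : f ≤ g) :
    StronglyHomotopic (sMap f) (sMap g) := by
  obtain ⟨n, hn⟩ := exists_heightLT_eq_top hP
  simpa only [hn, lowerPiecewise_top] using stronglyHomotopic_sMap_lowerPiecewise_heightLT hfg n

end

theorem krullDim_ne_top_of_finite (P : Type*) [Preorder P] [Finite P] : Order.krullDim P ≠ ⊤ := by
  have := Fintype.ofFinite P
  exact (Order.krullDim_lt_coe_iff.2 fun l : LTSeries P ↦ l.length_lt_card).ne_top

theorem stmt13_general {P Q : Type*} [Preorder P] [Preorder Q] (hP : Order.krullDim P ≠ ⊤)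
    {f g : P →o Q} (hfg : StronglyHomotopic f g) : StronglyHomotopic (sMap f) (sMap g) :=
  Relation.ReflTransGen.lift' sMap
    (fun _ _ hkl ↦ hkl.elim (stronglyHomotopic_sMap_of_le hP)
      fun hlk ↦ (stronglyHomotopic_sMap_of_le hP hlk).symm) _ _ hfg

theorem stmt13 {P Q : Type*} [PartialOrder P] [Fintype P] [PartialOrder Q] [Fintype Q]
    (f g : P →o Q) :
    (f ≤ g → Relation.ReflTransGen
      (fun h k : Chains P →o Chains Q => h ≤ k ∨ k ≤ h) (sMap f) (sMap g)) ∧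
    (Relation.ReflTransGen (fun h k : P →o Q => h ≤ k ∨ k ≤ h) f g →
      Relation.ReflTransGen
        (fun h k : Chains P →o Chains Q => h ≤ k ∨ k ≤ h) (sMap f) (sMap g)) :=
  have hP := krullDim_ne_top_of_finite P
  ⟨fun hfg ↦ stmt13_general hP (.single (.inl hfg)), stmt13_general hP⟩
end

section
/- Let 𝒯 be a triangulated category, let 𝒢 be a small set of objects of 𝒯, and let 𝒰 be the smallest thick triangulated subcategory of 𝒯 containing 𝒢. Then 𝒰 is essentially small (it has a small skeleton). -/
open CategoryTheory Limits Pretriangulated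

universe v u

/-!
An extension of `Z` by `X` is determined up to isomorphism by its class `Z ⟶ X⟦1⟧`, and a retract
of `Y` by an idempotent of `Y`. In a locally small category, closing under extensions and retracts
thus preserves essential smallness, and the thick closure of a class of objects is reached from its
shifts after countably many such closures.
-/

universe w

section ShiftClosure

variable {C : Type u} [Category.{v} C] (P : ObjectProperty C)
  (A : Type*) [AddMonoid A] [HasShift C A]

lemma shiftClosure_eq_iSup_map_shiftFunctor :
    P.shiftClosure A = ⨆ a : A, P.map (shiftFunctor C a) := by
  ext X
  simp only [ObjectProperty.prop_shiftClosure_iff, iSup_apply, iSup_Prop_eq,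
    ObjectProperty.prop_map_iff]
  exact ⟨fun ⟨Y, a, e, hY⟩ ↦ ⟨a, Y, hY, ⟨e.symm⟩⟩, fun ⟨a, Y, hY, ⟨e⟩⟩ ↦ ⟨Y, a, e.symm, hY⟩⟩

instance essentiallySmall_shiftClosure [Small.{w} A] [ObjectProperty.EssentiallySmall.{w} P] :
    ObjectProperty.EssentiallySmall.{w} (P.shiftClosure A) := by
  rw [shiftClosure_eq_iSup_map_shiftFunctor]
  infer_instance

end ShiftClosure

section Pretriangulated

open ZeroObject

variable {C : Type u} [Category.{v} C] [HasZeroObject C] [Preadditive C] [HasShift C ℤ]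
  [∀ n : ℤ, (shiftFunctor C n).Additive] [Pretriangulated C]

instance essentiallySmall_extensionProduct [LocallySmall.{w} C] (P Q : ObjectProperty C)
    [ObjectProperty.EssentiallySmall.{w} P] [ObjectProperty.EssentiallySmall.{w} Q] :
    ObjectProperty.EssentiallySmall.{w} (P.extensionProduct Q) := by
  obtain ⟨P', _, hP⟩ := ObjectProperty.EssentiallySmall.exists_small_le'.{w} P
  obtain ⟨Q', _, hQ⟩ := ObjectProperty.EssentiallySmall.exists_small_le'.{w} Q
  let I := Σ (X : Subtype P') (Z : Subtype Q'), (Z.1 ⟶ X.1⟦(1 : ℤ)⟧)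
  choose Y f g hT using fun c : I ↦ distinguished_cocone_triangle₂ c.2.2
  have le_extensionProduct : P.extensionProduct Q ≤ P'.extensionProduct Q' :=
    calc P.extensionProduct Q
      _ ≤ P'.isoClosure.extensionProduct Q := ObjectProperty.monotone_extensionProduct_left Q hP
      _ ≤ P'.isoClosure.extensionProduct Q'.isoClosure :=
        ObjectProperty.monotone_extensionProduct_right _ hQ
      _ = P'.extensionProduct Q' := by
        rw [ObjectProperty.extensionProduct_isoClosure_left,
          ObjectProperty.extensionProduct_isoClosure_right]
  refine ⟨.ofObj Y, inferInstance, le_extensionProduct.trans ?_⟩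
  rintro W ⟨X, Z, a, b, c, hW, hX, hZ⟩
  let j : I := ⟨⟨X, hX⟩, ⟨Z, hZ⟩, c⟩
  have comm : c ≫ (shiftFunctor C (1 : ℤ)).map (𝟙 X) = 𝟙 Z ≫ c := by simp
  let e : Triangle.mk a b c ≅ Triangle.mk (f j) (g j) c :=
    isoTriangleOfIso₁₃ _ _ hW (hT j) (Iso.refl X) (Iso.refl Z) comm
  exact ⟨Y j, ⟨j⟩, ⟨Triangle.π₂.mapIso e⟩⟩

/-- The objects obtained by at most `n` rounds of extensions, each followed by retracts, from the
retracts of the shifts of `0` and of the objects of `P`. Both ends of an extension may come from the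
previous round, unlike in `ObjectProperty.triangEnvelopeIter`, so that the union over `n` is closed
under extensions without appeal to the octahedral axiom. -/
def thickIter (P : ObjectProperty C) : ℕ → ObjectProperty C
  | 0 => ((P ⊔ .singleton 0).shiftClosure ℤ).retractClosure
  | n + 1 => ((thickIter P n).extensionProduct (thickIter P n)).retractClosure

/-- The thick closure of `P`: the objects obtained from `0` and the objects of `P` by finitely many
shifts, extensions and retracts. Adjoining `0` makes this a triangulated subcategory even when `P`
is empty. -/
def thickClosure (P : ObjectProperty C) : ObjectProperty C := ⨆ n, thickIter P n

variable (P : ObjectProperty C)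

instance thickIter_isStableUnderRetracts (n : ℕ) : (thickIter P n).IsStableUnderRetracts := by
  cases n <;> unfold thickIter <;> infer_instance

instance thickIter_isStableUnderShift (n : ℕ) : (thickIter P n).IsStableUnderShift ℤ := by
  induction n <;> unfold thickIter <;> infer_instance

instance thickIter_containsZero (n : ℕ) : (thickIter P n).ContainsZero := by
  induction n with
  | zero =>
    have : (P ⊔ .singleton (0 : C)).Nonempty := .mono le_sup_right
    unfold thickIter
    infer_instance
  | succ n _ =>
    unfold thickIter
    infer_instance

instance essentiallySmall_thickIter [LocallySmall.{w} C] [ObjectProperty.EssentiallySmall.{w} P]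
    (n : ℕ) : ObjectProperty.EssentiallySmall.{w} (thickIter P n) := by
  induction n <;> unfold thickIter <;> infer_instance

lemma le_thickIter_zero : P ≤ thickIter P 0 :=
  calc P
    _ ≤ P ⊔ .singleton 0 := le_sup_left
    _ ≤ (P ⊔ .singleton 0).shiftClosure ℤ := ObjectProperty.le_shiftClosure _
    _ ≤ thickIter P 0 := ObjectProperty.le_retractClosure _

lemma extensionProduct_thickIter_le (n : ℕ) :
    (thickIter P n).extensionProduct (thickIter P n) ≤ thickIter P (n + 1) :=
  ObjectProperty.le_retractClosure _

lemma monotone_thickIter : Monotone (thickIter P) :=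
  monotone_nat_of_le_succ fun n ↦
    (ObjectProperty.le_extensionProduct_left _).trans (extensionProduct_thickIter_le P n)

lemma le_thickClosure : P ≤ thickClosure P :=
  (le_thickIter_zero P).trans (le_iSup (thickIter P) 0)

lemma thickClosure_iff (X : C) : thickClosure P X ↔ ∃ n, thickIter P n X :=
  ObjectProperty.prop_iSup_iff _ X

instance thickClosure_isStableUnderRetracts : (thickClosure P).IsStableUnderRetracts where
  of_retract {X Y} r hY := by
    obtain ⟨n, hn⟩ := (thickClosure_iff P Y).1 hY
    exact (thickClosure_iff P X).2 ⟨n, (thickIter P n).prop_of_retract r hn⟩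

instance thickClosure_isTriangulated : (thickClosure P).IsTriangulated where
  exists_zero :=
    ⟨0, isZero_zero C, (thickClosure_iff P 0).2 ⟨0, (thickIter P 0).prop_zero⟩⟩
  isStableUnderShiftBy k := ⟨fun X hX ↦ by
    obtain ⟨n, hn⟩ := (thickClosure_iff P X).1 hX
    exact (thickClosure_iff P _).2 ⟨n, (thickIter P n).le_shift k X hn⟩⟩
  ext₂' T hT h₁ h₃ := by
    obtain ⟨m, hm⟩ := (thickClosure_iff P T.obj₁).1 h₁
    obtain ⟨n, hn⟩ := (thickClosure_iff P T.obj₃).1 h₃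
    have hT₂ : (thickIter P (max m n)).extensionProduct (thickIter P (max m n)) T.obj₂ :=
      ⟨_, _, _, _, _, hT, monotone_thickIter P (le_max_left m n) _ hm,
        monotone_thickIter P (le_max_right m n) _ hn⟩
    exact (thickClosure P).le_isoClosure _
      ((thickClosure_iff P _).2 ⟨_, extensionProduct_thickIter_le P _ _ hT₂⟩)

instance essentiallySmall_thickClosure [LocallySmall.{w} C]
    [ObjectProperty.EssentiallySmall.{w} P] :
    ObjectProperty.EssentiallySmall.{w} (thickClosure P) := by
  unfold thickClosure
  infer_instance

theorem stmt16_general [LocallySmall.{w} C] (S : ObjectProperty C)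
    [ObjectProperty.EssentiallySmall.{w} S]
    (hP : ∀ (Q : ObjectProperty C) [Q.IsTriangulated] [Q.IsStableUnderRetracts], S ≤ Q → P ≤ Q) :
    EssentiallySmall.{w} P.FullSubcategory := by
  have : ObjectProperty.EssentiallySmall.{w} P := .of_le (hP (thickClosure S) (le_thickClosure S))
  infer_instance

end Pretriangulated

/-- If `𝒰` (the objects satisfying `P`) is the smallest thick triangulated subcategory of a
triangulated category containing a small set of objects `G i`, then `𝒰` is essentially
small. -/
theorem stmt16 (C : Type u) [Category.{v} C] [HasZeroObject C] [Preadditive C]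
    [HasShift C ℤ] [∀ n : ℤ, (CategoryTheory.shiftFunctor C n).Additive]
    [Pretriangulated C]
    {ι : Type v} (G : ι → C)
    (P : C → Prop)
    -- `P` defines a thick triangulated subcategory containing the `G i` ...
    (hzero : ∀ Z : C, IsZero Z → P Z)
    (hiso : ∀ ⦃X Y : C⦄, (X ≅ Y) → P X → P Y)
    (hshift : ∀ (X : C) (n : ℤ), P X → P (X⟦n⟧))
    (hext : ∀ (T : Triangle C), T ∈ (distTriang C) → P T.obj₁ → P T.obj₃ → P T.obj₂)
    (hretract : ∀ ⦃X Y : C⦄ (i : X ⟶ Y) (r : Y ⟶ X), i ≫ r = 𝟙 X → P Y → P X)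
    (hG : ∀ i, P (G i))
    -- ... and it is the smallest such
    (hmin : ∀ (P' : C → Prop),
      (∀ Z : C, IsZero Z → P' Z) →
      (∀ ⦃X Y : C⦄, (X ≅ Y) → P' X → P' Y) →
      (∀ (X : C) (n : ℤ), P' X → P' (X⟦n⟧)) →
      (∀ (T : Triangle C), T ∈ (distTriang C) → P' T.obj₁ → P' T.obj₃ → P' T.obj₂) →
      (∀ ⦃X Y : C⦄ (i : X ⟶ Y) (r : Y ⟶ X), i ≫ r = 𝟙 X → P' Y → P' X) →
      (∀ i, P' (G i)) → ∀ X, P X → P' X) :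
    EssentiallySmall.{v} (ObjectProperty.FullSubcategory P) :=
  stmt16_general.{v, u, v} P (.ofObj G) fun Q _ _ hGQ ↦ hmin Q (fun _ ↦ Q.prop_of_isZero)
    (fun _ _ ↦ Q.prop_of_iso) (fun X n ↦ Q.le_shift n X) Q.ext_of_isTriangulatedClosed₂
    (fun _ _ i r h ↦ Q.prop_of_retract ⟨i, r, h⟩) (fun i ↦ hGQ _ ⟨i⟩)
end

section
/- (Brown representability) Let 𝒯 be a compactly generated triangulated category with small coproducts, and let K : 𝒯^op → Ab be a cohomology theory, i.e. an additive functor that sends small coproducts in 𝒯 to products of abelian groups and sends every distinguished triangle to an exact sequence. Then K is representable: there is an object X of 𝒯 and a natural isomorphism K ≅ Hom_𝒯(−, X). -/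
open CategoryTheory Limits Pretriangulated Opposite

universe v u

/-- An object `T` is compact if `Hom(T, -)`, as an additive functor to abelian groups,
preserves small coproducts. -/
def IsCompactObj (C : Type u) [Category.{v} C] [Preadditive C] (T : C) : Prop :=
  ∀ α : Type v, Nonempty
    (PreservesColimitsOfShape (Discrete α) (preadditiveCoyoneda.obj (op T)))

/-!
Brown's original argument. Call `k : K X` universal for a class `P` of objects if every element of
`K T` with `P T` is the pullback of `k` along a unique `T ⟶ X`. When `P` is a small class of compact
objects, any `k : K X` extends to a universal element: add coproduct summands hitting all elements
of the `K T`, then infinitely often attach cones on the maps `T ⟶ X` that kill `k`, and pass to the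
homotopy colimit, through whose stages every map from a compact object factors. When `P` detects
isomorphisms, a map between objects carrying compatible universal elements is invertible. Hence a
universal `l : K L` is universal for all objects: extending `(l, y)` in `K (L ⊞ Y)`, or `l` to the
cone of a map `Y ⟶ L` that kills it, to a universal element gives again an object isomorphic to `L`.
-/

universe w

namespace IsCompactObj

section Coproducts

variable {C : Type u} [Category.{v} C] [Preadditive C] {T : C}

lemma preservesColimitsOfShape (hT : IsCompactObj C T) (α : Type w) [Small.{v} α] :
    PreservesColimitsOfShape (Discrete α) (preadditiveCoyoneda.obj (op T)) := by
  have := (hT (Shrink.{v} α)).some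
  exact preservesColimitsOfShape_of_equiv (Discrete.equivalence (equivShrink α)).symm _

lemma exists_eq_sum_comp_ι (hT : IsCompactObj C T) {α : Type w} [Small.{v} α] (f : α → C)
    [HasCoproduct f] (g : T ⟶ ∐ f) :
    ∃ (s : Finset α) (k : ∀ a, T ⟶ f a), g = ∑ a ∈ s, k a ≫ Sigma.ι f a := by
  let R (a : α) : Submodule ℤ (T ⟶ ∐ f) :=
    LinearMap.range (Preadditive.rightComp T (Sigma.ι f a)).toIntLinearMap
  have hg : g ∈ ⨆ a, R a := by
    have := hT.preservesColimitsOfShape α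
    have hc := isColimitOfPreserves (preadditiveCoyoneda.obj (op T)) (coproductIsCoproduct f)
    let q : (preadditiveCoyoneda.obj (op T)).obj (∐ f) ⟶
        AddCommGrpCat.of ((T ⟶ ∐ f) ⧸ ⨆ a, R a) :=
      AddCommGrpCat.ofHom (Submodule.mkQ (⨆ a, R a)).toAddMonoidHom
    have hq : q = 0 := by
      refine hc.hom_ext ?_
      rintro ⟨a⟩
      ext (k : T ⟶ f a)
      exact (Submodule.Quotient.mk_eq_zero _).2 (Submodule.mem_iSup_of_mem (p := R) a ⟨k, rfl⟩)
    exact (Submodule.Quotient.mk_eq_zero _).1 (ConcreteCategory.congr_hom hq g)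
  obtain ⟨s, hs⟩ := Submodule.exists_finset_of_mem_iSup R hg
  obtain ⟨μ, hμ⟩ := (Submodule.mem_iSup_finset_iff_exists_sum R g).1 hs
  choose k hk using fun a => (μ a).2
  exact ⟨s, k, hμ.symm.trans (Finset.sum_congr rfl fun a _ => (hk a).symm)⟩

lemma eq_zero_of_forall_comp_π_eq_zero (hT : IsCompactObj C T) {α : Type w} [Small.{v} α]
    [DecidableEq α] (f : α → C) [HasCoproduct f] (g : T ⟶ ∐ f)
    (hg : ∀ a, g ≫ Sigma.π f a = 0) : g = 0 := by
  obtain ⟨s, k, rfl⟩ := hT.exists_eq_sum_comp_ι f g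
  refine Finset.sum_eq_zero fun a ha => ?_
  have hk : k a = 0 := by
    rw [← hg a, Preadditive.sum_comp, Finset.sum_eq_single_of_mem a ha]
    · rw [Category.assoc, Sigma.ι_π_eq_id, Category.comp_id]
    · intro b _ hb
      rw [Category.assoc, Sigma.ι_π_of_ne f hb, comp_zero]
  rw [hk, zero_comp]

end Coproducts

section Shift

variable {C : Type u} [Category.{v} C] [Preadditive C] [HasShift C ℤ]
  [∀ n : ℤ, (shiftFunctor C n).Additive] {T : C}

lemma shift (hT : IsCompactObj C T) (n : ℤ) : IsCompactObj C (T⟦n⟧) := by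
  intro α
  have := (hT α).some
  let adj := (shiftEquiv C n).toAdjunction
  have : (shiftEquiv C n).functor.Additive := inferInstanceAs (shiftFunctor C n).Additive
  let e : shiftFunctor C (-n) ⋙ preadditiveCoyoneda.obj (op T) ≅
      preadditiveCoyoneda.obj (op (T⟦n⟧)) :=
    NatIso.ofComponents (fun Y => (adj.homAddEquiv T Y).symm.toAddCommGrpIso) fun {Y Z} g => by
      ext (h : T ⟶ Y⟦-n⟧)
      exact adj.homEquiv_naturality_right_symm h g
  exact ⟨preservesColimitsOfShape_of_natIso e⟩

instance : ObjectProperty.IsStableUnderShift (IsCompactObj C) ℤ where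
  isStableUnderShiftBy n := ⟨fun _ hT => shift hT n⟩

end Shift

end IsCompactObj

namespace BrownRepresentability

section Presheaf

variable {C : Type u} [Category.{v} C] {K : Cᵒᵖ ⥤ AddCommGrpCat.{v}}

lemma bijective_map_sigmaι [∀ α : Type v, PreservesLimitsOfShape (Discrete α) K]
    {α : Type w} [Small.{v} α] (f : α → C) [HasCoproduct f] :
    Function.Bijective fun (x : K.obj (op (∐ f))) (a : α) => K.map (Sigma.ι f a).op x := by
  have : PreservesLimitsOfShape (Discrete α) K :=
    preservesLimitsOfShape_of_equiv (Discrete.equivalence (equivShrink.{v} α)).symm _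
  have hc := isLimitOfPreserves (K ⋙ forget _) (Cofan.IsColimit.op (coproductIsCoproduct f))
  let e := Types.isLimitEquivSections hc
  refine ⟨fun x y hxy => e.injective (Subtype.ext (funext fun a => congrFun hxy a.as)), fun z => ?_⟩
  refine ⟨e.symm ⟨fun a => z a.as, ?_⟩, ?_⟩
  · rintro ⟨a⟩ ⟨b⟩ g
    obtain rfl := Discrete.eq_of_hom g
    obtain rfl : g = 𝟙 _ := Subsingleton.elim _ _
    simp
  · funext a
    exact Types.isLimitEquivSections_symm_apply hc _ (Discrete.mk a)

end Presheaf

section Triangles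

variable {C : Type u} [Category.{v} C] [Preadditive C] [HasShift C ℤ]
  [∀ n : ℤ, (shiftFunctor C n).Additive]

lemma eq_zero_of_comp_shift_map_eq_zero {A X Y : C} {f : X ⟶ Y} (n : ℤ)
    (hf : ∀ g : A⟦-n⟧ ⟶ X, g ≫ f = 0 → g = 0) {g : A ⟶ X⟦n⟧} (hg : g ≫ f⟦n⟧' = 0) : g = 0 := by
  let adj := (shiftEquiv C n).symm.toAdjunction
  have : (shiftEquiv C n).symm.functor.Additive := inferInstanceAs (shiftFunctor C (-n)).Additive
  obtain ⟨h, rfl⟩ := (adj.homAddEquiv A X).surjective g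
  have hh : adj.homAddEquiv A Y (h ≫ f) = 0 := (adj.homEquiv_naturality_right h f).trans hg
  exact (congrArg _ (hf h ((map_eq_zero_iff _ (EquivLike.injective _)).1 hh))).trans (map_zero _)

variable [HasZeroObject C] [Pretriangulated C]

lemma exists_comp_mor₂_eq {A : C} {T : Triangle C} (hT : T ∈ distTriang C)
    (hA : ∀ g : A⟦(-1 : ℤ)⟧ ⟶ T.obj₁, g ≫ T.mor₁ = 0 → g = 0) (g : A ⟶ T.obj₃) :
    ∃ h : A ⟶ T.obj₂, h ≫ T.mor₂ = g := by
  have hg : g ≫ T.mor₃ = 0 := eq_zero_of_comp_shift_map_eq_zero 1 hA (by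
    rw [Category.assoc, comp_distTriang_mor_zero₃₁ _ hT, comp_zero])
  obtain ⟨h, rfl⟩ := Triangle.coyoneda_exact₃ T hT g hg
  exact ⟨h, rfl⟩

/-- A presheaf of abelian groups is cohomological if it sends every distinguished triangle
`X ⟶ Y ⟶ Z ⟶ X⟦1⟧` to an exact sequence `K Z ⟶ K Y ⟶ K X`. -/
def IsCohomological (K : Cᵒᵖ ⥤ AddCommGrpCat.{w}) : Prop :=
  ∀ T : Triangle C, T ∈ distTriang C → Function.Exact (K.map T.mor₂.op) (K.map T.mor₁.op)

variable {K : Cᵒᵖ ⥤ AddCommGrpCat.{w}}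

lemma IsCohomological.exists_map_eq_of_map_eq_zero (hK : IsCohomological K) {X Y : C} (d : Y ⟶ X)
    {k : K.obj (op X)} (hk : K.map d.op k = 0) :
    ∃ (Z : C) (c : X ⟶ Z) (l : K.obj (op Z)), d ≫ c = 0 ∧ K.map c.op l = k := by
  obtain ⟨Z, c, δ, hT⟩ := distinguished_cocone_triangle d
  obtain ⟨l, hl⟩ := (hK _ hT k).1 hk
  exact ⟨Z, c, l, comp_distTriang_mor_zero₁₂ _ hT, hl⟩

end Triangles

section Biproduct

variable {C : Type u} [Category.{v} C] [Preadditive C] [HasBinaryBiproducts C]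
  {K : Cᵒᵖ ⥤ AddCommGrpCat.{w}} [K.Additive]

lemma exists_map_eq_and_map_eq {X Y : C} (k : K.obj (op X)) (y : K.obj (op Y)) :
    ∃ (Z : C) (i : X ⟶ Z) (j : Y ⟶ Z) (z : K.obj (op Z)),
      K.map i.op z = k ∧ K.map j.op z = y := by
  refine ⟨X ⊞ Y, biprod.inl, biprod.inr,
    K.map biprod.fst.op k + K.map biprod.snd.op y, ?_, ?_⟩ <;>
  simp [← ConcreteCategory.comp_apply, ← K.map_comp, ← op_comp]

end Biproduct

section SeqShift

variable {C : Type u} [Category.{v} C] {X : ℕ → C} [HasCoproduct X] (s : ∀ n, X n ⟶ X (n + 1))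

/-- The endomorphism of `∐ X` that maps each term of the sequence to the next one. -/
noncomputable def seqShift : ∐ X ⟶ ∐ X :=
  Limits.Sigma.desc fun n => s n ≫ Sigma.ι X (n + 1)

lemma ι_seqShift (n : ℕ) : Sigma.ι X n ≫ seqShift s = s n ≫ Sigma.ι X (n + 1) :=
  Sigma.ι_desc _ _

lemma seqShift_π_zero [HasZeroMorphisms C] : seqShift s ≫ Sigma.π X 0 = 0 := by
  refine Sigma.hom_ext _ _ fun n => ?_
  rw [reassoc_of% ι_seqShift s n, Sigma.ι_π_of_ne X n.succ_ne_zero, comp_zero, comp_zero]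

lemma seqShift_π_succ [HasZeroMorphisms C] (m : ℕ) :
    seqShift s ≫ Sigma.π X (m + 1) = Sigma.π X m ≫ s m := by
  refine Sigma.hom_ext _ _ fun n => ?_
  rw [reassoc_of% ι_seqShift s n]
  obtain rfl | hnm := eq_or_ne n m
  · rw [Sigma.ι_π_eq_id, Sigma.ι_π_eq_id_assoc, Category.comp_id]
  · rw [Sigma.ι_π_of_ne X (by simpa using hnm), Sigma.ι_π_of_ne_assoc X hnm, comp_zero, zero_comp]

lemma eq_zero_of_comp_id_sub_seqShift_eq_zero [Preadditive C] {T : C} (hT : IsCompactObj C T)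
    (g : T ⟶ ∐ X) (hg : g ≫ (𝟙 _ - seqShift s) = 0) : g = 0 := by
  have hg' : g = g ≫ seqShift s := by
    rwa [Preadditive.comp_sub, Category.comp_id, sub_eq_zero] at hg
  refine hT.eq_zero_of_forall_comp_π_eq_zero X g fun m => ?_
  induction m with
  | zero => rw [hg', Category.assoc, seqShift_π_zero, comp_zero]
  | succ m ih => rw [hg', Category.assoc, seqShift_π_succ, reassoc_of% ih, zero_comp]

end SeqShift

section Hocolim

variable {C : Type u} [Category.{v} C] [HasZeroObject C] [Preadditive C] [HasShift C ℤ]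
  [∀ n : ℤ, (shiftFunctor C n).Additive] [Pretriangulated C]
  {X : ℕ → C} [HasCoproduct X] (s : ∀ n, X n ⟶ X (n + 1))

/-- The homotopy colimit (mapping telescope) of a sequence `X 0 ⟶ X 1 ⟶ ⋯`: a chosen cone of
`𝟙 - seqShift s`. -/
noncomputable def hocolim : C :=
  (distinguished_cocone_triangle (𝟙 (∐ X) - seqShift s)).choose

/-- The projection from the coproduct of a sequence to its homotopy colimit. -/
noncomputable def toHocolim : ∐ X ⟶ hocolim s :=
  (distinguished_cocone_triangle (𝟙 (∐ X) - seqShift s)).choose_spec.choose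

lemma exists_hocolim_distinguished : ∃ δ : hocolim s ⟶ (∐ X)⟦(1 : ℤ)⟧,
    Triangle.mk (𝟙 (∐ X) - seqShift s) (toHocolim s) δ ∈ distTriang C :=
  (distinguished_cocone_triangle (𝟙 (∐ X) - seqShift s)).choose_spec.choose_spec

/-- The structure map from a term of a sequence to its homotopy colimit. -/
noncomputable def hocolimι (n : ℕ) : X n ⟶ hocolim s :=
  Sigma.ι X n ≫ toHocolim s

lemma comp_hocolimι (n : ℕ) : s n ≫ hocolimι s (n + 1) = hocolimι s n := by
  obtain ⟨δ, hT⟩ := exists_hocolim_distinguished s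
  have h : (𝟙 _ - seqShift s) ≫ toHocolim s = 0 := comp_distTriang_mor_zero₁₂ _ hT
  rw [Preadditive.sub_comp, Category.id_comp, sub_eq_zero] at h
  rw [hocolimι, hocolimι, ← reassoc_of% ι_seqShift s n, ← h]

lemma exists_comp_hocolimι_eq_of_le {n N : ℕ} (h : n ≤ N) :
    ∃ t : X n ⟶ X N, t ≫ hocolimι s N = hocolimι s n := by
  induction N, h using Nat.le_induction with
  | base => exact ⟨𝟙 _, Category.id_comp _⟩
  | succ N _ ih =>
    obtain ⟨t, ht⟩ := ih
    exact ⟨t ≫ s N, by rw [Category.assoc, comp_hocolimι, ht]⟩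

variable {s} in
lemma exists_comp_hocolimι_eq {T : C} (hT : IsCompactObj C T) (g : T ⟶ hocolim s) :
    ∃ (n : ℕ) (h : T ⟶ X n), h ≫ hocolimι s n = g := by
  obtain ⟨δ, hdist⟩ := exists_hocolim_distinguished s
  obtain ⟨g, rfl⟩ : ∃ h : T ⟶ ∐ X, h ≫ toHocolim s = g := exists_comp_mor₂_eq hdist
    (eq_zero_of_comp_id_sub_seqShift_eq_zero s (hT.shift (-1))) g
  obtain ⟨F, k, rfl⟩ := hT.exists_eq_sum_comp_ι X g
  have hfactor (n : ℕ) (hn : n ∈ F) :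
      ∃ t : X n ⟶ X (F.sup id), t ≫ hocolimι s (F.sup id) = hocolimι s n :=
    exists_comp_hocolimι_eq_of_le s (Finset.le_sup (f := id) hn)
  choose! t ht using hfactor
  refine ⟨F.sup id, ∑ n ∈ F, k n ≫ t n, ?_⟩
  rw [Preadditive.sum_comp, Preadditive.sum_comp]
  refine Finset.sum_congr rfl fun n hn => ?_
  rw [Category.assoc, Category.assoc, ht n hn, hocolimι]

variable {K : Cᵒᵖ ⥤ AddCommGrpCat.{v}} [K.Additive]
  [∀ α : Type v, PreservesLimitsOfShape (Discrete α) K]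

variable {s} in
lemma IsCohomological.exists_map_hocolimι_eq (hK : IsCohomological K) (k : ∀ n, K.obj (op (X n)))
    (hk : ∀ n, K.map (s n).op (k (n + 1)) = k n) :
    ∃ l : K.obj (op (hocolim s)), ∀ n, K.map (hocolimι s n).op l = k n := by
  obtain ⟨δ, hT⟩ := exists_hocolim_distinguished s
  obtain ⟨x, hx⟩ := (bijective_map_sigmaι X).2 k
  replace hx (n : ℕ) : K.map (Sigma.ι X n).op x = k n := congrFun hx n
  have hx₀ : K.map (𝟙 _ - seqShift s).op x = 0 := by
    refine (bijective_map_sigmaι X).1 (funext fun n => ?_)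
    have h := congrArg (fun f => K.map f.op x) (ι_seqShift s n)
    simp only [op_comp, K.map_comp, ConcreteCategory.comp_apply, hx, hk] at h
    simp [hx, h]
  obtain ⟨l, hl⟩ := (hK _ hT x).1 hx₀
  refine ⟨l, fun n => ?_⟩
  rw [hocolimι, op_comp, K.map_comp]
  exact (congrArg _ hl).trans (hx n)

end Hocolim

section Universal

variable {C : Type u} [Category.{v} C] {K : Cᵒᵖ ⥤ AddCommGrpCat.{w}} {P Q : ObjectProperty C}

/-- An element `k` of `K X` is universal for `P` if `g ↦ K.map g.op k` identifies `Hom(T, X)` with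
`K T` for every `T` satisfying `P`; being universal for `⊤` means that `k` represents `K`. -/
def IsUniversal (P : ObjectProperty C) {X : C} (k : K.obj (op X)) : Prop :=
  ∀ ⦃T : C⦄, P T → Function.Bijective fun g : T ⟶ X => K.map g.op k

namespace IsUniversal

lemma of_le_isoClosure {X : C} {k : K.obj (op X)} (hk : IsUniversal Q k)
    (hPQ : P ≤ Q.isoClosure) : IsUniversal P k := by
  intro T hT
  obtain ⟨G, hG, ⟨e⟩⟩ := hPQ T hT
  have h : (fun g : T ⟶ X => K.map g.op k) =
      K.map e.hom.op ∘ (fun g : G ⟶ X => K.map g.op k) ∘ fun g => e.inv ≫ g := by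
    ext g
    simp [← ConcreteCategory.comp_apply, ← K.map_comp, ← op_comp]
  rw [h]
  exact (ConcreteCategory.bijective_of_isIso (K.map e.hom.op)).comp
    ((hk hG).comp e.homFromEquiv.bijective)

lemma isIso (hP : P.IsDetecting) {L L' : C} {l : K.obj (op L)} {l' : K.obj (op L')}
    (hl : IsUniversal P l) (hl' : IsUniversal P l') (f : L ⟶ L') (hf : K.map f.op l' = l) :
    IsIso f := by
  refine hP f fun T hT => Function.bijective_iff_existsUnique _ |>.1 ?_
  refine (Function.Bijective.of_comp_iff' (hl' hT) fun g : T ⟶ L => g ≫ f).1 ?_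
  convert hl hT using 2 with g
  simp [hf]

lemma nonempty_iso [Preadditive C] {K : Cᵒᵖ ⥤ AddCommGrpCat.{v}} [K.Additive] {X : C}
    {k : K.obj (op X)} (hk : IsUniversal ⊤ k) : Nonempty (K ≅ preadditiveYoneda.obj X) := by
  let eval (Y : C) : (Y ⟶ X) →+ K.obj (op Y) :=
    { toFun g := K.map g.op k
      map_zero' := by simp
      map_add' g h := by simp }
  have heval (Y : C) : Function.Bijective (eval Y) := hk trivial
  refine ⟨Iso.symm (NatIso.ofComponents
    (fun Y => (AddEquiv.ofBijective _ (heval Y.unop)).toAddCommGrpIso) fun {Y Z} h => ?_)⟩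
  ext (g : Y.unop ⟶ X)
  change K.map (h.unop ≫ g).op k = K.map h (K.map g.op k)
  simp

end IsUniversal

end Universal

section Existence

variable {C : Type u} [Category.{v} C] [HasZeroObject C] [Preadditive C] [HasShift C ℤ]
  [∀ n : ℤ, (shiftFunctor C n).Additive] [Pretriangulated C] [HasCoproducts.{v} C]
  {K : Cᵒᵖ ⥤ AddCommGrpCat.{v}} [∀ α : Type v, PreservesLimitsOfShape (Discrete α) K]

lemma IsCohomological.exists_map_eq_forall_comp_eq_zero (hK : IsCohomological K)
    (P : ObjectProperty C) [ObjectProperty.Small.{v} P] {X : C} (k : K.obj (op X)) :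
    ∃ (Y : C) (f : X ⟶ Y) (l : K.obj (op Y)), K.map f.op l = k ∧
      ∀ ⦃T : C⦄, P T → ∀ g : T ⟶ X, K.map g.op k = 0 → g ≫ f = 0 := by
  let J := Σ T : Subtype P, {g : T.1 ⟶ X // K.map g.op k = 0}
  have := hasCoproductsOfShape_of_small.{v} C J
  let d : ∐ (fun q : J => q.1.1) ⟶ X := Limits.Sigma.desc fun q => q.2.1
  have hd : K.map d.op k = 0 := by
    refine (bijective_map_sigmaι fun q : J => q.1.1).1 (funext fun q => ?_)
    dsimp only
    rw [← ConcreteCategory.comp_apply, ← K.map_comp, ← op_comp, Sigma.ι_desc, map_zero, q.2.2]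
  obtain ⟨Y, f, l, hdf, hl⟩ := hK.exists_map_eq_of_map_eq_zero d hd
  refine ⟨Y, f, l, hl, fun T hT g hg => ?_⟩
  have hd' : Sigma.ι (fun q : J => q.1.1) ⟨⟨T, hT⟩, g, hg⟩ ≫ d = g := Sigma.ι_desc _ _
  rw [← hd', Category.assoc, hdf, comp_zero]

variable [K.Additive]

lemma exists_map_eq_forall_surjective (P : ObjectProperty C) [ObjectProperty.Small.{v} P] {X : C}
    (k : K.obj (op X)) :
    ∃ (Y : C) (f : X ⟶ Y) (l : K.obj (op Y)), K.map f.op l = k ∧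
      ∀ ⦃T : C⦄, P T → Function.Surjective fun g : T ⟶ Y => K.map g.op l := by
  let J := Σ T : Subtype P, K.obj (op T.1)
  have := hasCoproductsOfShape_of_small.{v} C J
  obtain ⟨y, hy⟩ := (bijective_map_sigmaι fun q : J => q.1.1).2 fun q => q.2
  obtain ⟨Y, f, j, l, hl, hj⟩ := exists_map_eq_and_map_eq k y
  refine ⟨Y, f, l, hl, fun T hT t => ⟨Sigma.ι (fun q : J => q.1.1) ⟨⟨T, hT⟩, t⟩ ≫ j, ?_⟩⟩
  dsimp only
  rw [op_comp, K.map_comp, ConcreteCategory.comp_apply, hj]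
  exact congrFun hy _

lemma IsCohomological.exists_injective_extension (hK : IsCohomological K) (P : ObjectProperty C)
    [ObjectProperty.Small.{v} P] (hP : P ≤ IsCompactObj C) {X : C} (k : K.obj (op X)) :
    ∃ (Y : C) (f : X ⟶ Y) (l : K.obj (op Y)), K.map f.op l = k ∧
      ∀ ⦃T : C⦄, P T → Function.Injective fun g : T ⟶ Y => K.map g.op l := by
  choose Y f l hl hf using fun p : Σ X : C, K.obj (op X) =>
    hK.exists_map_eq_forall_comp_eq_zero P p.2
  let A (n : ℕ) : Σ X : C, K.obj (op X) := Nat.rec ⟨X, k⟩ (fun _ p => ⟨Y p, l p⟩) n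
  let s (n : ℕ) : (A n).1 ⟶ (A (n + 1)).1 := f (A n)
  obtain ⟨z, hz⟩ := hK.exists_map_hocolimι_eq (s := s) (fun n => (A n).2) fun n => hl (A n)
  refine ⟨hocolim s, hocolimι s 0, z, hz 0, fun T hT g g' hgg' => ?_⟩
  obtain ⟨n, h, hh⟩ := exists_comp_hocolimι_eq (hP T hT) (g - g')
  have hzero : K.map h.op (A n).2 = 0 := by
    rw [← hz, ← ConcreteCategory.comp_apply, ← K.map_comp, ← op_comp, hh]
    simpa [sub_eq_zero] using hgg'
  rw [← sub_eq_zero, ← hh, ← comp_hocolimι, ← Category.assoc, hf (A n) hT h hzero, zero_comp]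

lemma IsCohomological.exists_isUniversal_extension (hK : IsCohomological K) (P : ObjectProperty C)
    [ObjectProperty.EssentiallySmall.{v} P] (hP : P ≤ IsCompactObj C) {X : C}
    (k : K.obj (op X)) :
    ∃ (L : C) (f : X ⟶ L) (l : K.obj (op L)), K.map f.op l = k ∧ IsUniversal P l := by
  obtain ⟨Q, _, hQP, hPQ⟩ := ObjectProperty.EssentiallySmall.exists_small_le P
  obtain ⟨Y, f, y, hy, hsurj⟩ := exists_map_eq_forall_surjective Q k
  obtain ⟨L, g, l, hl, hinj⟩ := hK.exists_injective_extension Q (hQP.trans hP) y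
  have hl' : IsUniversal Q l := by
    refine fun T hT => ⟨hinj hT, fun t => ?_⟩
    obtain ⟨h, rfl⟩ := hsurj hT t
    exact ⟨h ≫ g, by simp [hl]⟩
  exact ⟨L, f ≫ g, l, by simp [hl, hy], hl'.of_le_isoClosure hPQ⟩

lemma IsUniversal.top {P : ObjectProperty C} [ObjectProperty.EssentiallySmall.{v} P]
    (hP : P ≤ IsCompactObj C) (hdet : P.IsDetecting) (hK : IsCohomological K) {L : C}
    {l : K.obj (op L)} (hl : IsUniversal P l) : IsUniversal ⊤ l := by
  have exists_isIso {X : C} (i : L ⟶ X) (x : K.obj (op X)) (hx : K.map i.op x = l) :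
      ∃ (L' : C) (f : X ⟶ L') (l' : K.obj (op L')), K.map f.op l' = x ∧ IsIso (i ≫ f) := by
    obtain ⟨L', f, l', hf, hl'⟩ := hK.exists_isUniversal_extension P hP x
    exact ⟨L', f, l', hf, hl.isIso hdet hl' _ (by simp [hf, hx])⟩
  refine fun Y _ => ⟨fun g g' hgg' => ?_, fun y => ?_⟩
  · have hd : K.map (g - g').op l = 0 := by simpa [sub_eq_zero] using hgg'
    obtain ⟨X, c, x, hc, hx⟩ := hK.exists_map_eq_of_map_eq_zero (g - g') hd
    obtain ⟨L', f, l', -, hf⟩ := exists_isIso c x hx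
    rw [← sub_eq_zero, ← cancel_mono (c ≫ f), reassoc_of% hc, zero_comp, zero_comp]
  · obtain ⟨X, i, j, x, hi, hj⟩ := exists_map_eq_and_map_eq l y
    obtain ⟨L', f, l', hf, _⟩ := exists_isIso i x hi
    have hl' : K.map (i ≫ f).op l' = l := by simp [hf, hi]
    refine ⟨j ≫ f ≫ inv (i ≫ f), ?_⟩
    rw [← hl', ← hj, ← hf]
    simp only [← ConcreteCategory.comp_apply, ← K.map_comp, ← op_comp, Category.assoc,
      IsIso.inv_hom_id, Category.comp_id]

end Existence

section Generation

variable {C : Type u} [Category.{v} C] [HasZeroObject C] [Preadditive C] [HasShift C ℤ]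
  [∀ n : ℤ, (shiftFunctor C n).Additive] [Pretriangulated C]

/-- A localizing subcategory: a thick triangulated subcategory closed under small coproducts. -/
class IsLocalizing [HasCoproducts.{v} C] (Q : ObjectProperty C) : Prop
    extends Q.IsTriangulated, Q.IsClosedUnderIsomorphisms, Q.IsStableUnderRetracts where
  prop_sigma ⦃α : Type v⦄ (f : α → C) (hf : ∀ a, Q (f a)) : Q (∐ f)

instance [HasCoproducts.{v} C] (Q : ObjectProperty C) [Q.IsStableUnderShift ℤ] :
    IsLocalizing Q.leftOrthogonal where
  of_retract r hY Z f hZ := by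
    rw [← Category.id_comp f, ← r.retract, Category.assoc, hY (r.r ≫ f) hZ, comp_zero]
  prop_sigma α f hf Z g hZ := Sigma.hom_ext _ _ fun a => (hf a _ hZ).trans comp_zero.symm

lemma isDetecting_of_rightOrthogonal_le_isZero {P : ObjectProperty C} [P.IsStableUnderShift ℤ]
    (hP : P.rightOrthogonal ≤ IsZero) : P.IsDetecting := by
  intro X Y f hf
  obtain ⟨Z, g, δ, hT⟩ := distinguished_cocone_triangle f
  refine (Triangle.isZero₃_iff_isIso₁ _ hT).1 (hP Z fun T φ hPT => ?_)
  have hf₀ (ψ : T⟦(-1 : ℤ)⟧ ⟶ X) (hψ : ψ ≫ f = 0) : ψ = 0 :=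
    (hf _ (P.le_shift (-1) T hPT) 0).unique hψ zero_comp
  obtain ⟨ψ, rfl⟩ : ∃ ψ : T ⟶ Y, ψ ≫ g = φ := exists_comp_mor₂_eq hT hf₀ φ
  obtain ⟨ψ, rfl, -⟩ := hf T hPT ψ
  rw [Category.assoc, show f ≫ g = 0 from comp_distTriang_mor_zero₁₂ _ hT, comp_zero]

lemma isDetecting_of_forall_isLocalizing [HasCoproducts.{v} C] {P : ObjectProperty C}
    [P.IsStableUnderShift ℤ] (hP : ∀ (Q : ObjectProperty C) [IsLocalizing Q], P ≤ Q → ∀ X, Q X) :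
    P.IsDetecting := by
  refine isDetecting_of_rightOrthogonal_le_isZero fun Z hZ => ?_
  have hZ' : P.rightOrthogonal.leftOrthogonal Z :=
    hP P.rightOrthogonal.leftOrthogonal (fun T hT Y f hY => hY f hT) Z
  exact (IsZero.iff_id_eq_zero Z).2 (hZ' (𝟙 Z) hZ)

end Generation

end BrownRepresentability

open BrownRepresentability ZeroObject in
theorem stmt17_general (C : Type u) [Category.{v} C] [HasZeroObject C] [Preadditive C]
    [HasShift C ℤ] [∀ n : ℤ, (shiftFunctor C n).Additive] [Pretriangulated C]
    [HasCoproducts.{v} C] (P : ObjectProperty C) [ObjectProperty.EssentiallySmall.{v} P]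
    (hP : P ≤ IsCompactObj C) (hdet : P.IsDetecting) (K : Cᵒᵖ ⥤ AddCommGrpCat.{v}) [K.Additive]
    [∀ α : Type v, PreservesLimitsOfShape (Discrete α) K] (hK : IsCohomological K) :
    ∃ X : C, Nonempty (K ≅ preadditiveYoneda.obj X) := by
  obtain ⟨L, -, l, -, hl⟩ := hK.exists_isUniversal_extension P hP (0 : K.obj (op (0 : C)))
  exact ⟨L, (hl.top hP hdet hK).nonempty_iso⟩

/-- Brown representability: if `𝒯` is a compactly generated triangulated category with small
coproducts and `K : 𝒯ᵒᵖ ⥤ Ab` is a cohomology theory (additive, sends coproducts in `𝒯` to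
products of abelian groups, and distinguished triangles to exact sequences), then `K` is
representable. -/
theorem stmt17 (C : Type u) [Category.{v} C] [HasZeroObject C] [Preadditive C]
    [HasShift C ℤ] [∀ n : ℤ, (CategoryTheory.shiftFunctor C n).Additive]
    [Pretriangulated C] [HasCoproducts.{v} C]
    -- the subcategory of compact objects is essentially small ...
    (hsmall : EssentiallySmall.{v} (ObjectProperty.FullSubcategory (IsCompactObj C)))
    -- ... and the only localising subcategory containing all compact objects is `𝒯` itself
    (hgen : ∀ (P : C → Prop),
      (∀ Z : C, IsZero Z → P Z) →
      (∀ ⦃X Y : C⦄, (X ≅ Y) → P X → P Y) →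
      (∀ (X : C) (n : ℤ), P X → P (X⟦n⟧)) →
      (∀ (T : Triangle C), T ∈ (distTriang C) → P T.obj₁ → P T.obj₃ → P T.obj₂) →
      (∀ ⦃X Y : C⦄ (i : X ⟶ Y) (r : Y ⟶ X), i ≫ r = 𝟙 X → P Y → P X) →
      (∀ ⦃α : Type v⦄ (f : α → C), (∀ a, P (f a)) → P (∐ f)) →
      (∀ T : C, IsCompactObj C T → P T) → ∀ X, P X)
    (K : Cᵒᵖ ⥤ AddCommGrpCat.{v}) [K.Additive]
    -- `K` sends small coproducts in `𝒯` to products of abelian groups ...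
    [∀ α : Type v, PreservesLimitsOfShape (Discrete α) K]
    -- ... and distinguished triangles to exact sequences
    (hexact : ∀ (T : Triangle C), T ∈ (distTriang C) →
      Function.Exact (K.map T.mor₂.op) (K.map T.mor₁.op)) :
    ∃ X : C, Nonempty (K ≅ preadditiveYoneda.obj X) := by
  have : ObjectProperty.EssentiallySmall.{v} (IsCompactObj C) :=
    (ObjectProperty.exists_equivalence_iff _).1 hsmall.equiv_smallCategory
  exact stmt17_general C (IsCompactObj C) le_rfl
    (BrownRepresentability.isDetecting_of_forall_isLocalizing fun Q _ =>
      hgen Q (fun _ => Q.prop_of_isZero) (fun _ _ => Q.prop_of_iso) (fun X n => Q.le_shift n X)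
        Q.ext_of_isTriangulatedClosed₂ (fun _ _ i r h => Q.prop_of_retract ⟨i, r, h⟩)
        BrownRepresentability.IsLocalizing.prop_sigma) K hexact
end

section
/- Let 𝒯 be a compactly generated triangulated category with small coproducts, let K : 𝒯 → Ab be a homology theory, and let 𝒰 = ker(K_*) = {X : K(Σ^n X) = 0 for all n ∈ ℤ}. Then for every object X of 𝒯 there exists a distinguished triangle CX → X → LX → Σ CX with CX ∈ 𝒰 and LX ∈ 𝒰^⊥ (i.e. Hom(U, LX) = 0 for all U ∈ 𝒰); moreover CX → X is a terminal object of the comma category 𝒰/X and X → LX is an initial object of the comma category X/𝒰^⊥. (Bousfield localisation with respect to K exists.) -/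
open CategoryTheory Limits Pretriangulated Opposite

universe v u

/-- `X` is `K`-acyclic: `K(Σⁿ X) = 0` for all `n : ℤ`; these objects form
`𝒰 = ker K_*`. -/
def KAcyclic (C : Type u) [Category.{v} C] [HasShift C ℤ]
    (K : C ⥤ AddCommGrpCat.{v}) (X : C) : Prop :=
  ∀ n : ℤ, IsZero (K.obj (X⟦n⟧))

/-!
The localisation exists because `ker K_*` is perfectly generated by a *set* of objects. Let `J` be
an infinite set larger than all the groups `K(A)` with `A` compact, and call `J`-small the objects
built from compact ones by extensions and coproducts indexed by subsets of `J`. They form an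
essentially small class, and `K` takes values of cardinality at most `#J` on them.

A morphism `S ⟶ U` from a `J`-small object to an acyclic one factors through a `J`-small acyclic
object: `K(U)` is a filtered colimit of the groups `K(A)` with `A` compact over `U`, so the fibre
of `S ⟶ U` is hit by few enough compact objects to kill the image of `K(S)` in a `J`-small stage
`S ⟶ S' ⟶ U`; iterate and take the homotopy colimit. Hence the class of `J`-small acyclic
objects is perfect relative to `ker K_*`, and an acyclic object orthogonal to it is zero, because
the compact objects do not see it.

Perfectness gives, as in Brown representability for perfectly generated categories, an acyclic
`CX ⟶ X` through which morphisms from `J`-small acyclic objects factor uniquely: it is the homotopy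
colimit of a tower in which each stage kills the morphisms that vanish in `X`. The cone `LX` is then
orthogonal to the `J`-small acyclic objects, and therefore to all acyclic ones.
-/

namespace BousfieldLocalization

section Coproducts

variable {C : Type u} [Category.{v} C]

lemma mem_of_map_ι_mem (H : C ⥤ AddCommGrpCat.{v}) {α : Type*} (X : α → C) [HasCoproduct X]
    [PreservesColimitsOfShape (Discrete α) H] (N : AddSubgroup (H.obj (∐ X)))
    (hN : ∀ i (x : H.obj (X i)), H.map (Sigma.ι X i) x ∈ N) (x : H.obj (∐ X)) : x ∈ N := by
  have quotient_eq_zero : AddCommGrpCat.ofHom (QuotientAddGroup.mk' N) = 0 := by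
    refine (isColimitOfPreserves H (colimit.isColimit (Discrete.functor X))).hom_ext ?_
    rintro ⟨i⟩
    ext x
    simpa using! hN i x
  simpa using! ConcreteCategory.congr_hom quotient_eq_zero x

instance [HasCoproducts.{v} C] : HasCoproductsOfShape ℕ C :=
  hasColimitsOfShape_of_equivalence (Discrete.equivalence Equiv.ulift.{v})

lemma prop_sigma_nat (P : ObjectProperty C) [HasCoproducts.{v} C]
    [P.IsClosedUnderColimitsOfShape (Discrete (ULift.{v} ℕ))] (X : ℕ → C) (hX : ∀ n, P (X n)) :
    P (∐ X) := by
  have := ObjectProperty.IsClosedUnderColimitsOfShape.of_equivalence (P := P)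
    (Discrete.equivalence Equiv.ulift.{v, 0} : Discrete (ULift.{v} ℕ) ≌ Discrete ℕ)
  exact P.prop_colimit _ fun n => hX n.as

lemma prop_sigma (P : ObjectProperty C) {α : Type*} [P.IsClosedUnderColimitsOfShape (Discrete α)]
    (X : α → C) [HasCoproduct X] (hX : ∀ i, P (X i)) : P (∐ X) :=
  P.prop_colimit _ fun i => hX i.as

lemma isClosedUnderColimitsOfShape_discrete (P : ObjectProperty C) [P.IsClosedUnderIsomorphisms]
    {α : Type*} [HasCoproductsOfShape α C] (h : ∀ X : α → C, (∀ i, P (X i)) → P (∐ X)) :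
    P.IsClosedUnderColimitsOfShape (Discrete α) :=
  .mk' <| by
    rintro _ ⟨F, hF⟩
    exact P.prop_of_iso (HasColimit.isoOfNatIso Discrete.natIsoFunctor.symm) (h _ fun i => hF ⟨i⟩)

instance (P Q : ObjectProperty C) [P.IsStableUnderRetracts] [Q.IsStableUnderRetracts] :
    (P ⊓ Q).IsStableUnderRetracts where
  of_retract r h := ⟨P.prop_of_retract r h.1, Q.prop_of_retract r h.2⟩

instance (P Q : ObjectProperty C) {J : Type*} [Category* J] [P.IsClosedUnderColimitsOfShape J]
    [Q.IsClosedUnderColimitsOfShape J] : (P ⊓ Q).IsClosedUnderColimitsOfShape J where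
  colimitsOfShape_le := le_inf
    ((ObjectProperty.colimitsOfShape_monotone J inf_le_left).trans (P.colimitsOfShape_le J))
    ((ObjectProperty.colimitsOfShape_monotone J inf_le_right).trans (Q.colimitsOfShape_le J))

instance [HasZeroMorphisms C] (P : ObjectProperty C) : P.leftOrthogonal.IsStableUnderRetracts where
  of_retract r hY Z f hZ := by
    rw [← Category.id_comp f, ← r.retract, Category.assoc, hY (r.r ≫ f) hZ, comp_zero]

instance [HasZeroMorphisms C] (P : ObjectProperty C) {α : Type*} [HasCoproductsOfShape α C] :
    P.leftOrthogonal.IsClosedUnderColimitsOfShape (Discrete α) :=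
  isClosedUnderColimitsOfShape_discrete _ fun _ hX _ _ hZ =>
    Sigma.hom_ext _ _ fun i => (hX i _ hZ).trans comp_zero.symm

end Coproducts

section Distinguished

variable {C : Type u} [Category.{v} C] [HasZeroObject C] [Preadditive C]
  [HasShift C ℤ] [∀ n : ℤ, (shiftFunctor C n).Additive] [Pretriangulated C]

lemma prop_biprod (P : ObjectProperty C) [P.IsTriangulatedClosed₂] [P.IsClosedUnderIsomorphisms]
    {A B : C} (hA : P A) (hB : P B) : P (A ⊞ B) :=
  P.ext_of_isTriangulatedClosed₂ _ (binaryBiproductTriangle_distinguished A B) hA hB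

instance : (⊤ : ObjectProperty C).IsTriangulated where
  exists_zero := ⟨_, isZero_zero C, trivial⟩
  isStableUnderShiftBy _ := ⟨fun _ _ => trivial⟩
  ext₂' _ _ _ _ := ObjectProperty.le_isoClosure _ _ trivial

variable {X Y Z : C} {f : X ⟶ Y} {g : Y ⟶ Z} {h : Z ⟶ X⟦(1 : ℤ)⟧}
  (hT : Triangle.mk f g h ∈ distTriang C)

include hT

lemma comp_eq_zero_of_distTriang : f ≫ g = 0 := comp_distTriang_mor_zero₁₂ _ hT

lemma exists_lift_of_distTriang {W : C} (k : W ⟶ Y) (hk : k ≫ g = 0) : ∃ l, l ≫ f = k :=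
  let ⟨l, hl⟩ := Triangle.coyoneda_exact₂ _ hT k hk
  ⟨l, hl.symm⟩

lemma comp_shift_map_eq_zero_of_distTriang : h ≫ f⟦(1 : ℤ)⟧' = 0 := comp_distTriang_mor_zero₃₁ _ hT

lemma exists_lift_of_distTriang_of_comp_mor₃ {W : C} (k : W ⟶ Z) (hk : k ≫ h = 0) :
    ∃ l, l ≫ g = k :=
  let ⟨l, hl⟩ := Triangle.coyoneda_exact₃ _ hT k hk
  ⟨l, hl.symm⟩

lemma exists_desc_of_distTriang {W : C} (k : Y ⟶ W) (hk : f ≫ k = 0) : ∃ l, g ≫ l = k :=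
  let ⟨l, hl⟩ := Triangle.yoneda_exact₂ _ hT k hk
  ⟨l, hl.symm⟩

lemma exists_map_eq_of_distTriang (H : C ⥤ AddCommGrpCat.{v}) [H.IsHomological] {y : H.obj Y}
    (hy : H.map g y = 0) : ∃ x, H.map f x = y :=
  (ShortComplex.ab_exact_iff _).1 (H.map_distinguished_exact _ hT) y hy

end Distinguished

section Homological

variable {C : Type u} [Category.{v} C] [HasZeroObject C] [Preadditive C]
    [HasShift C ℤ] [∀ n : ℤ, (shiftFunctor C n).Additive] [Pretriangulated C]

lemma isHomological_of_forall_exact (H : C ⥤ AddCommGrpCat.{v}) [H.PreservesZeroMorphisms]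
    (hH : ∀ T : Triangle C, T ∈ distTriang C → Function.Exact (H.map T.mor₁) (H.map T.mor₂)) :
    H.IsHomological where
  exact T hT := (ShortComplex.ab_exact_iff_function_exact _).2 (hH T hT)

section

variable {A : Type*} [Category* A] [Abelian A]

instance isHomological_shiftFunctor_comp (H : C ⥤ A) [H.IsHomological] (n : ℤ) :
    (shiftFunctor C n ⋙ H).IsHomological :=
  letI := Functor.ShiftSequence.tautological H ℤ
  { exact T hT := H.homologySequence_exact₂ T hT n }

end

instance (H : C ⥤ AddCommGrpCat.{v}) {α : Type v} [HasCoproductsOfShape α C]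
    [PreservesColimitsOfShape (Discrete α) H] :
    H.homologicalKernel.IsClosedUnderColimitsOfShape (Discrete α) :=
  isClosedUnderColimitsOfShape_discrete _ fun X hX n => by
    rw [IsZero.iff_id_eq_zero]
    ext x
    refine mem_of_map_ι_mem (shiftFunctor C n ⋙ H) X ⊥ (fun i y => ?_) x
    rw [(hX i n).eq_zero_of_src ((shiftFunctor C n ⋙ H).map (Sigma.ι X i))]
    simp

end Homological

section Shifts

open ZeroObject

variable {C : Type u} [Category.{v} C] [HasShift C ℤ] {P : ObjectProperty C}

/-- The objects all of whose shifts satisfy `P`: the largest class of objects contained in `P`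
which is stable under shifts. -/
def allShifts (P : ObjectProperty C) : ObjectProperty C := fun X => ∀ n : ℤ, P (X⟦n⟧)

lemma le_allShifts {Q : ObjectProperty C} [Q.IsStableUnderShift ℤ] (h : Q ≤ P) :
    Q ≤ allShifts P := fun X hX n =>
  h _ (Q.le_shift n X hX)

instance [P.IsStableUnderRetracts] : (allShifts P).IsStableUnderRetracts where
  of_retract r hY n := P.prop_of_retract (r.map (shiftFunctor C n)) (hY n)

variable [P.IsClosedUnderIsomorphisms]

lemma allShifts_le : allShifts P ≤ P := fun X hX =>
  P.prop_of_iso ((shiftFunctorZero C ℤ).app X) (hX 0)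

instance : (allShifts P).IsClosedUnderIsomorphisms where
  of_iso e hX n := P.prop_of_iso ((shiftFunctor C n).mapIso e) (hX n)

instance : (allShifts P).IsStableUnderShift ℤ where
  isStableUnderShiftBy n :=
    ⟨fun X hX m => P.prop_of_iso ((shiftFunctorAdd C n m).app X) (hX (n + m))⟩

instance {α : Type v} [HasCoproductsOfShape α C] [P.IsClosedUnderColimitsOfShape (Discrete α)] :
    (allShifts P).IsClosedUnderColimitsOfShape (Discrete α) :=
  isClosedUnderColimitsOfShape_discrete _ fun X hX n =>
    P.prop_of_iso (PreservesCoproduct.iso (shiftFunctor C n) X).symm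
      (prop_sigma P _ fun i => hX i n)

lemma isTriangulated_allShifts [HasZeroObject C] [Preadditive C]
    [∀ n : ℤ, (shiftFunctor C n).Additive] [Pretriangulated C] (zero : P 0)
    (h : ∀ T ∈ distTriang C, allShifts P T.obj₁ → allShifts P T.obj₃ → P T.obj₂) :
    (allShifts P).IsTriangulated where
  exists_zero := ⟨0, isZero_zero C, fun n =>
    P.prop_of_iso (shiftFunctor C n).mapZeroObject.symm zero⟩
  toIsTriangulatedClosed₂ := .mk' fun T hT h₁ h₃ n =>
    h _ (T.shift_distinguished hT n) ((allShifts P).le_shift n _ h₁)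
      ((allShifts P).le_shift n _ h₃)

end Shifts

section Compact

open Classical in
/-- The endomorphism of `∐ X` which kills the summands indexed by `F` and is the identity on the
other ones; a morphism into `∐ X` factors through the subcoproduct on `F` if and only if it is
killed by `eraseSummands X F`. -/
noncomputable def eraseSummands {C : Type u} [Category.{v} C] [HasZeroMorphisms C] {α : Type*}
    (X : α → C) [HasCoproduct X] (F : Finset α) : ∐ X ⟶ ∐ X :=
  Sigma.desc fun i => if i ∈ F then 0 else Sigma.ι X i

variable {C : Type u} [Category.{v} C] [Preadditive C]

section

variable {α : Type*} {X : α → C} [HasCoproduct X]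

lemma ι_eraseSummands_of_mem {F : Finset α} {i : α} (hi : i ∈ F) :
    Sigma.ι X i ≫ eraseSummands X F = 0 := by
  simp [eraseSummands, hi]

lemma ι_eraseSummands_of_notMem {F : Finset α} {i : α} (hi : i ∉ F) :
    Sigma.ι X i ≫ eraseSummands X F = Sigma.ι X i := by
  simp [eraseSummands, hi]

lemma eraseSummands_comp_of_subset {F G : Finset α} (h : F ⊆ G) :
    eraseSummands X F ≫ eraseSummands X G = eraseSummands X G := by
  ext i
  by_cases hi : i ∈ F
  · rw [← Category.assoc, ι_eraseSummands_of_mem hi, ι_eraseSummands_of_mem (h hi), zero_comp]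
  · rw [← Category.assoc, ι_eraseSummands_of_notMem hi]

lemma comp_eraseSummands_eq_zero_of_subset {A : C} {f : A ⟶ ∐ X} {F G : Finset α}
    (hf : f ≫ eraseSummands X F = 0) (h : F ⊆ G) : f ≫ eraseSummands X G = 0 := by
  rw [← eraseSummands_comp_of_subset h, ← Category.assoc, hf, zero_comp]

variable [DecidableEq α]

lemma eraseSummands_add_sum (F : Finset α) :
    eraseSummands X F + ∑ i ∈ F, Sigma.π X i ≫ Sigma.ι X i = 𝟙 (∐ X) := by
  ext j
  have hj (i : α) (hi : i ≠ j) : Sigma.ι X j ≫ Sigma.π X i ≫ Sigma.ι X i = 0 := by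
    rw [Sigma.ι_π_of_ne_assoc _ hi.symm, zero_comp]
  rw [Preadditive.comp_add, Preadditive.comp_sum, Category.comp_id]
  by_cases h : j ∈ F
  · rw [ι_eraseSummands_of_mem h, Finset.sum_eq_single_of_mem j h fun i _ => hj i]
    simp
  · rw [ι_eraseSummands_of_notMem h,
      Finset.sum_eq_zero fun i hi => hj i (ne_of_mem_of_not_mem hi h), add_zero]

lemma eq_sum_of_comp_eraseSummands_eq_zero {A : C} {f : A ⟶ ∐ X} {F : Finset α}
    (hf : f ≫ eraseSummands X F = 0) : f = ∑ i ∈ F, (f ≫ Sigma.π X i) ≫ Sigma.ι X i := by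
  conv_lhs => rw [← Category.comp_id f, ← eraseSummands_add_sum F]
  simp [hf, Preadditive.comp_sum]

lemma comp_π_eq_zero_of_comp_eraseSummands_eq_zero {A : C} {f : A ⟶ ∐ X} {F : Finset α}
    (hf : f ≫ eraseSummands X F = 0) {i : α} (hi : i ∉ F) : f ≫ Sigma.π X i = 0 := by
  rw [eq_sum_of_comp_eraseSummands_eq_zero hf, Preadditive.sum_comp]
  refine Finset.sum_eq_zero fun j hj => ?_
  rw [Category.assoc, Sigma.ι_π_of_ne _ (ne_of_mem_of_not_mem hj hi), comp_zero]

end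

lemma exists_comp_eraseSummands_eq_zero {A : C} {α : Type*}
    [PreservesColimitsOfShape (Discrete α) (preadditiveCoyoneda.obj (op A))] {X : α → C}
    [HasCoproduct X] (f : A ⟶ ∐ X) : ∃ F : Finset α, f ≫ eraseSummands X F = 0 := by
  classical
  let N : AddSubgroup (A ⟶ ∐ X) :=
    { carrier := {f | ∃ F : Finset α, f ≫ eraseSummands X F = 0}
      zero_mem' := ⟨∅, zero_comp⟩
      neg_mem' := by
        rintro f ⟨F, hF⟩
        exact ⟨F, by rw [Preadditive.neg_comp, hF, neg_zero]⟩
      add_mem' := by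
        rintro f g ⟨F, hF⟩ ⟨G, hG⟩
        refine ⟨F ∪ G, ?_⟩
        rw [Preadditive.add_comp, add_eq_zero_iff_eq_neg,
          comp_eraseSummands_eq_zero_of_subset hF Finset.subset_union_left,
          comp_eraseSummands_eq_zero_of_subset hG Finset.subset_union_right, neg_zero] }
  refine mem_of_map_ι_mem (preadditiveCoyoneda.obj (op A)) X N (fun i x => ⟨{i}, ?_⟩) f
  exact (Category.assoc (show A ⟶ X i from x) _ _).trans <| by
    rw [ι_eraseSummands_of_mem (Finset.mem_singleton_self i), comp_zero]

lemma exists_addMonoidHom_comp_ι_eq {A : C} {α : Type*} {X : α → C} [HasCoproduct X]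
    (hA : ∀ f : A ⟶ ∐ X, ∃ F : Finset α, f ≫ eraseSummands X F = 0) {G : Type*} [AddCommGroup G]
    (s : ∀ i, (A ⟶ X i) →+ G) : ∃ φ : (A ⟶ ∐ X) →+ G, ∀ i x, φ (x ≫ Sigma.ι X i) = s i x := by
  classical
  have finite_support (f : A ⟶ ∐ X) : (Function.support fun i => s i (f ≫ Sigma.π X i)).Finite := by
    obtain ⟨F, hF⟩ := hA f
    refine F.finite_toSet.subset fun i hi => by_contra fun hiF => hi ?_
    change s i (f ≫ Sigma.π X i) = 0
    rw [comp_π_eq_zero_of_comp_eraseSummands_eq_zero hF hiF, map_zero]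
  refine ⟨⟨⟨fun f => ∑ᶠ i, s i (f ≫ Sigma.π X i), ?_⟩, fun f g => ?_⟩, fun i x => ?_⟩
  · simp
  · simp only [Preadditive.add_comp, map_add]
    exact finsum_add_distrib (finite_support f) (finite_support g)
  · refine (finsum_eq_single _ i fun j hj => ?_).trans ?_
    · rw [Category.assoc, Sigma.ι_π_of_ne _ hj.symm, comp_zero, map_zero]
    · rw [Category.assoc, Sigma.ι_π_eq_id, Category.comp_id]

lemma isCompactObj_of_forall_exists [HasCoproducts.{v} C] {A : C}
    (hA : ∀ ⦃α : Type v⦄ (X : α → C) (f : A ⟶ ∐ X), ∃ F : Finset α, f ≫ eraseSummands X F = 0) :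
    IsCompactObj C A := by
  classical
  refine fun α => ⟨?_⟩
  suffices ∀ X : α → C, PreservesColimit (Discrete.functor X) (preadditiveCoyoneda.obj (op A)) from
    preservesColimitsOfShape_of_discrete _
  intro X
  choose φ hφ using fun s : Cofan fun i => (preadditiveCoyoneda.obj (op A)).obj (X i) =>
    exists_addMonoidHom_comp_ι_eq (hA X) (G := s.pt) fun i => (s.inj i).hom
  refine preservesColimit_of_preserves_colimit_cocone (coproductIsCoproduct X)
    ((isColimitMapCoconeCofanMkEquiv _ _ _).symm (Cofan.IsColimit.mk _
      (fun s => AddCommGrpCat.ofHom (φ s)) (fun s i => ?_) (fun s m hm => ?_)))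
  · ext x
    exact hφ s i x
  · ext (f : A ⟶ ∐ X)
    obtain ⟨F, hF⟩ := hA X f
    rw [eq_sum_of_comp_eraseSummands_eq_zero hF]
    refine (map_sum m.hom _ F).trans (Eq.trans ?_ (map_sum (φ s) _ F).symm)
    refine Finset.sum_congr rfl fun i _ => ?_
    have hfi := ConcreteCategory.congr_hom (hm i) (show A ⟶ X i from f ≫ Sigma.π X i)
    exact hfi.trans (hφ s i _).symm

variable (C) in
/-- The compact objects, as an `ObjectProperty`. -/
abbrev compacts : ObjectProperty C := IsCompactObj C

lemma prop_compacts_obj_of_adjunction {D : Type*} [Category.{v} D] [Preadditive D] {F : C ⥤ D}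
    {G : D ⥤ C} (adj : F ⊣ G) [F.Additive] [∀ α : Type v, PreservesColimitsOfShape (Discrete α) G]
    {A : C} (hA : compacts C A) : compacts D (F.obj A) := fun α => by
  obtain ⟨_⟩ := hA α
  have e : G ⋙ preadditiveCoyoneda.obj (op A) ≅ preadditiveCoyoneda.obj (op (F.obj A)) :=
    NatIso.ofComponents (fun Y => (AddEquiv.toAddCommGrpIso (adj.homAddEquiv A Y)).symm)
      fun {Y Z} f => by
        ext g
        exact adj.homEquiv_naturality_right_symm g f
  exact ⟨preservesColimitsOfShape_of_natIso e⟩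

instance [HasShift C ℤ] [∀ n : ℤ, (shiftFunctor C n).Additive] :
    (compacts C).IsStableUnderShift ℤ where
  isStableUnderShiftBy n :=
    ⟨fun _ hA =>
      have : (shiftEquiv C n).functor.Additive := inferInstanceAs (shiftFunctor C n).Additive
      prop_compacts_obj_of_adjunction (shiftEquiv C n).toAdjunction hA⟩

variable [HasCoproducts.{v} C]

lemma compacts_iff {A : C} : compacts C A ↔
    ∀ ⦃α : Type v⦄ (X : α → C) (f : A ⟶ ∐ X), ∃ F : Finset α, f ≫ eraseSummands X F = 0 :=
  ⟨fun hA α X f => by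
    obtain ⟨_⟩ := hA α
    exact exists_comp_eraseSummands_eq_zero f, isCompactObj_of_forall_exists⟩

instance : (compacts C).IsClosedUnderIsomorphisms where
  of_iso {A B} e hA := compacts_iff.2 fun α X f => by
    obtain ⟨F, hF⟩ := compacts_iff.1 hA X (e.hom ≫ f)
    exact ⟨F, by rwa [Category.assoc, Preadditive.IsIso.comp_left_eq_zero] at hF⟩

instance [HasZeroObject C] [HasShift C ℤ] [∀ n : ℤ, (shiftFunctor C n).Additive]
    [Pretriangulated C] : (compacts C).IsTriangulated where
  exists_zero := ⟨_, isZero_zero C, compacts_iff.2 fun α X f =>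
    ⟨∅, by rw [(isZero_zero C).eq_zero_of_src f, zero_comp]⟩⟩
  toIsTriangulatedClosed₂ := .mk' fun T hT h₁ h₃ => compacts_iff.2 fun α X f => by
    classical
    obtain ⟨F, hF⟩ := compacts_iff.1 h₁ X (T.mor₁ ≫ f)
    obtain ⟨g, hg⟩ := T.yoneda_exact₂ hT (f ≫ eraseSummands X F) (by simpa using hF)
    obtain ⟨G, hG⟩ := compacts_iff.1 h₃ X g
    refine ⟨F ∪ G, ?_⟩
    rw [← eraseSummands_comp_of_subset (Finset.subset_union_left (s₂ := G)), ← Category.assoc, hg,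
      Category.assoc, comp_eraseSummands_eq_zero_of_subset hG Finset.subset_union_right, comp_zero]

end Compact

section Perfect

variable {C : Type u} [Category.{v} C] {α : Type*} [HasCoproductsOfShape α C]
  {P Q : ObjectProperty C}

/-- A morphism `f : A ⟶ ∐ U` which factors through a coproduct of morphisms `Y i ⟶ U i` with
all `Y i` in `P`. -/
def FactorsThroughSigma (P : ObjectProperty C) {A : C} {U : α → C} (f : A ⟶ ∐ U) : Prop :=
  ∃ (Y : α → C) (a : ∀ i, Y i ⟶ U i) (b : A ⟶ ∐ Y), (∀ i, P (Y i)) ∧ b ≫ Limits.Sigma.map a = f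

variable (α P Q) in
/-- The objects `A` such that every morphism from `A` to an `α`-indexed coproduct of objects of
`Q` factors through a coproduct of morphisms with sources in `P`. This is Neeman's notion of
perfectness of the class `P`, relative to `Q`. -/
def perfect : ObjectProperty C :=
  fun A => ∀ (U : α → C), (∀ i, Q (U i)) → ∀ f : A ⟶ ∐ U, FactorsThroughSigma P f

lemma FactorsThroughSigma.precomp {A B : C} {U : α → C} {f : A ⟶ ∐ U}
    (hf : FactorsThroughSigma P f) (g : B ⟶ A) : FactorsThroughSigma P (g ≫ f) := by
  obtain ⟨Y, a, b, hY, rfl⟩ := hf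
  exact ⟨Y, a, g ≫ b, hY, Category.assoc _ _ _⟩

instance : (perfect α P Q).IsClosedUnderIsomorphisms where
  of_iso e hA U hU f := by
    simpa using (hA U hU (e.hom ≫ f)).precomp e.inv

instance {J : Type*} [HasCoproductsOfShape J C] [P.IsClosedUnderColimitsOfShape (Discrete J)] :
    (perfect α P Q).IsClosedUnderColimitsOfShape (Discrete J) :=
  isClosedUnderColimitsOfShape_discrete _ fun A hA U hU f => by
    choose Y a b hY hb using fun j => hA j U hU (Sigma.ι A j ≫ f)
    refine ⟨fun i => ∐ fun j => Y j i, fun i => Sigma.desc fun j => a j i,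
      Sigma.desc fun j => b j ≫ Limits.Sigma.map fun i => Sigma.ι (fun j => Y j i) j,
      fun i => prop_sigma P _ fun j => hY j i, ?_⟩
    ext j
    have sigma_map_comp : Limits.Sigma.map (fun i => Sigma.ι (fun j => Y j i) j) ≫
        Limits.Sigma.map (fun i => Sigma.desc fun j => a j i) = Limits.Sigma.map (a j) := by
      ext i
      simp
    rw [Sigma.ι_desc_assoc, Category.assoc, sigma_map_comp, hb]

section

variable [Preadditive C]

lemma sigmaMap_comp_eq_zero {X Y Z : α → C} {f : ∀ i, X i ⟶ Y i} {g : ∀ i, Y i ⟶ Z i}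
    (h : ∀ i, f i ≫ g i = 0) : Limits.Sigma.map f ≫ Limits.Sigma.map g = 0 := by
  ext i
  simp [reassoc_of% (h i)]

lemma compacts_le_perfect [Small.{v} α] (h : compacts C ≤ P) : compacts C ≤ perfect α P Q := by
  classical
  intro A hA U _ f
  obtain ⟨_⟩ := hA (Shrink.{v} α)
  have := preservesColimitsOfShape_of_equiv (Discrete.equivalence (equivShrink.{v} α).symm)
    (preadditiveCoyoneda.obj (op A))
  obtain ⟨F, hF⟩ := exists_comp_eraseSummands_eq_zero f
  refine ⟨fun _ => A, fun i => f ≫ Sigma.π U i, ∑ i ∈ F, Sigma.ι (fun _ => A) i,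
    fun _ => h A hA, ?_⟩
  refine Eq.trans ?_ (eq_sum_of_comp_eraseSummands_eq_zero hF).symm
  simp [Preadditive.sum_comp]

end

variable [HasZeroObject C] [Preadditive C] [HasShift C ℤ]
  [∀ n : ℤ, (shiftFunctor C n).Additive] [Pretriangulated C]

lemma FactorsThroughSigma.add [P.IsTriangulated] [P.IsClosedUnderIsomorphisms] {A : C} {U : α → C}
    {f g : A ⟶ ∐ U} (hf : FactorsThroughSigma P f) (hg : FactorsThroughSigma P g) :
    FactorsThroughSigma P (f + g) := by
  obtain ⟨Y, a, b, hY, rfl⟩ := hf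
  obtain ⟨Z, c, d, hZ, rfl⟩ := hg
  refine ⟨fun i => Y i ⊞ Z i, fun i => biprod.desc (a i) (c i),
    b ≫ Limits.Sigma.map (fun _ => biprod.inl) + d ≫ Limits.Sigma.map (fun _ => biprod.inr),
    fun i => prop_biprod P (hY i) (hZ i), ?_⟩
  simp [Preadditive.add_comp, Sigma.map_comp_map]

lemma exists_comp_sigmaMap_eq {F V U : α → C} {k : ∀ i, F i ⟶ V i} {φ : ∀ i, V i ⟶ U i}
    {d : ∀ i, U i ⟶ (F i)⟦(1 : ℤ)⟧} (hT : ∀ i, Triangle.mk (k i) (φ i) (d i) ∈ distTriang C)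
    {A : C} (g : A ⟶ ∐ V) (hg : g ≫ Limits.Sigma.map φ = 0) :
    ∃ h : A ⟶ ∐ F, h ≫ Limits.Sigma.map k = g := by
  obtain ⟨D, c, e, hD⟩ := distinguished_cocone_triangle (Limits.Sigma.map k)
  have exists_map_to_cone (i : α) : ∃ w : U i ⟶ D, φ i ≫ w = Sigma.ι V i ≫ c := by
    obtain ⟨w, hw, -⟩ := Pretriangulated.complete_distinguished_triangle_morphism _ _ (hT i) hD
      (Sigma.ι F i) (Sigma.ι V i) (Limits.Sigma.ι_map k i).symm
    exact ⟨w, hw⟩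
  choose w hw using exists_map_to_cone
  have hc : Limits.Sigma.map φ ≫ Sigma.desc w = c := by
    ext i
    simpa using hw i
  exact exists_lift_of_distTriang hD g (by rw [← hc, ← Category.assoc, hg, zero_comp])

variable [Q.IsTriangulated] [Q.IsClosedUnderIsomorphisms]

lemma exists_comp_sigmaMap_eq_of_comp_sigmaMap_eq_zero {A : C} (hA : perfect α P Q A) {V U : α → C}
    (hV : ∀ i, Q (V i)) (hU : ∀ i, Q (U i)) (φ : ∀ i, V i ⟶ U i) {g : A ⟶ ∐ V}
    (hg : g ≫ Limits.Sigma.map φ = 0) :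
    ∃ (Y : α → C) (t : ∀ i, Y i ⟶ V i) (b : A ⟶ ∐ Y),
      (∀ i, P (Y i)) ∧ b ≫ Limits.Sigma.map t = g ∧ ∀ i, t i ≫ φ i = 0 := by
  choose F k d hF using fun i => distinguished_cocone_triangle₁ (φ i)
  obtain ⟨h, rfl⟩ := exists_comp_sigmaMap_eq hF g hg
  obtain ⟨Y, a, b, hY, rfl⟩ := hA F
    (fun i => Q.ext_of_isTriangulatedClosed₁ _ (hF i) (hV i) (hU i)) h
  refine ⟨Y, fun i => a i ≫ k i, b, hY, by simp [Sigma.map_comp_map], fun i => ?_⟩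
  rw [Category.assoc, comp_eq_zero_of_distTriang (hF i), comp_zero]

lemma exists_fac_of_comp_sigmaMap_eq_zero [P.IsTriangulated] [P.IsClosedUnderIsomorphisms]
    (hPQ : P ≤ Q) {A : C} (hA : perfect α P Q A) {V U : α → C} (hV : ∀ i, P (V i))
    (hU : ∀ i, Q (U i)) (φ : ∀ i, V i ⟶ U i) {g : A ⟶ ∐ V} (hg : g ≫ Limits.Sigma.map φ = 0) :
    ∃ (W : α → C) (r : ∀ i, V i ⟶ W i) (s : ∀ i, W i ⟶ U i),
      (∀ i, P (W i)) ∧ g ≫ Limits.Sigma.map r = 0 ∧ ∀ i, r i ≫ s i = φ i := by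
  obtain ⟨Y, t, b, hY, rfl, ht⟩ := exists_comp_sigmaMap_eq_of_comp_sigmaMap_eq_zero hA
    (fun i => hPQ _ (hV i)) hU φ hg
  choose W r e hW using fun i => distinguished_cocone_triangle (t i)
  choose s hs using fun i => exists_desc_of_distTriang (hW i) (φ i) (ht i)
  refine ⟨W, r, s, fun i => P.ext_of_isTriangulatedClosed₃ _ (hW i) (hY i) (hV i), ?_, hs⟩
  rw [Category.assoc, sigmaMap_comp_eq_zero fun i => comp_eq_zero_of_distTriang (hW i), comp_zero]

variable [P.IsTriangulated] [P.IsClosedUnderIsomorphisms]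

lemma perfect_obj₃ (hPQ : P ≤ Q) (T : Triangle C) (hT : T ∈ distTriang C)
    (h₁ : perfect α P Q T.obj₁) (h₁' : perfect α P Q (T.obj₁⟦(1 : ℤ)⟧))
    (h₂ : perfect α P Q T.obj₂) : perfect α P Q T.obj₃ := by
  intro U hU f
  obtain ⟨Y, a, b, hY, hb⟩ := h₂ U hU (T.mor₂ ≫ f)
  obtain ⟨W, r, s, hW, hr, hs⟩ := exists_fac_of_comp_sigmaMap_eq_zero hPQ h₁ hY hU a
    (g := T.mor₁ ≫ b) (by
      rw [Category.assoc, hb, ← Category.assoc, comp_distTriang_mor_zero₁₂ _ hT, zero_comp])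
  obtain ⟨c, hc⟩ := T.yoneda_exact₂ hT (b ≫ Limits.Sigma.map r) (by
    rw [← Category.assoc, hr])
  obtain ⟨l, hl⟩ := T.yoneda_exact₃ hT (f - c ≫ Limits.Sigma.map s) (by
    rw [Preadditive.comp_sub, ← Category.assoc, ← hc, ← hb, Category.assoc, Sigma.map_comp_map]
    simp [hs])
  rw [← add_sub_cancel (c ≫ Limits.Sigma.map s) f, hl]
  exact FactorsThroughSigma.add ⟨W, s, c, hW, rfl⟩ ((h₁' U hU l).precomp T.mor₃)

lemma isTriangulated_allShifts_perfect (hPQ : P ≤ Q) :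
    (allShifts (perfect α P Q)).IsTriangulated := by
  refine isTriangulated_allShifts (fun U _ f => ?_) fun T hT h₁ h₃ => ?_
  · obtain ⟨Z, _, hPZ⟩ := P.exists_prop_of_containsZero
    exact ⟨fun _ => Z, fun _ => 0, 0, fun _ => hPZ, (isZero_zero C).eq_of_src _ _⟩
  · exact perfect_obj₃ hPQ _ (inv_rot_of_distTriang _ hT) (h₃ (-1))
      (allShifts_le _ ((allShifts (perfect α P Q)).le_shift 1 _
        ((allShifts (perfect α P Q)).le_shift (-1) _ h₃))) (allShifts_le _ h₁)

end Perfect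

section CellularClosure

instance essentiallySmall_colimitsOfShape {C : Type u} [Category.{v} C] (P : ObjectProperty C)
    [ObjectProperty.EssentiallySmall.{v} P] (K : Type v) [SmallCategory K] :
    ObjectProperty.EssentiallySmall.{v} (P.colimitsOfShape K) where
  exists_small_le' := by
    obtain ⟨P₀, _, -, hP⟩ := ObjectProperty.EssentiallySmall.exists_small_le.{v} P
    refine ⟨P₀.strictColimitsOfShape K, inferInstance, ?_⟩
    rw [ObjectProperty.isoClosure_strictColimitsOfShape, ← P₀.colimitsOfShape_isoClosure]
    exact ObjectProperty.colimitsOfShape_monotone K hP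

variable {C : Type u} [Category.{v} C] [HasZeroObject C] [Preadditive C] [HasShift C ℤ]
  [∀ n : ℤ, (shiftFunctor C n).Additive] [Pretriangulated C]

instance essentiallySmall_extensionProduct (P Q : ObjectProperty C)
    [ObjectProperty.EssentiallySmall.{v} P] [ObjectProperty.EssentiallySmall.{v} Q] :
    ObjectProperty.EssentiallySmall.{v} (P.extensionProduct Q) where
  exists_small_le' := by
    obtain ⟨P₀, _, -, hP⟩ := ObjectProperty.EssentiallySmall.exists_small_le.{v} P
    obtain ⟨Q₀, _, -, hQ⟩ := ObjectProperty.EssentiallySmall.exists_small_le.{v} Q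
    choose Y f g hT using fun x : Σ (X : Subtype P₀) (Z : Subtype Q₀), Z.1 ⟶ X.1⟦(1 : ℤ)⟧ =>
      distinguished_cocone_triangle₂ x.2.2
    refine ⟨.ofObj Y, inferInstance, fun A hA => ?_⟩
    have hA₀ : P₀.extensionProduct Q₀ A := by
      rw [← P₀.extensionProduct_isoClosure_left, ← ObjectProperty.extensionProduct_isoClosure_right]
      exact ObjectProperty.monotone_extensionProduct_left _ hP _
        (ObjectProperty.monotone_extensionProduct_right _ hQ _ hA)
    obtain ⟨X, Z, a, b, c, habc, hX, hZ⟩ := hA₀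
    let x : Σ (X : Subtype P₀) (Z : Subtype Q₀), Z.1 ⟶ X.1⟦(1 : ℤ)⟧ := ⟨⟨X, hX⟩, ⟨Z, hZ⟩, c⟩
    let e := isoTriangleOfIso₁₃ (Triangle.mk a b c) (Triangle.mk (f x) (g x) c) habc (hT x)
      (Iso.refl X) (Iso.refl Z) (by simp [Triangle.mk])
    exact ⟨Y x, .mk x, ⟨Triangle.π₂.mapIso e⟩⟩

/-- Shapes of the well-founded constructions which build an object out of basic objects by
extensions and by coproducts indexed by subsets of `J`. -/
inductive CellShape (J : Type v) : Type v
  | base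
  | coprod (s : Set J) (c : s → CellShape J)
  | ext (a b : CellShape J)

/-- The objects which are obtained from objects of `P` by a construction of a given shape. -/
def CellShape.objects (P : ObjectProperty C) {J : Type v} : CellShape J → ObjectProperty C
  | base => P
  | coprod s c => (⨆ j, (c j).objects P).colimitsOfShape (Discrete s)
  | ext a b => (a.objects P).extensionProduct (b.objects P)

/-- The closure of `P` under extensions and under coproducts indexed by subsets of `J`. -/
def cellularClosure (P : ObjectProperty C) (J : Type v) : ObjectProperty C :=
  ⨆ c : CellShape J, c.objects P

variable {P : ObjectProperty C} {J : Type v}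

instance [ObjectProperty.EssentiallySmall.{v} P] :
    ObjectProperty.EssentiallySmall.{v} (cellularClosure P J) := by
  have (c : CellShape J) : ObjectProperty.EssentiallySmall.{v} (c.objects P) := by
    induction c with
    | base => assumption
    | coprod s c hc => exact essentiallySmall_colimitsOfShape _ (Discrete s)
    | ext a b ha hb => exact essentiallySmall_extensionProduct _ _
  exact inferInstanceAs (ObjectProperty.EssentiallySmall.{v} (⨆ c : CellShape J, c.objects P))

variable (P J) in
lemma le_cellularClosure : P ≤ cellularClosure P J :=
  le_iSup (fun c : CellShape J => c.objects P) .base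

lemma cellularClosure_le {Q : ObjectProperty C} [Q.IsClosedUnderIsomorphisms]
    [Q.IsTriangulatedClosed₂] [∀ s : Set J, Q.IsClosedUnderColimitsOfShape (Discrete s)]
    (h : P ≤ Q) : cellularClosure P J ≤ Q := by
  refine iSup_le fun c => ?_
  induction c with
  | base => exact h
  | coprod s c hc =>
    exact (ObjectProperty.colimitsOfShape_monotone _ (iSup_le hc)).trans
      (Q.colimitsOfShape_le (Discrete s))
  | ext a b ha hb =>
    rintro X ⟨Y, Z, f, g, d, hT, hY, hZ⟩
    exact Q.ext_of_isTriangulatedClosed₂ _ hT (ha Y hY) (hb Z hZ)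

variable [P.IsClosedUnderIsomorphisms]

instance : (cellularClosure P J).IsClosedUnderIsomorphisms := by
  have (c : CellShape J) : (c.objects P).IsClosedUnderIsomorphisms := by
    cases c <;> simp only [CellShape.objects] <;> infer_instance
  exact inferInstanceAs (ObjectProperty.IsClosedUnderIsomorphisms (⨆ c : CellShape J, c.objects P))

instance : (cellularClosure P J).IsTriangulatedClosed₂ :=
  .mk' fun T hT h₁ h₃ => by
    simp only [cellularClosure, ObjectProperty.prop_iSup_iff] at h₁ h₃ ⊢
    obtain ⟨⟨a, ha⟩, ⟨b, hb⟩⟩ := h₁, h₃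
    exact ⟨.ext a b, _, _, T.mor₁, T.mor₂, T.mor₃, hT, ha, hb⟩

variable [HasCoproducts.{v} C]

instance (s : Set J) : (cellularClosure P J).IsClosedUnderColimitsOfShape (Discrete s) :=
  isClosedUnderColimitsOfShape_discrete _ fun X hX => by
    simp only [cellularClosure, ObjectProperty.prop_iSup_iff] at hX ⊢
    choose c hc using hX
    exact ⟨.coprod s c, ⟨{ ColimitPresentation.colimit (Discrete.functor X) with
      prop_diag_obj := fun j => le_iSup (fun j => (c j).objects P) j.as _ (hc j.as) }⟩⟩

open Cardinal in
lemma cellularClosure_isClosedUnderColimitsOfShape {α : Type v} (h : #α ≤ #J) :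
    (cellularClosure P J).IsClosedUnderColimitsOfShape (Discrete α) := by
  obtain ⟨e⟩ := h
  exact .of_equivalence (Discrete.equivalence (Equiv.ofInjective e e.injective).symm)

instance [P.IsStableUnderShift ℤ] : (cellularClosure P J).IsStableUnderShift ℤ where
  isStableUnderShiftBy n := ⟨fun X hX => by
    have : (allShifts (cellularClosure P J)).IsTriangulatedClosed₂ := .mk' fun T hT h₁ h₃ m =>
      (cellularClosure P J).ext_of_isTriangulatedClosed₂ _ (T.shift_distinguished hT m) (h₁ m)
        (h₃ m)
    exact cellularClosure_le (le_allShifts (le_cellularClosure P J)) X hX n⟩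

instance [P.ContainsZero] [P.IsStableUnderShift ℤ] : (cellularClosure P J).IsTriangulated where
  exists_zero := by
    obtain ⟨Z, hZ, hPZ⟩ := P.exists_prop_of_containsZero
    exact ⟨Z, hZ, le_cellularClosure P J Z hPZ⟩

end CellularClosure

section Cardinality

open Cardinal

lemma mk_le_mul_of_exact {A B D : Type v} [AddCommGroup B] [AddCommGroup D]
    (f : A → B) (g : B →+ D) (h : ∀ b, g b = 0 → ∃ a, f a = b) : #B ≤ #A * #D := by
  rw [mul_def]
  refine mk_le_of_surjective (f := fun x => f x.1 + Function.invFun g x.2) fun b => ?_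
  have invFun_spec : g (Function.invFun g (g b)) = g b := Function.invFun_eq ⟨b, rfl⟩
  obtain ⟨a, ha⟩ := h (b - Function.invFun g (g b)) (by rw [map_sub, invFun_spec, sub_self])
  exact ⟨(a, g b), by simp [ha]⟩

lemma mk_freeAbelianGroup_le {A : Type v} {κ : Cardinal.{v}} (hκ : ℵ₀ ≤ κ) (hA : #A ≤ κ) :
    #(FreeAbelianGroup A) ≤ κ := by
  cases isEmpty_or_nonempty A
  · exact (le_one_iff_subsingleton.2 inferInstance).trans (one_le_aleph0.trans hκ)
  · rw [mk_freeAbelianGroup]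
    exact max_le hA hκ

/-- The objects on which the values of `H` have cardinality at most `κ`. -/
def valuesCardLE {C : Type u} [Category.{v} C] (H : C ⥤ AddCommGrpCat.{v}) (κ : Cardinal.{v}) :
    ObjectProperty C :=
  fun X => #(H.obj X) ≤ κ

section

variable {C : Type u} [Category.{v} C] (H : C ⥤ AddCommGrpCat.{v}) {κ : Cardinal.{v}}

instance : (valuesCardLE H κ).IsClosedUnderIsomorphisms where
  of_iso e hX := (mk_congr ((forget _).mapIso (H.mapIso e)).toEquiv).ge.trans hX

lemma exists_le_valuesCardLE (P : ObjectProperty C) [ObjectProperty.EssentiallySmall.{v} P] :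
    ∃ κ : Cardinal.{v}, ℵ₀ ≤ κ ∧ P ≤ valuesCardLE H κ := by
  obtain ⟨P₀, _, -, hP⟩ := ObjectProperty.EssentiallySmall.exists_small_le.{v} P
  let value (x : Shrink.{v} (Subtype P₀)) : Cardinal.{v} := #(H.obj ((equivShrink _).symm x).1)
  refine ⟨max ℵ₀ (sum value), le_max_left _ _, hP.trans ?_⟩
  rw [ObjectProperty.isoClosure_le_iff]
  intro A hA
  have := (le_sum value (equivShrink _ ⟨A, hA⟩)).trans (le_max_right ℵ₀ _)
  rwa [show value (equivShrink _ ⟨A, hA⟩) = #(H.obj A) by simp [value]] at this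

lemma valuesCardLE_sigma (hκ : ℵ₀ ≤ κ) {α : Type v} (hα : #α ≤ κ) (X : α → C) [HasCoproduct X]
    [PreservesColimitsOfShape (Discrete α) H] (hX : ∀ i, valuesCardLE H κ (X i)) :
    valuesCardLE H κ (∐ X) := by
  let φ : FreeAbelianGroup (Σ i, H.obj (X i)) →+ H.obj (∐ X) :=
    FreeAbelianGroup.lift fun x => H.map (Sigma.ι X x.1) x.2
  have surjective_φ : Function.Surjective φ := fun x => by
    refine mem_of_map_ι_mem H X φ.range (fun i y => ⟨FreeAbelianGroup.of ⟨i, y⟩, ?_⟩) x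
    exact FreeAbelianGroup.lift_apply_of _ _
  have mk_sigma_le : #(Σ i, H.obj (X i)) ≤ κ := by
    rw [mk_sigma]
    refine (sum_le_sum _ (fun _ => κ) hX).trans ?_
    rw [sum_const']
    exact (mul_le_mul_left hα κ).trans (mul_eq_self hκ).le
  exact (mk_le_of_surjective surjective_φ).trans (mk_freeAbelianGroup_le hκ mk_sigma_le)

end

variable {C : Type u} [Category.{v} C] [HasZeroObject C] [Preadditive C] [HasShift C ℤ]
  [∀ n : ℤ, (shiftFunctor C n).Additive] [Pretriangulated C]
  (H : C ⥤ AddCommGrpCat.{v}) [H.IsHomological]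

lemma isTriangulatedClosed₂_valuesCardLE {κ : Cardinal.{v}} (hκ : ℵ₀ ≤ κ) :
    (valuesCardLE H κ).IsTriangulatedClosed₂ :=
  .mk' fun _ hT h₁ h₃ =>
    (mk_le_mul_of_exact _ (H.map _).hom fun _ => exists_map_eq_of_distTriang hT H).trans
      ((mul_le_mul' h₁ h₃).trans (mul_eq_self hκ).le)

lemma cellularClosure_le_valuesCardLE [HasCoproducts.{v} C]
    [∀ α : Type v, PreservesColimitsOfShape (Discrete α) H] {P : ObjectProperty C} {J : Type v}
    (hJ : ℵ₀ ≤ #J) (h : P ≤ valuesCardLE H #J) :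
    cellularClosure P J ≤ valuesCardLE H #J := by
  have := isTriangulatedClosed₂_valuesCardLE H hJ
  have (s : Set J) : (valuesCardLE H #J).IsClosedUnderColimitsOfShape (Discrete s) :=
    isClosedUnderColimitsOfShape_discrete _ fun X => valuesCardLE_sigma H hJ (mk_set_le s) X
  exact cellularClosure_le h

end Cardinality

section CellularPerfect

variable {C : Type u} [Category.{v} C] [HasZeroObject C] [Preadditive C] [HasShift C ℤ]
  [∀ n : ℤ, (shiftFunctor C n).Additive] [Pretriangulated C] [HasCoproducts.{v} C]

lemma cellularClosure_le_perfect {α : Type*} [HasCoproductsOfShape α C] {P Q : ObjectProperty C}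
    [P.IsTriangulated] [P.IsClosedUnderIsomorphisms] [Q.IsTriangulated]
    [Q.IsClosedUnderIsomorphisms] {J : Type v} (hQ : cellularClosure P J ≤ Q)
    (h : P ≤ perfect α (cellularClosure P J) Q) :
    cellularClosure P J ≤ perfect α (cellularClosure P J) Q := by
  have := isTriangulated_allShifts_perfect (α := α) hQ
  exact (cellularClosure_le (le_allShifts h)).trans allShifts_le

end CellularPerfect

section Support

variable {C : Type u} [Category.{v} C] (H : C ⥤ AddCommGrpCat.{v}) (P : ObjectProperty C)

/-- The element `x` of `H(X)` comes from an object of `P` mapping to `X`. -/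
def SupportedOn {X : C} (x : H.obj X) : Prop :=
  ∃ (A : C) (f : A ⟶ X) (z : H.obj A), P A ∧ H.map f z = x

/-- The morphism `f : A ⟶ X` factors through an object of `P` in which the element `x` of `H(A)`
vanishes. -/
def VanishesThrough {A X : C} (x : H.obj A) (f : A ⟶ X) : Prop :=
  ∃ (B : C) (a : A ⟶ B) (b : B ⟶ X), P B ∧ a ≫ b = f ∧ H.map a x = 0

/-- The objects `X` such that the map from `colim H(A)`, indexed by the objects `A` of `P` over
`X`, to `H(X)` is surjective. -/
def supported : ObjectProperty C := fun X => ∀ x : H.obj X, SupportedOn H P x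

/-- The objects `X` such that the map from `colim H(A)`, indexed by the objects `A` of `P` over
`X`, to `H(X)` is injective (when these objects form a filtered category). -/
def detected : ObjectProperty C := fun X =>
  ∀ ⦃A : C⦄, P A → ∀ (f : A ⟶ X) (x : H.obj A), H.map f x = 0 → VanishesThrough H P x f

variable {H P}

lemma SupportedOn.map {X Y : C} {x : H.obj X} (hx : SupportedOn H P x) (f : X ⟶ Y) :
    SupportedOn H P (H.map f x) := by
  obtain ⟨A, g, z, hA, rfl⟩ := hx
  exact ⟨A, g ≫ f, z, hA, H.map_comp_apply g f z⟩

lemma VanishesThrough.comp {A X Y : C} {x : H.obj A} {f : A ⟶ X} (hf : VanishesThrough H P x f)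
    (g : X ⟶ Y) : VanishesThrough H P x (f ≫ g) := by
  obtain ⟨B, a, b, hB, rfl, hx⟩ := hf
  exact ⟨B, a, b ≫ g, hB, (Category.assoc _ _ _).symm, hx⟩

instance : (supported H P).IsStableUnderRetracts where
  of_retract r hY x := by
    have := (hY (H.map r.i x)).map r.r
    rwa [← H.map_comp_apply, r.retract, H.map_id_apply] at this

instance : (detected H P).IsStableUnderRetracts where
  of_retract r hY A hA f x hx := by
    have := (hY hA (f ≫ r.i) x (by rw [H.map_comp_apply, hx, map_zero])).comp r.r
    rwa [Category.assoc, r.retract, Category.comp_id] at this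

lemma le_supported : P ≤ supported H P :=
  fun X hX x => ⟨X, 𝟙 X, x, hX, H.map_id_apply X x⟩

lemma le_detected : P ≤ detected H P :=
  fun X hX _ _ f _ hx => ⟨X, f, 𝟙 X, hX, Category.comp_id _, hx⟩

variable [HasZeroObject C] [Preadditive C] [HasShift C ℤ] [∀ n : ℤ, (shiftFunctor C n).Additive]
  [Pretriangulated C] [P.IsTriangulated] [P.IsClosedUnderIsomorphisms]

lemma SupportedOn.add {X : C} {x y : H.obj X} (hx : SupportedOn H P x) (hy : SupportedOn H P y) :
    SupportedOn H P (x + y) := by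
  obtain ⟨A, f, z, hA, rfl⟩ := hx
  obtain ⟨B, g, w, hB, rfl⟩ := hy
  refine ⟨A ⊞ B, biprod.desc f g, H.map biprod.inl z + H.map biprod.inr w, prop_biprod P hA hB, ?_⟩
  rw [map_add, ← H.map_comp_apply, ← H.map_comp_apply, biprod.inl_desc, biprod.inr_desc]

instance {α : Type*} [HasCoproductsOfShape α C] [PreservesColimitsOfShape (Discrete α) H] :
    (supported H P).IsClosedUnderColimitsOfShape (Discrete α) :=
  isClosedUnderColimitsOfShape_discrete _ fun X hX => by
    obtain ⟨Z, _, hZ⟩ := P.exists_prop_of_containsZero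
    let N : AddSubgroup (H.obj (∐ X)) :=
      { carrier := {x | SupportedOn H P x}
        zero_mem' := ⟨Z, 0, 0, hZ, map_zero _⟩
        neg_mem' := fun ⟨A, f, z, hA, hz⟩ => ⟨A, f, -z, hA, by rw [map_neg, hz]⟩
        add_mem' := SupportedOn.add }
    exact mem_of_map_ι_mem H X N fun i x => (hX i x).map (Sigma.ι X i)

lemma VanishesThrough.of_comp {A F X : C} (hF : P F) (hA : P A)
    {i : F ⟶ A} {f : A ⟶ X} {x : H.obj F} (h : VanishesThrough H P x (i ≫ f)) :
    VanishesThrough H P (H.map i x) f := by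
  obtain ⟨B, a, b, hB, hab, hx⟩ := h
  obtain ⟨E, r, d, hE⟩ := distinguished_cocone_triangle (biprod.lift i (-a))
  have comp_inl_eq : i ≫ biprod.inl ≫ r = a ≫ biprod.inr ≫ r := by
    have := comp_eq_zero_of_distTriang hE
    rw [biprod.lift_eq] at this
    simpa [add_neg_eq_zero] using this
  obtain ⟨c, hc⟩ := exists_desc_of_distTriang hE (biprod.desc f b) (by simp [hab])
  refine ⟨E, biprod.inl ≫ r, c, ?_, ?_, ?_⟩
  · exact P.ext_of_isTriangulatedClosed₃ _ hE hF (prop_biprod P hA hB)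
  · rw [Category.assoc, hc, biprod.inl_desc]
  · rw [← H.map_comp_apply, comp_inl_eq, H.map_comp_apply, hx, map_zero]

lemma VanishesThrough.add [H.Additive] {A X : C} {x : H.obj A} {f g : A ⟶ X}
    (hf : VanishesThrough H P x f) (hg : VanishesThrough H P x g) :
    VanishesThrough H P x (f + g) := by
  obtain ⟨B, a, b, hB, rfl, hx⟩ := hf
  obtain ⟨B', a', b', hB', rfl, hx'⟩ := hg
  refine ⟨B ⊞ B', a ≫ biprod.inl + a' ≫ biprod.inr, biprod.desc b b',
    prop_biprod P hB hB', by simp, ?_⟩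
  simp [hx, hx']

section

variable [H.IsHomological] {X Y Z : C} {f : X ⟶ Y} {g : Y ⟶ Z} {h : Z ⟶ X⟦(1 : ℤ)⟧}
  (hT : Triangle.mk f g h ∈ distTriang C)

include hT

lemma supported_of_distTriang (hX : supported H P X) (hX' : detected H P (X⟦(1 : ℤ)⟧))
    (hZ : supported H P Z) : supported H P Y := fun y => by
  have hT' : Triangle.mk g h (-f⟦(1 : ℤ)⟧') ∈ distTriang C := rot_of_distTriang _ hT
  obtain ⟨A, p, z, hA, hz⟩ := hZ (H.map g y)
  obtain ⟨B, a, b, hB, hab, hza⟩ := hX' hA (p ≫ h) z (by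
    rw [H.map_comp_apply, hz, ← H.map_comp_apply, comp_eq_zero_of_distTriang hT']
    simp)
  obtain ⟨F, i, d, hF⟩ := distinguished_cocone_triangle₁ a
  obtain ⟨z', rfl⟩ := exists_map_eq_of_distTriang hF H hza
  obtain ⟨q, hq⟩ := exists_lift_of_distTriang hT' (i ≫ p) (by
    rw [Category.assoc, ← hab, ← Category.assoc, comp_eq_zero_of_distTriang hF, zero_comp])
  obtain ⟨w, hw⟩ := exists_map_eq_of_distTriang hT H (y := y - H.map q z') (by
    rw [map_sub, ← H.map_comp_apply, hq, H.map_comp_apply, hz, sub_self])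
  have supportedOn_map_q : SupportedOn H P (H.map q z') :=
    ⟨F, q, z', P.ext_of_isTriangulatedClosed₁ _ hF hA hB, rfl⟩
  simpa [hw] using supportedOn_map_q.add ((hX w).map f)

lemma vanishesThrough_comp_of_distTriang (hX : supported H P X) (hY : detected H P Y) {F : C}
    (hF : P F) (t : F ⟶ Y) {x : H.obj F} (hx : H.map (t ≫ g) x = 0) :
    VanishesThrough H P x (t ≫ g) := by
  obtain ⟨w, hw⟩ := exists_map_eq_of_distTriang hT H (y := H.map t x) (by
    rw [← H.map_comp_apply, hx])
  obtain ⟨A, s, z, hA, rfl⟩ := hX w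
  obtain ⟨D, u, v, hD, huv, hu⟩ := hY (prop_biprod P hF hA)
    (biprod.desc t (s ≫ f)) (H.map biprod.inl x - H.map biprod.inr z) (by
      rw [map_sub, ← H.map_comp_apply, ← H.map_comp_apply, biprod.inl_desc, biprod.inr_desc,
        H.map_comp_apply s, hw, sub_self])
  obtain ⟨E, r, e, hE⟩ := distinguished_cocone_triangle (biprod.inr ≫ u)
  obtain ⟨c, hc⟩ := exists_desc_of_distTriang hE (v ≫ g) (by
    simp [reassoc_of% huv, comp_eq_zero_of_distTriang hT])
  refine ⟨E, biprod.inl ≫ u ≫ r, c, P.ext_of_isTriangulatedClosed₃ _ hE hA hD, ?_, ?_⟩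
  · rw [Category.assoc, Category.assoc, hc, reassoc_of% huv, biprod.inl_desc_assoc]
  · have map_inl_eq : H.map (biprod.inl ≫ u) x = H.map (biprod.inr ≫ u) z := by
      simpa [sub_eq_zero] using hu
    rw [← Category.assoc, H.map_comp_apply, map_inl_eq, ← H.map_comp_apply,
      comp_eq_zero_of_distTriang hE]
    simp

lemma detected_of_distTriang (hZ' : supported H P (Z⟦(-1 : ℤ)⟧)) (hX : detected H P X)
    (hZ : detected H P Z) : detected H P Y := by
  intro A hA k x hx
  obtain ⟨B, a, b, hB, hab, hxa⟩ := hZ hA (k ≫ g) x (by rw [H.map_comp_apply, hx, map_zero])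
  obtain ⟨F, i, d, hF⟩ := distinguished_cocone_triangle₁ a
  obtain ⟨x, rfl⟩ := exists_map_eq_of_distTriang hF H hxa
  obtain ⟨t, ht⟩ := exists_lift_of_distTriang hT (i ≫ k) (by
    rw [Category.assoc, ← hab, ← Category.assoc, comp_eq_zero_of_distTriang hF, zero_comp])
  have hPF : P F := P.ext_of_isTriangulatedClosed₁ _ hF hA hB
  refine VanishesThrough.of_comp hPF hA ?_
  rw [← H.map_comp_apply, ← ht] at hx
  rw [← ht]
  exact vanishesThrough_comp_of_distTriang (inv_rot_of_distTriang _ hT) hZ' hX hPF t hx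

end

lemma isTriangulated_allShifts_supported_inf_detected [H.IsHomological] :
    (allShifts (supported H P ⊓ detected H P)).IsTriangulated := by
  refine isTriangulated_allShifts ?_ fun T hT h₁ h₃ => ⟨?_, ?_⟩
  · obtain ⟨Z, hZ, hPZ⟩ := P.exists_prop_of_containsZero
    have := P.prop_of_iso (hZ.iso (isZero_zero C)) hPZ
    exact ⟨le_supported _ this, le_detected _ this⟩
  · exact supported_of_distTriang hT (allShifts_le _ h₁).1 (h₁ 1).2 (allShifts_le _ h₃).1
  · exact detected_of_distTriang hT (h₃ (-1)).1 (allShifts_le _ h₁).2 (allShifts_le _ h₃).2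

lemma isClosedUnderColimitsOfShape_detected [H.Additive] (hP : P ≤ compacts C) {α : Type v}
    [HasCoproducts.{v} C] :
    (detected H P).IsClosedUnderColimitsOfShape (Discrete α) := by
  classical
  refine isClosedUnderColimitsOfShape_discrete _ fun X hX A hA f x hx => ?_
  obtain ⟨F, hF⟩ := compacts_iff.1 (hP A hA) X f
  rw [eq_sum_of_comp_eraseSummands_eq_zero hF]
  refine Finset.sum_induction _ (VanishesThrough H P x) (fun _ _ => VanishesThrough.add)
    ⟨A, 0, 0, hA, comp_zero, by simp⟩ fun i _ => ?_
  exact (hX i hA (f ≫ Sigma.π X i) x (by rw [H.map_comp_apply, hx, map_zero])).comp _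

end Support

section Generation

variable (C : Type u) [Category.{v} C] [HasZeroObject C] [Preadditive C] [HasShift C ℤ]
  [∀ n : ℤ, (shiftFunctor C n).Additive] [Pretriangulated C]

/-- The only thick triangulated subcategory which is closed under small coproducts and contains
the compact objects is the whole category. -/
def CompactsGenerate : Prop :=
  ∀ (P : ObjectProperty C) [P.IsTriangulated] [P.IsStableUnderRetracts]
    [∀ α : Type v, P.IsClosedUnderColimitsOfShape (Discrete α)], compacts C ≤ P → P = ⊤

variable {C}

lemma CompactsGenerate.supported_compacts (hC : CompactsGenerate C) [HasCoproducts.{v} C]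
    (H : C ⥤ AddCommGrpCat.{v}) [H.IsHomological]
    [∀ α : Type v, PreservesColimitsOfShape (Discrete α) H] (X : C) :
    supported H (compacts C) X := by
  have := isTriangulated_allShifts_supported_inf_detected (H := H) (P := compacts C)
  have (α : Type v) : (detected H (compacts C)).IsClosedUnderColimitsOfShape (Discrete α) :=
    isClosedUnderColimitsOfShape_detected le_rfl
  have all : allShifts (supported H (compacts C) ⊓ detected H (compacts C)) = ⊤ :=
    hC _ (le_allShifts (le_inf le_supported le_detected))
  exact (allShifts_le X (all.ge X trivial)).1

end Generation

section Towers

variable {C : Type u} [Category.{v} C]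

/-- A sequence of objects over `X`, with compatible transition morphisms. -/
structure TowerOver (X : C) where
  obj : ℕ → C
  map (n : ℕ) : obj n ⟶ obj (n + 1)
  hom (n : ℕ) : obj n ⟶ X
  map_hom (n : ℕ) : map n ≫ hom (n + 1) = hom n

lemma exists_tower (P : ObjectProperty C) {X : C}
    (R : ∀ ⦃A B : C⦄, (A ⟶ B) → (B ⟶ X) → Prop)
    (hR : ∀ ⦃A : C⦄ (f : A ⟶ X), P A →
      ∃ (B : C) (i : A ⟶ B) (g : B ⟶ X), P B ∧ i ≫ g = f ∧ R i g)
    {A : C} (hA : P A) (f : A ⟶ X) :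
    ∃ (T : TowerOver X) (a : A ⟶ T.obj 0), a ≫ T.hom 0 = f ∧ (∀ n, P (T.obj n)) ∧
      ∀ n, R (T.map n) (T.hom (n + 1)) := by
  choose next i g hP hg hi using fun p : {p : Over X // P p.left} => hR p.1.hom p.2
  let stage (n : ℕ) : {p : Over X // P p.left} :=
    n.rec ⟨Over.mk f, hA⟩ fun _ p => ⟨Over.mk (g p), hP p⟩
  exact ⟨⟨fun n => (stage n).1.left, fun n => i (stage n), fun n => (stage n).1.hom,
    fun n => hg (stage n)⟩, 𝟙 A, Category.id_comp f, fun n => (stage n).2, fun n => hi (stage n)⟩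

variable [HasCoproductsOfShape ℕ C]

/-- The endomorphism of the coproduct of a sequence which maps each term to the next one. The cone
of `𝟙 - towerShift i` is the homotopy colimit of the sequence. -/
noncomputable def towerShift {X : ℕ → C} (i : ∀ n, X n ⟶ X (n + 1)) : ∐ X ⟶ ∐ X :=
  Sigma.desc fun n => i n ≫ Sigma.ι X (n + 1)

lemma ι_towerShift {X : ℕ → C} (i : ∀ n, X n ⟶ X (n + 1)) (n : ℕ) :
    Sigma.ι X n ≫ towerShift i = i n ≫ Sigma.ι X (n + 1) :=
  Sigma.ι_desc _ _

lemma sigmaMap_comp_towerShift {X Y : ℕ → C} {i : ∀ n, X n ⟶ X (n + 1)} {j : ∀ n, Y n ⟶ Y (n + 1)}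
    {φ : ∀ n, X n ⟶ Y n} (h : ∀ n, i n ≫ φ (n + 1) = φ n ≫ j n) :
    Limits.Sigma.map φ ≫ towerShift j = towerShift i ≫ Limits.Sigma.map φ := by
  ext n
  simp [towerShift, reassoc_of% h]

lemma map_towerShift_eq_zero {A : Type*} [Category* A] [Preadditive A] (G : C ⥤ A)
    [PreservesColimitsOfShape (Discrete ℕ) G] {X : ℕ → C} {i : ∀ n, X n ⟶ X (n + 1)}
    (hi : ∀ n, G.map (i n) = 0) : G.map (towerShift i) = 0 := by
  refine (isColimitOfPreserves G (colimit.isColimit (Discrete.functor X))).hom_ext ?_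
  rintro ⟨n⟩
  change G.map (Sigma.ι X n) ≫ _ = _
  rw [← G.map_comp, ι_towerShift, G.map_comp, hi, zero_comp, comp_zero]

variable [Preadditive C]

lemma eq_zero_of_comp_towerShift_id {A Y : C} {k : A ⟶ ∐ fun _ : ℕ => Y}
    (hk : k ≫ towerShift (fun _ => 𝟙 Y) = k) : k = 0 := by
  let r : (∐ fun _ : ℕ => Y) ⟶ ∐ fun _ : ℕ => Y :=
    Sigma.desc fun n => -∑ j ∈ Finset.range n, Sigma.ι (fun _ : ℕ => Y) j
  have one_sub_comp_r : (𝟙 _ - towerShift (fun _ : ℕ => 𝟙 Y)) ≫ r = 𝟙 _ := by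
    ext n
    simp [r, towerShift, Preadditive.sub_comp, Finset.sum_range_succ]
  rw [← Category.comp_id k, ← one_sub_comp_r, ← Category.assoc, Preadditive.comp_sub, hk,
    Category.comp_id, sub_self, zero_comp]

lemma TowerOver.one_sub_towerShift_comp_desc {X : C} (T : TowerOver X) :
    (𝟙 _ - towerShift T.map) ≫ Sigma.desc T.hom = 0 := by
  ext n
  simp [Preadditive.sub_comp, towerShift, T.map_hom]

end Towers

section HomotopyColimit

variable {C : Type u} [Category.{v} C] [HasZeroObject C] [Preadditive C] [HasShift C ℤ]
  [∀ n : ℤ, (shiftFunctor C n).Additive] [Pretriangulated C] [HasCoproductsOfShape ℕ C]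

lemma TowerOver.exists_hocolim {X : C} (T : TowerOver X) :
    ∃ (V : C) (q : ∐ T.obj ⟶ V) (d : V ⟶ (∐ T.obj)⟦(1 : ℤ)⟧) (p : V ⟶ X),
      Triangle.mk (𝟙 _ - towerShift T.map) q d ∈ distTriang C ∧ q ≫ p = Sigma.desc T.hom := by
  obtain ⟨V, q, d, hV⟩ := distinguished_cocone_triangle (𝟙 _ - towerShift T.map)
  obtain ⟨p, hp⟩ := exists_desc_of_distTriang hV _ T.one_sub_towerShift_comp_desc
  exact ⟨V, q, d, p, hV, hp⟩

lemma homologicalKernel_of_map_eq_zero {A : Type*} [Category* A] [Abelian A] (H : C ⥤ A)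
    [H.IsHomological] [PreservesColimitsOfShape (Discrete ℕ) H] {X : ℕ → C}
    {i : ∀ n, X n ⟶ X (n + 1)} (hi : ∀ (n : ℕ) (m : ℤ), H.map ((i n)⟦m⟧') = 0) {V : C}
    {q : ∐ X ⟶ V} {d : V ⟶ (∐ X)⟦(1 : ℤ)⟧}
    (hT : Triangle.mk (𝟙 _ - towerShift i) q d ∈ distTriang C) : H.homologicalKernel V := by
  let := Functor.ShiftSequence.tautological H ℤ
  refine (H.homologicalKernel.trW_iff_of_distinguished _ hT).1
    ((H.mem_homologicalKernel_trW_iff _).2 fun m => ?_)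
  have map_eq_id : (shiftFunctor C m ⋙ H).map (𝟙 (∐ X) - towerShift i) = 𝟙 _ := by
    rw [(shiftFunctor C m ⋙ H).map_sub, (shiftFunctor C m ⋙ H).map_id,
      map_towerShift_eq_zero (shiftFunctor C m ⋙ H) fun n => hi n m, sub_zero]
  have isIso_id : IsIso (𝟙 ((shiftFunctor C m ⋙ H).obj (∐ X))) := inferInstance
  rwa [← map_eq_id] at isIso_id

end HomotopyColimit

section AcyclicFactorization

open Cardinal

variable {C : Type u} [Category.{v} C] [HasZeroObject C] [Preadditive C] [HasShift C ℤ]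
  [∀ n : ℤ, (shiftFunctor C n).Additive] [Pretriangulated C]
  {H : C ⥤ AddCommGrpCat.{v}} [H.IsHomological] {P : ObjectProperty C}

lemma exists_map_eq_of_supported_fiber {F S U : C} {a : F ⟶ S} {f : S ⟶ U}
    {d : U ⟶ F⟦(1 : ℤ)⟧} (hF : Triangle.mk a f d ∈ distTriang C) (hU : H.homologicalKernel U)
    (n : ℤ) (hn : supported (shiftFunctor C n ⋙ H) P F) (x : H.obj (S⟦n⟧)) :
    ∃ (A : C) (g : A ⟶ F) (z : H.obj (A⟦n⟧)), P A ∧ H.map ((g ≫ a)⟦n⟧') z = x := by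
  obtain ⟨y, rfl⟩ := exists_map_eq_of_distTriang hF (shiftFunctor C n ⋙ H) (y := x)
    ((AddCommGrpCat.subsingleton_of_isZero (hU n)).elim _ _)
  obtain ⟨A, g, z, hA, rfl⟩ := hn y
  exact ⟨A, g, z, hA, (shiftFunctor C n ⋙ H).map_comp_apply g a z⟩

variable [HasCoproducts.{v} C] [P.IsTriangulated] [P.IsClosedUnderIsomorphisms] {κ : Cardinal.{v}}

lemma exists_fac_map_shift_eq_zero (hκ : ℵ₀ ≤ κ)
    (hPκ : ∀ α : Type v, #α ≤ κ → P.IsClosedUnderColimitsOfShape (Discrete α))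
    (hcard : P ≤ valuesCardLE H κ) (hsupp : ∀ (n : ℤ) X, supported (shiftFunctor C n ⋙ H) P X)
    {S U : C} (hS : P S) (hU : H.homologicalKernel U) (f : S ⟶ U) :
    ∃ (S' : C) (i : S ⟶ S') (f' : S' ⟶ U),
      P S' ∧ i ≫ f' = f ∧ ∀ n : ℤ, H.map (i⟦n⟧') = 0 := by
  obtain ⟨F, a, d, hF⟩ := distinguished_cocone_triangle₁ f
  choose A g z hA hz using fun x : Σ n : ULift.{v} ℤ, H.obj (S⟦n.down⟧) =>
    exists_map_eq_of_supported_fiber hF hU x.1.down (hsupp x.1.down F) x.2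
  have mk_le : #(Σ n : ULift.{v} ℤ, H.obj (S⟦n.down⟧)) ≤ κ := by
    rw [mk_sigma]
    refine (sum_le_sum _ (fun _ => κ) fun n : ULift.{v} ℤ =>
      hcard _ (P.le_shift n.down S hS)).trans ?_
    rw [sum_const']
    exact (mul_le_mul' (by simpa using hκ) le_rfl).trans (mul_eq_self hκ).le
  have := hPκ _ mk_le
  obtain ⟨S', i, e, hT⟩ := distinguished_cocone_triangle (Sigma.desc fun x => g x ≫ a)
  obtain ⟨f', hf'⟩ := exists_desc_of_distTriang hT f (by
    ext x
    simp [comp_eq_zero_of_distTriang hF])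
  refine ⟨S', i, f', P.ext_of_isTriangulatedClosed₃ _ hT (prop_sigma P _ hA) hS, hf', fun n => ?_⟩
  ext x
  have comp_eq_zero : (g ⟨⟨n⟩, x⟩ ≫ a) ≫ i = 0 := by
    rw [← Sigma.ι_desc (fun x => g x ≫ a), Category.assoc, comp_eq_zero_of_distTriang hT,
      comp_zero]
  have map_eq : H.map ((g ⟨⟨n⟩, x⟩ ≫ a)⟦n⟧') (z ⟨⟨n⟩, x⟩) = x := hz ⟨⟨n⟩, x⟩
  rw [← map_eq, ← H.map_comp_apply, ← (shiftFunctor C n).map_comp, comp_eq_zero]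
  simp

lemma exists_fac_inf_homologicalKernel [PreservesColimitsOfShape (Discrete ℕ) H] (hκ : ℵ₀ ≤ κ)
    (hPκ : ∀ α : Type v, #α ≤ κ → P.IsClosedUnderColimitsOfShape (Discrete α))
    (hcard : P ≤ valuesCardLE H κ) (hsupp : ∀ (n : ℤ) X, supported (shiftFunctor C n ⋙ H) P X)
    {S U : C} (hS : P S) (hU : H.homologicalKernel U) (f : S ⟶ U) :
    ∃ (V : C) (a : S ⟶ V) (b : V ⟶ U), (P ⊓ H.homologicalKernel) V ∧ a ≫ b = f := by
  obtain ⟨T, a, rfl, hT, map_eq_zero⟩ := exists_tower P (X := U)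
    (fun _ _ i _ => ∀ n : ℤ, H.map (i⟦n⟧') = 0)
    (fun _ f hA => exists_fac_map_shift_eq_zero hκ hPκ hcard hsupp hA hU f) hS f
  obtain ⟨V, q, d, p, hV, hp⟩ := T.exists_hocolim
  have := hPκ (ULift.{v} ℕ) (by simpa using hκ)
  have prop_sigma : P (∐ T.obj) := prop_sigma_nat P _ hT
  refine ⟨V, a ≫ Sigma.ι T.obj 0 ≫ q, p,
    ⟨P.ext_of_isTriangulatedClosed₃ _ hV prop_sigma prop_sigma,
      homologicalKernel_of_map_eq_zero H map_eq_zero hV⟩, ?_⟩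
  rw [Category.assoc, Category.assoc, hp, Sigma.ι_desc]

end AcyclicFactorization

section PerfectKernels

variable {C : Type u} [Category.{v} C] {α : Type*} [HasCoproductsOfShape α C]
  {P Q : ObjectProperty C}

lemma perfect_of_forall_exists_fac {P' Q' : ObjectProperty C} (hQ : Q' ≤ Q)
    (hfac : ∀ ⦃S U : C⦄, P S → Q' U → ∀ f : S ⟶ U,
      ∃ (V : C) (a : S ⟶ V) (b : V ⟶ U), P' V ∧ a ≫ b = f)
    {A : C} (hA : perfect α P Q A) : perfect α P' Q' A := fun U hU f => by
  obtain ⟨Z, a, b, hZ, rfl⟩ := hA U (fun i => hQ _ (hU i)) f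
  choose Y c e hY he using fun i => hfac (hZ i) (hU i) (a i)
  exact ⟨Y, e, b ≫ Limits.Sigma.map c, hY, by simp [Sigma.map_comp_map, he]⟩

lemma comp_sigmaMap_eq_zero_of_comp_sigmaMap_eq_zero [HasZeroObject C] [Preadditive C]
    [HasShift C ℤ] [∀ n : ℤ, (shiftFunctor C n).Additive] [Pretriangulated C] [Q.IsTriangulated]
    [Q.IsClosedUnderIsomorphisms] {A : C} (hA : perfect α P Q A) {V U W : α → C}
    (hV : ∀ i, Q (V i)) (hU : ∀ i, Q (U i)) {φ : ∀ i, V i ⟶ U i} {ψ : ∀ i, V i ⟶ W i}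
    (h : ∀ i ⦃Y : C⦄ (t : Y ⟶ V i), P Y → t ≫ φ i = 0 → t ≫ ψ i = 0) {g : A ⟶ ∐ V}
    (hg : g ≫ Limits.Sigma.map φ = 0) : g ≫ Limits.Sigma.map ψ = 0 := by
  obtain ⟨Y, t, b, hY, rfl, ht⟩ := exists_comp_sigmaMap_eq_of_comp_sigmaMap_eq_zero hA hV hU φ hg
  rw [Category.assoc, sigmaMap_comp_eq_zero fun i => h i (t i) (hY i) (ht i), comp_zero]

end PerfectKernels

section Approximation

variable {C : Type u} [Category.{v} C]

namespace TowerOver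

variable {X : C} (T : TowerOver X)

/-- A tower over `X` which approximates `X` from the point of view of the objects of `S`: morphisms
to `X` lift to the first stage, and morphisms which become zero in `X` already become zero in the
next stage. -/
structure IsApproximation [HasZeroMorphisms C] (S : ObjectProperty C) : Prop where
  exists_lift ⦃s : C⦄ (hs : S s) (f : s ⟶ X) : ∃ a : s ⟶ T.obj 0, a ≫ T.hom 0 = f
  comp_map_eq_zero ⦃s : C⦄ (hs : S s) {n : ℕ} (g : s ⟶ T.obj n) (hg : g ≫ T.hom n = 0) :
    g ≫ T.map n = 0

/-- The composite transition morphism from the first stage of a tower. -/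
def fromZero (n : ℕ) : T.obj 0 ⟶ T.obj n :=
  n.rec (𝟙 _) fun n f => f ≫ T.map n

lemma fromZero_succ (n : ℕ) : T.fromZero (n + 1) = T.fromZero n ≫ T.map n := rfl

lemma fromZero_comp_hom (n : ℕ) : T.fromZero n ≫ T.hom n = T.hom 0 := by
  induction n with
  | zero => exact Category.id_comp _
  | succ n ih => rw [fromZero_succ, Category.assoc, T.map_hom, ih]

lemma fromZero_comp_ι [HasCoproductsOfShape ℕ C] {V : C} {q : ∐ T.obj ⟶ V}
    (hq : towerShift T.map ≫ q = q) (n : ℕ) :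
    T.fromZero n ≫ Sigma.ι T.obj n ≫ q = Sigma.ι T.obj 0 ≫ q := by
  induction n with
  | zero => exact Category.id_comp _
  | succ n ih =>
    rw [← ih, fromZero_succ, Category.assoc, ← reassoc_of% ι_towerShift T.map n, hq]

variable [Preadditive C] {T} {S : ObjectProperty C}

namespace IsApproximation

lemma exists_comp_map_eq (hT : T.IsApproximation S) {s : C} (hs : S s) {n : ℕ} (a : s ⟶ T.obj n) :
    ∃ a' : s ⟶ T.obj 0, a' ≫ T.hom 0 = a ≫ T.hom n ∧ a' ≫ T.fromZero (n + 1) = a ≫ T.map n := by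
  obtain ⟨a', ha'⟩ := hT.exists_lift hs (a ≫ T.hom n)
  have := hT.comp_map_eq_zero hs (a' ≫ T.fromZero n - a) (by
    rw [Preadditive.sub_comp, Category.assoc, fromZero_comp_hom, ha', sub_self])
  refine ⟨a', ha', ?_⟩
  rwa [Preadditive.sub_comp, sub_eq_zero, Category.assoc, ← fromZero_succ] at this

lemma comp_fromZero_succ_eq_zero (hT : T.IsApproximation S) {s : C} (hs : S s) {t : s ⟶ T.obj 0}
    (ht : t ≫ T.hom 0 = 0) (n : ℕ) : t ≫ T.fromZero (n + 1) = 0 := by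
  rw [fromZero_succ, ← Category.assoc]
  exact hT.comp_map_eq_zero hs _ (by rw [Category.assoc, fromZero_comp_hom, ht])

variable [HasCoproductsOfShape ℕ C] {Q : ObjectProperty C}

lemma exists_comp_towerShift_eq (hT : T.IsApproximation S) (hTQ : ∀ n, Q (T.obj n)) {s : C}
    (hs : perfect ℕ S Q s) (g : s ⟶ ∐ T.obj) :
    ∃ k : s ⟶ ∐ fun _ : ℕ => T.obj 0,
      k ≫ Limits.Sigma.map T.fromZero = g ≫ towerShift T.map ∧
      k ≫ Sigma.desc (fun _ => T.hom 0) = g ≫ Sigma.desc T.hom := by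
  obtain ⟨Y, a, b, hY, rfl⟩ := hs T.obj hTQ g
  choose a' hom_eq map_eq using fun n => hT.exists_comp_map_eq (hY n) (a n)
  refine ⟨b ≫ Limits.Sigma.map a' ≫ towerShift fun _ => 𝟙 _, ?_, ?_⟩
  · simp only [Category.assoc]
    congr 1
    ext n
    simp [towerShift, reassoc_of% (map_eq n)]
  · simp only [Category.assoc]
    congr 1
    ext n
    simp [towerShift, hom_eq]

lemma comp_eq_zero (hT : T.IsApproximation S) (hTQ : ∀ n, Q (T.obj n)) {s : C} (hs : S s)
    (hs' : perfect ℕ S Q s) {g : s ⟶ ∐ T.obj} (hg : g ≫ Sigma.desc T.hom = 0) {V : C}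
    {q : ∐ T.obj ⟶ V} (hq : towerShift T.map ≫ q = q) : g ≫ q = 0 := by
  obtain ⟨k, hk, hk'⟩ := hT.exists_comp_towerShift_eq hTQ hs' g
  let codiag : (∐ fun _ : ℕ => T.obj 0) ⟶ T.obj 0 := Sigma.desc fun _ => 𝟙 _
  have codiag_comp_hom : codiag ≫ T.hom 0 = Limits.Sigma.desc fun _ => T.hom 0 := by
    ext
    simp [codiag]
  have codiag_comp_map : k ≫ codiag ≫ T.map 0 = 0 := by
    rw [← Category.assoc]
    exact hT.comp_map_eq_zero hs _ (by rw [Category.assoc, codiag_comp_hom, hk', hg])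
  have sigmaMap_comp_q : Limits.Sigma.map T.fromZero ≫ q = codiag ≫ Sigma.ι T.obj 0 ≫ q := by
    ext n
    simp [codiag, T.fromZero_comp_ι hq]
  have ι_comp_q : Sigma.ι T.obj 0 ≫ q = T.map 0 ≫ Sigma.ι T.obj 1 ≫ q := by
    rw [← reassoc_of% ι_towerShift T.map 0, hq]
  calc g ≫ q = g ≫ towerShift T.map ≫ q := by rw [hq]
    _ = k ≫ Limits.Sigma.map T.fromZero ≫ q := by rw [← Category.assoc, ← hk, Category.assoc]
    _ = (k ≫ codiag ≫ T.map 0) ≫ Sigma.ι T.obj 1 ≫ q := by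
      rw [sigmaMap_comp_q, ι_comp_q]
      simp only [Category.assoc]
    _ = 0 := by rw [codiag_comp_map, zero_comp]

variable [HasZeroObject C] [HasShift C ℤ] [∀ n : ℤ, (shiftFunctor C n).Additive]
  [Pretriangulated C] [Q.IsTriangulated] [Q.IsClosedUnderIsomorphisms]

lemma eq_zero_of_comp_towerShift (hT : T.IsApproximation S) (hTQ : ∀ n, Q (T.obj n)) {s : C}
    (hs : perfect ℕ S Q s) {g : s ⟶ ∐ T.obj} (hg : g ≫ towerShift T.map = g) : g = 0 := by
  obtain ⟨k, hk, -⟩ := hT.exists_comp_towerShift_eq hTQ hs g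
  rw [hg] at hk
  let c : (∐ fun _ : ℕ => T.obj 0) ⟶ ∐ fun _ : ℕ => T.obj 0 := towerShift fun _ => 𝟙 _
  have sigmaMap_comp_towerShift_eq : Limits.Sigma.map T.fromZero ≫ towerShift T.map =
      c ≫ Limits.Sigma.map T.fromZero :=
    sigmaMap_comp_towerShift fun n => by rw [Category.id_comp, fromZero_succ]
  have comp_c_comp_map : (k - k ≫ c) ≫ Limits.Sigma.map (fun _ => T.map 0) = 0 := by
    refine comp_sigmaMap_eq_zero_of_comp_sigmaMap_eq_zero hs (fun _ => hTQ 0) hTQ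
      (φ := T.fromZero) (fun n _ t hY ht => hT.comp_map_eq_zero hY t (by
        rw [← T.fromZero_comp_hom n, ← Category.assoc, ht, zero_comp])) ?_
    rw [Preadditive.sub_comp, Category.assoc, ← sigmaMap_comp_towerShift_eq, ← Category.assoc,
      hk, hg, sub_self]
  have comp_map_zero : k ≫ Limits.Sigma.map (fun _ => T.map 0) = 0 := by
    refine eq_zero_of_comp_towerShift_id ?_
    rw [Preadditive.sub_comp, sub_eq_zero, Category.assoc] at comp_c_comp_map
    rw [Category.assoc, sigmaMap_comp_towerShift (i := fun _ => 𝟙 (T.obj 0)) fun _ => by simp]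
    exact comp_c_comp_map.symm
  have comp_fromZero_succ : k ≫ Limits.Sigma.map (fun n => T.fromZero (n + 1)) = 0 := by
    refine comp_sigmaMap_eq_zero_of_comp_sigmaMap_eq_zero hs (fun _ => hTQ 0) (fun _ => hTQ 1)
      (fun n Y t hY ht => hT.comp_fromZero_succ_eq_zero hY ?_ n) comp_map_zero
    rw [← T.map_hom, ← Category.assoc, ht, zero_comp]
  have sigmaMap_comp_towerShift_eq' : Limits.Sigma.map T.fromZero ≫ towerShift T.map =
      Limits.Sigma.map (fun n => T.fromZero (n + 1)) ≫
        Sigma.desc fun n => Sigma.ι T.obj (n + 1) := by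
    ext n
    simp [towerShift, fromZero_succ]
  rw [← hg, ← hk, Category.assoc, sigmaMap_comp_towerShift_eq', ← Category.assoc,
    comp_fromZero_succ, zero_comp]

end IsApproximation

end TowerOver

end Approximation

section Colocal

variable {C : Type u} [Category.{v} C] [Preadditive C] [HasShift C ℤ]
  [∀ n : ℤ, (shiftFunctor C n).Additive]

lemma eq_zero_of_comp_shift_map_eq_zero {s A B : C} (f : A ⟶ B)
    (hf : ∀ y : s⟦(-1 : ℤ)⟧ ⟶ A, y ≫ f = 0 → y = 0) (k : s ⟶ A⟦(1 : ℤ)⟧)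
    (hk : k ≫ f⟦(1 : ℤ)⟧' = 0) : k = 0 := by
  let e : s⟦(-1 : ℤ)⟧⟦(1 : ℤ)⟧ ≅ s := (shiftEquiv C (1 : ℤ)).counitIso.app s
  obtain ⟨y, hy⟩ := (shiftFunctor C (1 : ℤ)).map_surjective (e.hom ≫ k)
  have y_comp : y ≫ f = 0 := (shiftFunctor C (1 : ℤ)).map_injective (by
    rw [(shiftFunctor C (1 : ℤ)).map_comp, hy, Category.assoc, hk, comp_zero,
      (shiftFunctor C (1 : ℤ)).map_zero])
  rw [← cancel_epi e.hom, ← hy, hf y y_comp, comp_zero, (shiftFunctor C (1 : ℤ)).map_zero]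

variable [HasZeroObject C] [Pretriangulated C]

lemma rightOrthogonal_of_isColocal {S : ObjectProperty C} [S.IsStableUnderShift ℤ] {V X W : C}
    {p : V ⟶ X} {j : X ⟶ W} {d : W ⟶ V⟦(1 : ℤ)⟧} (hT : Triangle.mk p j d ∈ distTriang C)
    (hp : S.isColocal p) : S.rightOrthogonal W := fun s f hs => by
  have comp_d : f ≫ d = 0 := by
    refine eq_zero_of_comp_shift_map_eq_zero p (fun y hy => ?_) _ ?_
    · exact (hp _ (S.le_shift (-1 : ℤ) _ hs)).1 (by simpa only [zero_comp] using hy)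
    · rw [Category.assoc, comp_shift_map_eq_zero_of_distTriang hT, comp_zero]
  obtain ⟨g, rfl⟩ := exists_lift_of_distTriang_of_comp_mor₃ hT f comp_d
  obtain ⟨l, rfl⟩ := (hp _ hs).2 g
  rw [Category.assoc, comp_eq_zero_of_distTriang hT, comp_zero]

lemma TowerOver.IsApproximation.isColocal [HasCoproductsOfShape ℕ C] {S Q : ObjectProperty C}
    [S.IsStableUnderShift ℤ] [Q.IsTriangulated] [Q.IsClosedUnderIsomorphisms]
    (hS : S ≤ perfect ℕ S Q) {X : C} {T : TowerOver X} (hT : T.IsApproximation S)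
    (hTQ : ∀ n, Q (T.obj n)) {V : C} {q : ∐ T.obj ⟶ V} {d : V ⟶ (∐ T.obj)⟦(1 : ℤ)⟧} {p : V ⟶ X}
    (hV : Triangle.mk (𝟙 _ - towerShift T.map) q d ∈ distTriang C)
    (hp : q ≫ p = Limits.Sigma.desc T.hom) : S.isColocal p := by
  have hq : towerShift T.map ≫ q = q := by
    have := comp_eq_zero_of_distTriang hV
    rwa [Preadditive.sub_comp, Category.id_comp, sub_eq_zero, eq_comm] at this
  refine fun s hs => ⟨(injective_iff_map_eq_zero (Preadditive.rightComp s p)).2 fun k hk => ?_,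
    fun f => ?_⟩
  · have comp_d : k ≫ d = 0 := by
      refine eq_zero_of_comp_shift_map_eq_zero (𝟙 _ - towerShift T.map) (fun y hy => ?_) _ ?_
      · refine hT.eq_zero_of_comp_towerShift hTQ (hS _ (S.le_shift (-1 : ℤ) _ hs)) ?_
        rwa [Preadditive.comp_sub, Category.comp_id, sub_eq_zero, eq_comm] at hy
      · rw [Category.assoc, comp_shift_map_eq_zero_of_distTriang hV, comp_zero]
    obtain ⟨g, rfl⟩ := exists_lift_of_distTriang_of_comp_mor₃ hV k comp_d
    exact hT.comp_eq_zero hTQ hs (hS _ hs) (by rw [← hp, ← Category.assoc]; exact hk) hq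
  · obtain ⟨a, rfl⟩ := hT.exists_lift hs f
    exact ⟨a ≫ Sigma.ι T.obj 0 ≫ q, by simp [hp]⟩

end Colocal

section ExistenceOfApproximations

variable {C : Type u} [Category.{v} C] [HasCoproducts.{v} C] {S Q : ObjectProperty C}
  [ObjectProperty.EssentiallySmall.{v} S]
  [∀ α : Type v, Q.IsClosedUnderColimitsOfShape (Discrete α)]

lemma exists_forall_exists_lift (hSQ : S ≤ Q) (X : C) :
    ∃ (U : C) (p : U ⟶ X), Q U ∧ ∀ ⦃s : C⦄, S s → ∀ f : s ⟶ X, ∃ a, a ≫ p = f := by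
  obtain ⟨P₀, _, hP₀, hS⟩ := ObjectProperty.EssentiallySmall.exists_small_le.{v} S
  let G (i : Shrink.{v} (Subtype P₀)) : C := ((equivShrink _).symm i).1
  refine ⟨∐ fun x : Σ i, G i ⟶ X => G x.1, Limits.Sigma.desc fun x => x.2,
    prop_sigma Q _ fun x => hSQ _ (hP₀ _ ((equivShrink _).symm x.1).2), fun s hs f => ?_⟩
  obtain ⟨s', hs', ⟨e⟩⟩ := hS s hs
  obtain ⟨i, rfl⟩ : ∃ i, G i = s' := ⟨equivShrink _ ⟨s', hs'⟩, by simp [G]⟩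
  exact ⟨e.hom ≫ Sigma.ι (fun x : Σ i, G i ⟶ X => G x.1) ⟨i, e.inv ≫ f⟩, by simp⟩

variable [HasZeroObject C] [Preadditive C] [HasShift C ℤ]
  [∀ n : ℤ, (shiftFunctor C n).Additive] [Pretriangulated C] [Q.IsTriangulated]
  [Q.IsClosedUnderIsomorphisms]

lemma exists_fac_comp_eq_zero (hSQ : S ≤ Q) {A X : C} (hA : Q A) (f : A ⟶ X) :
    ∃ (B : C) (i : A ⟶ B) (g : B ⟶ X), Q B ∧ i ≫ g = f ∧
      ∀ ⦃s : C⦄, S s → ∀ t : s ⟶ A, t ≫ f = 0 → t ≫ i = 0 := by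
  obtain ⟨F, e, _, hF⟩ := distinguished_cocone_triangle₁ f
  obtain ⟨U, p, hU, hp⟩ := exists_forall_exists_lift hSQ F
  obtain ⟨B, i, _, hB⟩ := distinguished_cocone_triangle (p ≫ e)
  obtain ⟨g, hg⟩ := exists_desc_of_distTriang hB f (by
    rw [Category.assoc, comp_eq_zero_of_distTriang hF, comp_zero])
  refine ⟨B, i, g, Q.ext_of_isTriangulatedClosed₃ _ hB hU hA, hg, fun s hs t ht => ?_⟩
  obtain ⟨l, rfl⟩ := exists_lift_of_distTriang hF t ht
  obtain ⟨a, rfl⟩ := hp hs l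
  rw [Category.assoc, Category.assoc, ← Category.assoc p, comp_eq_zero_of_distTriang hB, comp_zero]

lemma TowerOver.exists_isApproximation (hSQ : S ≤ Q) (X : C) :
    ∃ T : TowerOver X, T.IsApproximation S ∧ ∀ n, Q (T.obj n) := by
  obtain ⟨U, p, hU, hp⟩ := exists_forall_exists_lift hSQ X
  obtain ⟨T, a, rfl, hTQ, hT⟩ := exists_tower Q
    (fun _ _ i g => ∀ ⦃s : C⦄, S s → ∀ t, t ≫ i ≫ g = 0 → t ≫ (i : _ ⟶ _) = (0 : s ⟶ _))
    (fun A f hA => by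
      obtain ⟨B, i, g, hB, rfl, h⟩ := exists_fac_comp_eq_zero hSQ hA f
      exact ⟨B, i, g, hB, rfl, h⟩) hU p
  refine ⟨T, ⟨fun s hs f => ?_, fun s hs n g hg => hT n hs g (by rwa [T.map_hom])⟩, hTQ⟩
  obtain ⟨b, rfl⟩ := hp hs f
  exact ⟨b ≫ a, Category.assoc _ _ _⟩

lemma exists_isColocal [S.IsStableUnderShift ℤ] (hSQ : S ≤ Q) (hS : S ≤ perfect ℕ S Q) (X : C) :
    ∃ (V : C) (p : V ⟶ X), Q V ∧ S.isColocal p := by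
  obtain ⟨T, hT, hTQ⟩ := TowerOver.exists_isApproximation hSQ X
  obtain ⟨V, q, d, p, hV, hp⟩ := T.exists_hocolim
  have coproduct_mem : Q (∐ T.obj) := prop_sigma_nat Q _ hTQ
  exact ⟨V, p, Q.ext_of_isTriangulatedClosed₃ _ hV coproduct_mem coproduct_mem,
    hT.isColocal hS hTQ hV hp⟩

end ExistenceOfApproximations

section PerfectGeneration

variable {C : Type u} [Category.{v} C] [HasZeroObject C] [Preadditive C] [HasShift C ℤ]
  [∀ n : ℤ, (shiftFunctor C n).Additive] [Pretriangulated C] [HasCoproducts.{v} C]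

/-- An essentially small class `S` of objects which is stable under shifts perfectly generates a
class `Q` containing it if `S` is perfect relative to `Q` and the only objects of `Q` receiving no
nonzero morphism from `S` are zero. This is Krause's notion for the triangulated category `Q`. -/
structure PerfectlyGenerates (S Q : ObjectProperty C) : Prop where
  essentiallySmall : ObjectProperty.EssentiallySmall.{v} S
  isStableUnderShift : S.IsStableUnderShift ℤ
  le : S ≤ Q
  le_perfect : S ≤ perfect ℕ S Q
  isZero ⦃W : C⦄ (hW : Q W) (hSW : S.rightOrthogonal W) : IsZero W

namespace PerfectlyGenerates

variable {S Q : ObjectProperty C} (h : PerfectlyGenerates S Q)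

include h

lemma exists_distTriang {Q' : ObjectProperty C} [Q'.IsTriangulated] [Q'.IsClosedUnderIsomorphisms]
    [∀ α : Type v, Q'.IsClosedUnderColimitsOfShape (Discrete α)] (hS : S ≤ Q') (hQ : Q' ≤ Q)
    (X : C) : ∃ (V W : C) (p : V ⟶ X) (j : X ⟶ W) (d : W ⟶ V⟦(1 : ℤ)⟧),
      Triangle.mk p j d ∈ distTriang C ∧ Q' V ∧ S.rightOrthogonal W := by
  have := h.essentiallySmall
  have := h.isStableUnderShift
  obtain ⟨V, p, hV, hp⟩ := exists_isColocal hS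
    (fun s hs U hU => h.le_perfect s hs U fun i => hQ _ (hU i)) X
  obtain ⟨W, j, d, hT⟩ := distinguished_cocone_triangle p
  exact ⟨V, W, p, j, d, hT, hV, rightOrthogonal_of_isColocal hT hp⟩

variable [Q.IsTriangulated] [Q.IsClosedUnderIsomorphisms]
  [∀ α : Type v, Q.IsClosedUnderColimitsOfShape (Discrete α)]

lemma le_leftOrthogonal_rightOrthogonal : Q ≤ S.rightOrthogonal.leftOrthogonal := fun U hU => by
  have := h.isStableUnderShift
  obtain ⟨V, W, p, j, d, hT, hV, hW⟩ := h.exists_distTriang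
    (Q' := Q ⊓ S.rightOrthogonal.leftOrthogonal)
    (le_inf h.le fun s hs _ f hZ => hZ f hs) inf_le_left U
  have isZero_W : IsZero W := h.isZero (Q.ext_of_isTriangulatedClosed₃ _ hT hV.1 hU) hW
  exact S.rightOrthogonal.leftOrthogonal.ext_of_isTriangulatedClosed₂ _ hT hV.2
    fun _ f _ => isZero_W.eq_of_src f 0

lemma exists_distTriang_rightOrthogonal (X : C) :
    ∃ (V W : C) (p : V ⟶ X) (j : X ⟶ W) (d : W ⟶ V⟦(1 : ℤ)⟧),
      Triangle.mk p j d ∈ distTriang C ∧ Q V ∧ Q.rightOrthogonal W := by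
  obtain ⟨V, W, p, j, d, hT, hV, hW⟩ := h.exists_distTriang h.le le_rfl X
  exact ⟨V, W, p, j, d, hT, hV, fun U f hU => h.le_leftOrthogonal_rightOrthogonal U hU f hW⟩

end PerfectlyGenerates

end PerfectGeneration

section UniversalProperties

variable {C : Type u} [Category.{v} C] [HasZeroObject C] [Preadditive C] [HasShift C ℤ]
  [∀ n : ℤ, (shiftFunctor C n).Additive] [Pretriangulated C] (P : ObjectProperty C)
  [P.IsTriangulated] {X Y Z : C} {f : X ⟶ Y} {g : Y ⟶ Z} {h : Z ⟶ X⟦(1 : ℤ)⟧}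
  (hT : Triangle.mk f g h ∈ distTriang C)

include hT

lemma existsUnique_lift_of_leftOrthogonal (hZ : P Z) {U : C} (hU : P.leftOrthogonal U)
    (k : U ⟶ Y) : ∃! l, l ≫ f = k := by
  rw [← P.isColocal_trW] at hU
  exact (hU _ (ObjectProperty.trW.mk P hT hZ)).existsUnique k

lemma existsUnique_desc_of_rightOrthogonal (hX : P X) {W : C} (hW : P.rightOrthogonal W)
    (k : Y ⟶ W) : ∃! l, g ≫ l = k := by
  rw [← P.isLocal_trW] at hW
  exact (hW _ (ObjectProperty.trW.mk' P hT hX)).existsUnique k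

end UniversalProperties

section Acyclics

open Cardinal

variable {C : Type u} [Category.{v} C] [HasZeroObject C] [Preadditive C] [HasShift C ℤ]
  [∀ n : ℤ, (shiftFunctor C n).Additive] [Pretriangulated C] [HasCoproducts.{v} C]

lemma CompactsGenerate.isZero_of_rightOrthogonal (hC : CompactsGenerate C) {X : C}
    (hX : (compacts C).rightOrthogonal X) : IsZero X := by
  have eq_top : (compacts C).rightOrthogonal.leftOrthogonal = ⊤ :=
    hC _ fun A hA Y f hY => hY f hA
  have hX' : (compacts C).rightOrthogonal.leftOrthogonal X := eq_top ▸ trivial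
  exact (IsZero.iff_id_eq_zero X).2 (hX' (𝟙 X) hX)

lemma CompactsGenerate.exists_fac (hC : CompactsGenerate C) (K : C ⥤ AddCommGrpCat.{v})
    [K.IsHomological] [∀ α : Type v, PreservesColimitsOfShape (Discrete α) K] {J : Type v}
    (hJ : ℵ₀ ≤ #J) (hcard : compacts C ≤ valuesCardLE K #J) {S U : C}
    (hS : cellularClosure (compacts C) J S) (hU : K.homologicalKernel U) (f : S ⟶ U) :
    ∃ (V : C) (a : S ⟶ V) (b : V ⟶ U),
      (cellularClosure (compacts C) J ⊓ K.homologicalKernel) V ∧ a ≫ b = f := by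
  have : PreservesColimitsOfShape (Discrete ℕ) K :=
    preservesColimitsOfShape_of_equiv (Discrete.equivalence Equiv.ulift.{v}) K
  refine exists_fac_inf_homologicalKernel hJ
    (fun α hα => cellularClosure_isClosedUnderColimitsOfShape hα)
    (cellularClosure_le_valuesCardLE K hJ hcard) (fun n X x => ?_) hS hU f
  obtain ⟨A, g, z, hA, hz⟩ := hC.supported_compacts (shiftFunctor C n ⋙ K) X x
  exact ⟨A, g, z, le_cellularClosure _ J A hA, hz⟩

lemma CompactsGenerate.exists_perfectlyGenerates (hC : CompactsGenerate C)
    [ObjectProperty.EssentiallySmall.{v} (compacts C)] (K : C ⥤ AddCommGrpCat.{v})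
    [K.IsHomological] [∀ α : Type v, PreservesColimitsOfShape (Discrete α) K] :
    ∃ S : ObjectProperty C, PerfectlyGenerates S K.homologicalKernel := by
  obtain ⟨κ, hκ, hcard⟩ := exists_le_valuesCardLE K (compacts C)
  obtain ⟨J, rfl⟩ : ∃ J : Type v, #J = κ := ⟨κ.out, mk_out κ⟩
  refine ⟨cellularClosure (compacts C) J ⊓ K.homologicalKernel,
    { essentiallySmall := .of_le inf_le_left
      isStableUnderShift := inferInstance
      le := inf_le_right
      le_perfect := ?_
      isZero := ?_ }⟩
  · have perfect_top :
        cellularClosure (compacts C) J ≤ perfect ℕ (cellularClosure (compacts C) J) ⊤ :=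
      cellularClosure_le_perfect le_top (compacts_le_perfect (le_cellularClosure _ J))
    exact fun A hA => perfect_of_forall_exists_fac (α := ℕ) (Q := ⊤) le_top
      (fun _ _ hS hU f => hC.exists_fac K hκ hcard hS hU f) (perfect_top A hA.1)
  · refine fun W hW hSW => hC.isZero_of_rightOrthogonal fun A f hA => ?_
    obtain ⟨V, a, b, hV, rfl⟩ := hC.exists_fac K hκ hcard (le_cellularClosure _ J A hA) hW f
    rw [hSW b hV, comp_zero]

end Acyclics

end BousfieldLocalization

/-- Bousfield localisation with respect to a homology theory `K` exists on a compactly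
generated triangulated category: every `X` sits in a distinguished triangle
`CX → X → LX → ΣCX` with `CX ∈ 𝒰 = ker K_*` and `LX ∈ 𝒰^⊥`; moreover `CX → X` is terminal
in `𝒰/X` and `X → LX` is initial in `X/𝒰^⊥`. -/
theorem stmt18 (C : Type u) [Category.{v} C] [HasZeroObject C] [Preadditive C]
    [HasShift C ℤ] [∀ n : ℤ, (CategoryTheory.shiftFunctor C n).Additive]
    [Pretriangulated C] [HasCoproducts.{v} C]
    -- `𝒯` is compactly generated:
    (hsmall : EssentiallySmall.{v} (ObjectProperty.FullSubcategory (IsCompactObj C)))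
    (hgen : ∀ (P : C → Prop),
      (∀ Z : C, IsZero Z → P Z) →
      (∀ ⦃X Y : C⦄, (X ≅ Y) → P X → P Y) →
      (∀ (X : C) (n : ℤ), P X → P (X⟦n⟧)) →
      (∀ (T : Triangle C), T ∈ (distTriang C) → P T.obj₁ → P T.obj₃ → P T.obj₂) →
      (∀ ⦃X Y : C⦄ (i : X ⟶ Y) (r : Y ⟶ X), i ≫ r = 𝟙 X → P Y → P X) →
      (∀ ⦃α : Type v⦄ (f : α → C), (∀ a, P (f a)) → P (∐ f)) →
      (∀ T : C, IsCompactObj C T → P T) → ∀ X, P X)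
    -- `K` is a homology theory:
    (K : C ⥤ AddCommGrpCat.{v}) [K.Additive]
    [∀ α : Type v, PreservesColimitsOfShape (Discrete α) K]
    (hexact : ∀ (T : Triangle C), T ∈ (distTriang C) →
      Function.Exact (K.map T.mor₁) (K.map T.mor₂))
    (X : C) :
    ∃ (CX LX : C) (q : CX ⟶ X) (j : X ⟶ LX) (d : LX ⟶ CX⟦(1 : ℤ)⟧),
      Triangle.mk q j d ∈ (distTriang C) ∧
      KAcyclic C K CX ∧
      (∀ U : C, KAcyclic C K U → ∀ f : U ⟶ LX, f = 0) ∧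
      (∀ U : C, KAcyclic C K U → ∀ g : U ⟶ X, ∃! h : U ⟶ CX, h ≫ q = g) ∧
      (∀ Z : C, (∀ U : C, KAcyclic C K U → ∀ f : U ⟶ Z, f = 0) →
        ∀ g : X ⟶ Z, ∃! h : LX ⟶ Z, j ≫ h = g) := by
  have hC : BousfieldLocalization.CompactsGenerate C := fun P _ _ _ hP =>
    top_unique fun Y _ => hgen P (fun _ hZ => P.prop_of_isZero hZ)
      (fun _ _ e h => P.prop_of_iso e h) (fun Z n => P.le_shift n Z)
      (fun T hT h₁ h₃ => P.ext_of_isTriangulatedClosed₂ T hT h₁ h₃)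
      (fun _ _ i r h => P.prop_of_retract ⟨i, r, h⟩)
      (fun _ f => BousfieldLocalization.prop_sigma P f) hP Y
  have : ObjectProperty.EssentiallySmall.{v} (BousfieldLocalization.compacts C) :=
    ObjectProperty.exists_equivalence_iff.{v} _ |>.1 ⟨_, _, ⟨equivSmallModel _⟩⟩
  have : K.IsHomological := BousfieldLocalization.isHomological_of_forall_exact K hexact
  obtain ⟨S, hS⟩ := hC.exists_perfectlyGenerates K
  obtain ⟨CX, LX, q, j, d, hT, hCX, hLX⟩ := hS.exists_distTriang_rightOrthogonal X
  exact ⟨CX, LX, q, j, d, hT, hCX, fun U hU f => hLX f hU,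
    fun U hU => BousfieldLocalization.existsUnique_lift_of_leftOrthogonal
      K.homologicalKernel.rightOrthogonal hT hLX fun _ f hZ => hZ f hU,
    fun Z hZ => BousfieldLocalization.existsUnique_desc_of_rightOrthogonal
      K.homologicalKernel hT hCX fun U f hU => hZ U hU f⟩
end

section
/- Let 𝒯 be a compactly generated triangulated category with small coproducts and let K : 𝒯 → Ab be a homology theory. Put 𝒰 = ker(K_*) = {X : K(Σ^n X) = 0 for all n ∈ ℤ}. Then 𝒰 is a localising subcategory of 𝒯 (thick, triangulated, and closed under small coproducts), and for every object X the comma category X/𝒰 has a weakly initial set; consequently the Verdier quotient 𝒯/𝒰 has small hom sets. -/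
/-!
The objects `X` at which `K_*` is the colimit of its values on the compact objects over `X` form a
localising subcategory containing the compact objects, hence are all objects. So every element of
`K_n(X)` comes from one of a small set of compact objects, and the cofibres of maps from small
coproducts of these to `X` give a small family of maps `X ⟶ N`, each inducing zero on `K_*`, through
which every map `X ⟶ V` with `V` acyclic factors: choose lifts to the fibre of `X ⟶ V`, which has
the homology of `X`. Iterating gives a small family of sequences `X ⟶ N₁ ⟶ N₂ ⟶ ⋯` of maps which
are zero on homology, so that their telescopes are acyclic; `X ⟶ V` factors through one of these.
Finally, the fibres of a weakly initial family `X ⟶ U i` are cofinal among the denominators with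
target `X`, which bounds the right fractions representing morphisms out of `X` in `𝒯/𝒰`.
-/

open CategoryTheory Limits Pretriangulated Opposite

universe v u

/-- The class of morphisms whose cone lies in the subcategory of objects satisfying `P`:
inverting these gives the Verdier quotient `𝒯/𝒰`. -/
def coneW (C : Type u) [Category.{v} C] [HasZeroObject C] [Preadditive C] [HasShift C ℤ]
    [∀ n : ℤ, (CategoryTheory.shiftFunctor C n).Additive] [Pretriangulated C]
    (P : C → Prop) : MorphismProperty C := fun X Y f =>
  ∃ (Z : C) (g : Y ⟶ Z) (h : Z ⟶ X⟦(1 : ℤ)⟧),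
    Triangle.mk f g h ∈ (distTriang C) ∧ P Z

section Coproducts

lemma map_sigma_hom_ext {C D : Type*} [Category* C] [Category* D] {F : C ⥤ D} {α : Type*}
    {X : α → C} [HasCoproduct X] [PreservesColimit (Discrete.functor X) F] {Z : D}
    {f g : F.obj (∐ X) ⟶ Z} (h : ∀ a, F.map (Sigma.ι X a) ≫ f = F.map (Sigma.ι X a) ≫ g) :
    f = g :=
  Cofan.IsColimit.hom_ext (isColimitCofanMkObjOfIsColimit F _ _ (coproductIsCoproduct X)) _ _ h

variable {C : Type*} [Category* C] [Preadditive C] {α : Type*} (X : α → C) [HasCoproduct X]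

open Classical in
/-- The idempotent endomorphism of a coproduct whose image is the finite subcoproduct indexed
by `s`. -/
noncomputable def truncation (s : Finset α) : ∐ X ⟶ ∐ X :=
  ∑ a ∈ s, Sigma.π X a ≫ Sigma.ι X a

variable {X}

lemma ι_comp_truncation {s : Finset α} {a : α} (ha : a ∈ s) :
    Sigma.ι X a ≫ truncation X s = Sigma.ι X a := by
  classical
  rw [truncation, Preadditive.comp_sum, Finset.sum_eq_single_of_mem a ha fun b _ hb => by
    rw [Sigma.ι_π_of_ne_assoc _ hb.symm, zero_comp], Sigma.ι_π_eq_id_assoc]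

lemma ι_comp_truncation_of_notMem {s : Finset α} {a : α} (ha : a ∉ s) :
    Sigma.ι X a ≫ truncation X s = 0 := by
  classical
  rw [truncation, Preadditive.comp_sum]
  exact Finset.sum_eq_zero fun b hb => by
    rw [Sigma.ι_π_of_ne_assoc _ (ne_of_mem_of_not_mem hb ha).symm, zero_comp]

lemma truncation_comp_truncation {s t : Finset α} (hst : s ⊆ t) :
    truncation X s ≫ truncation X t = truncation X s := by
  conv_lhs => rw [truncation, Preadditive.sum_comp]
  exact Finset.sum_congr rfl fun a ha => by rw [Category.assoc, ι_comp_truncation (hst ha)]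

lemma exists_retract_truncation [HasFiniteBiproducts C] (s : Finset α) :
    ∃ r : Retract (⨁ fun a : s => X a) (∐ X), r.r ≫ r.i = truncation X s := by
  classical
  refine ⟨{ i := biproduct.desc fun a => Sigma.ι X a
            r := Sigma.desc fun a => if h : a ∈ s then biproduct.ι (fun a : s => X a) ⟨a, h⟩ else 0
            retract := ?_ }, ?_⟩
  · exact biproduct.hom_ext' _ _ fun a => by simp
  · ext a
    by_cases h : a ∈ s
    · simp [h, ι_comp_truncation]
    · simp [h, ι_comp_truncation_of_notMem]

lemma exists_sigmaComparison_comp_eq_truncation {D : Type*} [Category* D] [Preadditive D]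
    (F : C ⥤ D) [F.Additive] [HasCoproduct fun a => F.obj (X a)] (s : Finset α) :
    ∃ r : F.obj (∐ X) ⟶ ∐ (fun a => F.obj (X a)),
      sigmaComparison F X ≫ r = truncation (fun a => F.obj (X a)) s ∧
        r ≫ sigmaComparison F X = F.map (truncation X s) := by
  classical
  have hπ (a : α) : sigmaComparison F X ≫ F.map (Sigma.π X a) =
      Sigma.π (fun a => F.obj (X a)) a := by
    ext b
    rw [ι_comp_sigmaComparison_assoc, ← F.map_comp]
    by_cases h : b = a
    · subst h
      rw [Sigma.ι_π_eq_id, Sigma.ι_π_eq_id, F.map_id]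
    · rw [Sigma.ι_π_of_ne _ h, Sigma.ι_π_of_ne _ h, F.map_zero]
  refine ⟨∑ a ∈ s, F.map (Sigma.π X a) ≫ Sigma.ι (fun a => F.obj (X a)) a, ?_, ?_⟩
  · simp only [truncation, Preadditive.comp_sum, reassoc_of% hπ]
  · simp only [truncation, Preadditive.sum_comp, Category.assoc, ι_comp_sigmaComparison,
      F.map_sum, F.map_comp]

universe w

lemma exists_map_truncation_eq {α : Type w} (X : α → C) [HasCoproduct X]
    (F : C ⥤ AddCommGrpCat.{w}) [PreservesColimit (Discrete.functor X) F] (x : F.obj (∐ X)) :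
    ∃ s : Finset α, F.map (truncation X s) x = x := by
  classical
  let N : AddSubgroup (F.obj (∐ X)) :=
    { carrier := {x | ∃ s : Finset α, F.map (truncation X s) x = x}
      zero_mem' := ⟨∅, map_zero _⟩
      neg_mem' := fun ⟨s, hs⟩ => ⟨s, by rw [map_neg, hs]⟩
      add_mem' := by
        rintro x y ⟨s, hs⟩ ⟨t, ht⟩
        refine ⟨s ∪ t, ?_⟩
        rw [map_add, ← hs, ← ht, ← F.map_comp_apply, ← F.map_comp_apply,
          truncation_comp_truncation Finset.subset_union_left,
          truncation_comp_truncation Finset.subset_union_right] }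
  have hN : AddCommGrpCat.ofHom (QuotientAddGroup.mk' N) = 0 := by
    refine map_sigma_hom_ext fun a => ?_
    ext y
    refine (QuotientAddGroup.eq_zero_iff (F.map (Sigma.ι X a) y)).2 ⟨{a}, ?_⟩
    rw [← F.map_comp_apply, ι_comp_truncation (Finset.mem_singleton_self a)]
  exact (QuotientAddGroup.eq_zero_iff x).1 (ConcreteCategory.congr_hom hN x)

lemma preservesCoproduct_of_exists_map_truncation_eq {α : Type w} {X : α → C} [HasCoproduct X]
    {F : C ⥤ AddCommGrpCat.{w}} [F.Additive]
    (h : ∀ x : F.obj (∐ X), ∃ s : Finset α, F.map (truncation X s) x = x) :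
    PreservesColimit (Discrete.functor X) F := by
  suffices IsIso (sigmaComparison F X) from PreservesCoproduct.of_iso_comparison F X
  rw [ConcreteCategory.isIso_iff_bijective]
  constructor
  · rw [injective_iff_map_eq_zero]
    intro y hy
    obtain ⟨s, hs⟩ := exists_map_truncation_eq (fun a => F.obj (X a)) (𝟭 AddCommGrpCat.{w}) y
    obtain ⟨r, hr, -⟩ := exists_sigmaComparison_comp_eq_truncation (X := X) F s
    rw [← hs, Functor.id_map, ← hr, ConcreteCategory.comp_apply, hy, map_zero]
  · intro x
    obtain ⟨s, hs⟩ := h x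
    obtain ⟨r, -, hr⟩ := exists_sigmaComparison_comp_eq_truncation (X := X) F s
    exact ⟨r x, by rw [← ConcreteCategory.comp_apply, hr, hs]⟩

end Coproducts

section Compact

variable {C : Type u} [Category.{v} C] [Preadditive C] [HasCoproducts.{v} C]

lemma isCompactObj_iff (T : C) :
    IsCompactObj C T ↔
      ∀ (α : Type v) (X : α → C) (f : T ⟶ ∐ X), ∃ s : Finset α, f ≫ truncation X s = f := by
  constructor
  · intro hT α X f
    obtain ⟨_⟩ := hT α
    exact exists_map_truncation_eq X (preadditiveCoyoneda.obj (op T)) f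
  · intro hT α
    have (X : α → C) :
        PreservesColimit (Discrete.functor X) (preadditiveCoyoneda.obj (op T)) :=
      preservesCoproduct_of_exists_map_truncation_eq (hT α X)
    exact ⟨preservesColimitsOfShape_of_discrete _⟩

instance : ObjectProperty.IsClosedUnderIsomorphisms (IsCompactObj C) where
  of_iso e hX α := by
    obtain ⟨_⟩ := hX α
    exact ⟨preservesColimitsOfShape_of_natIso (preadditiveCoyoneda.mapIso e.symm.op)⟩

instance [HasZeroObject C] : ObjectProperty.ContainsZero (IsCompactObj C) where
  exists_zero := ⟨_, isZero_zero C, (isCompactObj_iff _).2 fun _ _ _ =>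
    ⟨∅, (isZero_zero C).eq_of_src _ _⟩⟩

variable [HasShift C ℤ] [∀ n : ℤ, (CategoryTheory.shiftFunctor C n).Additive]

instance : ObjectProperty.IsStableUnderShift (IsCompactObj C) ℤ where
  isStableUnderShiftBy n :=
    { le_shift T hT α := by
        obtain ⟨_⟩ := hT α
        have : (shiftEquiv C n).functor.Additive := inferInstanceAs (shiftFunctor C n).Additive
        let e : shiftFunctor C (-n) ⋙ preadditiveCoyoneda.obj (op T) ≅
            preadditiveCoyoneda.obj (op (T⟦n⟧)) :=
          NatIso.ofComponents (fun X =>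
            ((shiftEquiv C n).toAdjunction.homAddEquiv T X).symm.toAddCommGrpIso)
            fun f => by
              ext g
              exact (shiftEquiv C n).toAdjunction.homEquiv_naturality_right_symm g f
        exact ⟨preservesColimitsOfShape_of_natIso e⟩ }

variable [HasZeroObject C] [Pretriangulated C]

instance : ObjectProperty.IsTriangulatedClosed₂ (IsCompactObj C) := .mk' fun D hD h₁ h₃ => by
  classical
  rw [isCompactObj_iff] at h₁ h₃ ⊢
  intro α X f
  obtain ⟨s, hs⟩ := h₁ α X (D.mor₁ ≫ f)
  obtain ⟨k, hk⟩ := D.yoneda_exact₂ hD (f - f ≫ truncation X s) (by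
    rw [Preadditive.comp_sub, sub_eq_zero, ← Category.assoc, hs])
  obtain ⟨t, ht⟩ := h₃ α X k
  refine ⟨s ∪ t, ?_⟩
  rw [sub_eq_iff_eq_add] at hk
  conv_lhs => rw [hk, ← ht, Preadditive.add_comp, Category.assoc, Category.assoc, Category.assoc,
    truncation_comp_truncation Finset.subset_union_left,
    truncation_comp_truncation Finset.subset_union_right, ht, ← hk]

instance : ObjectProperty.IsTriangulated (IsCompactObj C) where

end Compact

section Determined

/-- `K(X)` is determined by `Q` if it is the colimit of the groups `K(T)` over the morphisms
`T ⟶ X` with `T` in `Q`. This is stated on elements, as is appropriate when that colimit is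
filtered, e.g. when `Q` is a triangulated subcategory. -/
structure IsDeterminedBy {C : Type*} [Category* C] (Q : ObjectProperty C)
    (K : C ⥤ AddCommGrpCat.{v}) (X : C) : Prop where
  exists_lift (x : K.obj X) : ∃ (T : C) (_ : Q T) (f : T ⟶ X) (t : K.obj T), K.map f t = x
  exists_factorization {T : C} (hT : Q T) (f : T ⟶ X) (t : K.obj T) (ht : K.map f t = 0) :
    ∃ (T' : C) (_ : Q T') (a : T ⟶ T') (b : T' ⟶ X), a ≫ b = f ∧ K.map a t = 0

namespace IsDeterminedBy

section

variable {C : Type*} [Category* C] {Q : ObjectProperty C} {K : C ⥤ AddCommGrpCat.{v}}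

lemma of_prop {T : C} (hT : Q T) : IsDeterminedBy Q K T where
  exists_lift t := ⟨T, hT, 𝟙 T, t, K.map_id_apply T t⟩
  exists_factorization _ f _ ht := ⟨T, hT, f, 𝟙 T, Category.comp_id f, ht⟩

lemma of_retract {X Y : C} (r : Retract X Y) (hY : IsDeterminedBy Q K Y) :
    IsDeterminedBy Q K X where
  exists_lift x := by
    obtain ⟨T, hT, f, t, ht⟩ := hY.exists_lift (K.map r.i x)
    refine ⟨T, hT, f ≫ r.r, t, ?_⟩
    rw [K.map_comp_apply, ht, ← K.map_comp_apply, r.retract, K.map_id_apply]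
  exists_factorization hT f t ht := by
    obtain ⟨T', hT', a, b, hab, ha⟩ := hY.exists_factorization hT (f ≫ r.i) t
      (by rw [K.map_comp_apply, ht, map_zero])
    exact ⟨T', hT', a, b ≫ r.r, by rw [reassoc_of% hab, r.retract, Category.comp_id], ha⟩

lemma of_iso {X Y : C} (e : X ≅ Y) (hX : IsDeterminedBy Q K X) : IsDeterminedBy Q K Y :=
  hX.of_retract e.symm.retract

end

lemma sigma {C : Type u} [Category.{v} C] [Preadditive C] [HasFiniteBiproducts C]
    [HasCoproducts.{v} C] {Q : ObjectProperty C} {K : C ⥤ AddCommGrpCat.{v}}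
    (hQ : Q ≤ IsCompactObj C) {α : Type v} (X : α → C)
    [PreservesColimit (Discrete.functor X) K]
    (hX : ∀ s : Finset α, IsDeterminedBy Q K (⨁ fun a : s => X a)) :
    IsDeterminedBy Q K (∐ X) where
  exists_lift x := by
    obtain ⟨s, hs⟩ := exists_map_truncation_eq X K x
    obtain ⟨r, hr⟩ := exists_retract_truncation (X := X) s
    obtain ⟨T, hT, f, t, ht⟩ := (hX s).exists_lift (K.map r.r x)
    refine ⟨T, hT, f ≫ r.i, t, ?_⟩
    rw [K.map_comp_apply, ht, ← K.map_comp_apply, hr, hs]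
  exists_factorization {T} hT f t ht := by
    obtain ⟨s, hs⟩ := (isCompactObj_iff T).1 (hQ T hT) α X f
    obtain ⟨r, hr⟩ := exists_retract_truncation (X := X) s
    obtain ⟨T', hT', a, b, hab, ha⟩ := (hX s).exists_factorization hT (f ≫ r.r) t
      (by rw [K.map_comp_apply, ht, map_zero])
    exact ⟨T', hT', a, b ≫ r.i, by rw [reassoc_of% hab, hr, hs], ha⟩

end IsDeterminedBy

lemma map_zero_apply {C : Type*} [Category* C] [HasZeroMorphisms C] (K : C ⥤ AddCommGrpCat.{v})
    [K.PreservesZeroMorphisms] {X Y : C} (x : K.obj X) : K.map (0 : X ⟶ Y) x = 0 := by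
  rw [K.map_zero]
  rfl

variable {C : Type*} [Category* C] [Preadditive C] [HasZeroObject C] [HasShift C ℤ]
  [∀ n : ℤ, (CategoryTheory.shiftFunctor C n).Additive] [Pretriangulated C]

lemma isHomological_of_exact (K : C ⥤ AddCommGrpCat.{v}) [K.PreservesZeroMorphisms]
    (hK : ∀ T ∈ distTriang C, Function.Exact (K.map T.mor₁) (K.map T.mor₂)) :
    K.IsHomological where
  exact T hT := (ShortComplex.ab_exact_iff_function_exact _).2 (hK T hT)

lemma exists_map_mor₁_eq (K : C ⥤ AddCommGrpCat.{v}) [K.IsHomological] {D : Triangle C}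
    (hD : D ∈ distTriang C) (y : K.obj D.obj₂) (hy : K.map D.mor₂ y = 0) :
    ∃ x : K.obj D.obj₁, K.map D.mor₁ x = y :=
  (ShortComplex.ab_exact_iff _).1 (K.map_distinguished_exact D hD) y hy

variable {Q : ObjectProperty C}

lemma exists_prop_biprod_lift [Q.IsTriangulatedClosed₂] [Q.IsClosedUnderIsomorphisms]
    (K : C ⥤ AddCommGrpCat.{v}) {X S T : C} (hS : Q S) (hT : Q T) (f : S ⟶ X) (g : T ⟶ X)
    (s : K.obj S) (t : K.obj T) :
    ∃ (U : C) (_ : Q U) (h : U ⟶ X) (w : K.obj U), K.map h w = K.map f s + K.map g t := by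
  refine ⟨S ⊞ T, Q.ext_of_isTriangulatedClosed₂ _ (binaryBiproductTriangle_distinguished S T) hS hT,
    biprod.desc f g, K.map biprod.inl s + K.map biprod.inr t, ?_⟩
  rw [map_add, ← K.map_comp_apply, ← K.map_comp_apply, biprod.inl_desc, biprod.inr_desc]

lemma exists_weakPushout [Q.IsTriangulated] [Q.IsClosedUnderIsomorphisms] {S T R Y : C}
    (hS : Q S) (hT : Q T) (hR : Q R) {f : S ⟶ T} {g : S ⟶ R} {p : T ⟶ Y} {q : R ⟶ Y}
    (h : f ≫ p = g ≫ q) :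
    ∃ (U : C) (_ : Q U) (a : T ⟶ U) (b : R ⟶ U) (l : U ⟶ Y), f ≫ a = g ≫ b ∧ a ≫ l = p := by
  have hTR : Q (T ⊞ R) :=
    Q.ext_of_isTriangulatedClosed₂ _ (binaryBiproductTriangle_distinguished T R) hT hR
  obtain ⟨U, hU, m, δ, hm⟩ := Q.distinguished_cocone_triangle (biprod.lift f (-g)) hS hTR
  have hfg : biprod.lift f (-g) ≫ m = 0 := comp_distTriang_mor_zero₁₂ _ hm
  obtain ⟨l, hl⟩ : ∃ l, biprod.desc p q = m ≫ l :=
    Triangle.yoneda_exact₂ _ hm _ (show biprod.lift f (-g) ≫ biprod.desc p q = 0 by simp [h])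
  refine ⟨U, hU, biprod.inl ≫ m, biprod.inr ≫ m, l, ?_, ?_⟩
  · rw [biprod.lift_eq, Preadditive.neg_comp, ← sub_eq_add_neg, Preadditive.sub_comp,
      sub_eq_zero] at hfg
    simpa only [Category.assoc] using hfg
  · rw [Category.assoc, ← hl, biprod.inl_desc]

section

variable {K : C ⥤ AddCommGrpCat.{v}} [K.IsHomological]

lemma exists_fiber_lift [Q.IsTriangulatedClosed₁] {D : Triangle C} (hD : D ∈ distTriang C)
    (h₃ : IsDeterminedBy Q K D.obj₃) {T : C} (hT : Q T) (f : T ⟶ D.obj₂) (t : K.obj T)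
    (ht : K.map (f ≫ D.mor₂) t = 0) :
    ∃ (S : C) (_ : Q S) (σ : S ⟶ T) (a : S ⟶ D.obj₁) (s : K.obj S),
      σ ≫ f = a ≫ D.mor₁ ∧ K.map σ s = t := by
  obtain ⟨T', hT', c, d, hcd, hc⟩ := h₃.exists_factorization hT (f ≫ D.mor₂) t ht
  obtain ⟨S, hS, σ, δ, hσ⟩ := Q.distinguished_cocone_triangle₁ c hT hT'
  obtain ⟨a, ha, -⟩ := complete_distinguished_triangle_morphism₁ _ _ hσ hD f d hcd
  obtain ⟨s, hs⟩ := exists_map_mor₁_eq K hσ t hc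
  exact ⟨S, hS, σ, a, s, ha, hs⟩

lemma exists_fiber_lift_of_map_eq_zero [Q.IsTriangulated] [Q.IsClosedUnderIsomorphisms]
    {D : Triangle C} (hD : D ∈ distTriang C) (h₃ : IsDeterminedBy Q K D.obj₃)
    (h₃' : IsDeterminedBy Q K (D.obj₃⟦(-1 : ℤ)⟧)) {T : C} (hT : Q T) (f : T ⟶ D.obj₂)
    (t : K.obj T) (ht : K.map f t = 0) :
    ∃ (S : C) (_ : Q S) (σ : S ⟶ T) (a : S ⟶ D.obj₁) (s : K.obj S),
      σ ≫ f = a ≫ D.mor₁ ∧ K.map σ s = t ∧ K.map a s = 0 := by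
  obtain ⟨S, hS, σ, a, s, ha, hs⟩ := exists_fiber_lift hD h₃ hT f t
    (by rw [K.map_comp_apply, ht, map_zero])
  have hD' := inv_rot_of_distTriang _ hD
  let j : D.obj₃⟦(-1 : ℤ)⟧ ⟶ D.obj₁ := D.invRotate.mor₁
  have hj : j ≫ D.mor₁ = 0 := comp_distTriang_mor_zero₁₂ _ hD'
  obtain ⟨z, hz⟩ : ∃ z, K.map j z = K.map a s :=
    exists_map_mor₁_eq K hD' (K.map a s) (show K.map D.mor₁ (K.map a s) = 0 by
      rw [← K.map_comp_apply, ← ha, K.map_comp_apply, hs, ht])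
  obtain ⟨R, hR, r, ρ, hρ⟩ := h₃'.exists_lift z
  -- `K.map a s` comes from `D.obj₃⟦-1⟧`, so subtracting that contribution does not affect `σ ≫ f`.
  refine ⟨S ⊞ R, Q.ext_of_isTriangulatedClosed₂ _ (binaryBiproductTriangle_distinguished S R) hS hR,
    biprod.desc σ 0, biprod.desc a (r ≫ j), K.map biprod.inl s - K.map biprod.inr ρ, ?_, ?_, ?_⟩
  · ext <;> simp [ha, hj]
  · rw [map_sub, ← K.map_comp_apply, ← K.map_comp_apply, biprod.inl_desc, biprod.inr_desc, hs,
      map_zero_apply, sub_zero]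
  · rw [map_sub, ← K.map_comp_apply, ← K.map_comp_apply, biprod.inl_desc, biprod.inr_desc,
      K.map_comp_apply r, hρ, hz, sub_self]

lemma IsDeterminedBy.obj₂ [Q.IsTriangulated] [Q.IsClosedUnderIsomorphisms]
    {D : Triangle C} (hD : D ∈ distTriang C)
    (h₁ : IsDeterminedBy Q K D.obj₁) (h₁' : IsDeterminedBy Q K (D.obj₁⟦(1 : ℤ)⟧))
    (h₃ : IsDeterminedBy Q K D.obj₃) (h₃' : IsDeterminedBy Q K (D.obj₃⟦(-1 : ℤ)⟧)) :
    IsDeterminedBy Q K D.obj₂ where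
  exists_lift y := by
    obtain ⟨T, hT, f, t, hf⟩ := h₃.exists_lift (K.map D.mor₂ y)
    obtain ⟨S, hS, σ, a, s, ha, hs⟩ : ∃ (S : C) (_ : Q S) (σ : S ⟶ T) (a : S ⟶ D.obj₂)
        (s : K.obj S), σ ≫ f = a ≫ D.mor₂ ∧ K.map σ s = t :=
      exists_fiber_lift (rot_of_distTriang _ hD) h₁' hT f t
        (show K.map (f ≫ D.mor₃) t = 0 by
          rw [K.map_comp_apply, hf, ← K.map_comp_apply, comp_distTriang_mor_zero₂₃ _ hD,
            map_zero_apply])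
    obtain ⟨x, hx⟩ := exists_map_mor₁_eq K hD (y - K.map a s) (by
      rw [map_sub, ← hf, ← hs, ← K.map_comp_apply, ← K.map_comp_apply, ha, sub_self])
    obtain ⟨R, hR, r, ρ, rfl⟩ := h₁.exists_lift x
    rw [eq_sub_iff_add_eq, ← K.map_comp_apply] at hx
    rw [← hx]
    exact exists_prop_biprod_lift K hR hS _ _ _ _
  exists_factorization {T} hT f t ht := by
    obtain ⟨S, hS, σ, a, s, ha, hs, has⟩ :=
      exists_fiber_lift_of_map_eq_zero hD h₃ h₃' hT f t ht
    obtain ⟨R, hR, q, p, rfl, hq⟩ := h₁.exists_factorization hS a s has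
    obtain ⟨U, hU, b, c, l, hbc, hb⟩ :=
      exists_weakPushout hS hT hR (ha.trans (Category.assoc q p D.mor₁))
    refine ⟨U, hU, b, l, hb, ?_⟩
    rw [← hs, ← K.map_comp_apply, hbc, K.map_comp_apply, hq, map_zero]

end

end Determined

section HomologyDetermined

/-- The objects all of whose shifts have their value under `K` determined by `Q`, i.e. those at
which the whole homology theory `K_*` is determined by `Q`. -/
def homologyDetermined {C : Type*} [Category* C] [HasShift C ℤ] (Q : ObjectProperty C)
    (K : C ⥤ AddCommGrpCat.{v}) : ObjectProperty C :=
  fun X => ∀ m : ℤ, IsDeterminedBy Q K (X⟦m⟧)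

lemma le_homologyDetermined {C : Type*} [Category* C] [HasShift C ℤ] (Q : ObjectProperty C)
    [Q.IsStableUnderShift ℤ] (K : C ⥤ AddCommGrpCat.{v}) : Q ≤ homologyDetermined Q K :=
  fun T hT m => .of_prop (Q.le_shift m T hT)

instance {C : Type*} [Category* C] [HasShift C ℤ] (Q : ObjectProperty C)
    (K : C ⥤ AddCommGrpCat.{v}) : (homologyDetermined Q K).IsStableUnderRetracts where
  of_retract r hY m := (hY m).of_retract (r.map (shiftFunctor _ m))

variable {C : Type u} [Category.{v} C] [Preadditive C] [HasZeroObject C] [HasShift C ℤ]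
  [∀ n : ℤ, (CategoryTheory.shiftFunctor C n).Additive] [Pretriangulated C]
  {Q : ObjectProperty C} [Q.IsTriangulated] [Q.IsClosedUnderIsomorphisms]
  {K : C ⥤ AddCommGrpCat.{v}} [K.IsHomological]

instance : (homologyDetermined Q K).IsTriangulated where
  exists_zero := ⟨_, isZero_zero C, le_homologyDetermined Q K _ (Q.prop_of_isZero (isZero_zero C))⟩
  isStableUnderShiftBy n :=
    ⟨fun X hX m => (hX (n + m)).of_iso ((shiftFunctorAdd C n m).app X)⟩
  toIsTriangulatedClosed₂ := .mk' fun D hD h₁ h₃ m =>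
    .obj₂ (D.shift_distinguished hD m) (h₁ m)
      ((h₁ (m + 1)).of_iso ((shiftFunctorAdd C m 1).app D.obj₁)) (h₃ m)
      ((h₃ (m + -1)).of_iso ((shiftFunctorAdd C m (-1)).app D.obj₃))

lemma homologyDetermined_sigma [HasCoproducts.{v} C] (hQ : Q ≤ IsCompactObj C) {α : Type v}
    [PreservesColimitsOfShape (Discrete α) K] {X : α → C}
    (hX : ∀ a, homologyDetermined Q K (X a)) : homologyDetermined Q K (∐ X) := fun m => by
  refine .of_iso (PreservesCoproduct.iso (shiftFunctor C m) X).symm (.sigma hQ _ fun s => ?_)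
  have h : homologyDetermined Q K (⨁ fun a : s => (X a)⟦m⟧) :=
    ObjectProperty.prop_of_isLimit_fan _ (biproduct.isLimit _)
      fun a => ObjectProperty.le_shift _ m _ (hX a)
  exact (h 0).of_iso ((shiftFunctorZero C ℤ).app _)

end HomologyDetermined

section Acyclic

lemma isZero_of_retract {A : Type*} [Category* A] [HasZeroMorphisms A] {X Y : A} (r : Retract X Y)
    (hY : IsZero Y) : IsZero X := by
  rw [IsZero.iff_id_eq_zero, ← r.retract, hY.eq_of_src r.r 0, comp_zero]

variable {C A : Type*} [Category* C] [HasShift C ℤ] [Category* A]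

instance [HasZeroMorphisms A] (K : C ⥤ A) : K.homologicalKernel.IsStableUnderRetracts where
  of_retract r hY n := isZero_of_retract (r.map (shiftFunctor C n ⋙ K)) (hY n)

lemma homologicalKernel_sigma [HasZeroMorphisms A] {K : C ⥤ A} {α : Type*} {X : α → C}
    [HasCoproduct X] [PreservesColimitsOfShape (Discrete α) K]
    (hX : ∀ a, K.homologicalKernel (X a)) : K.homologicalKernel (∐ X) := fun n =>
  (IsZero.iff_id_eq_zero _).2 <| map_sigma_hom_ext (F := shiftFunctor C n ⋙ K) fun a =>
    (hX a n).eq_of_src _ _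

variable [Preadditive C] [HasZeroObject C] [∀ n : ℤ, (CategoryTheory.shiftFunctor C n).Additive]
  [Pretriangulated C]

section

variable [Abelian A] {K : C ⥤ A} [K.IsHomological]

lemma homologicalKernel_trW_iff {X Y : C} (f : X ⟶ Y) :
    K.homologicalKernel.trW f ↔ ∀ n : ℤ, IsIso (K.map (f⟦n⟧')) := by
  let := Functor.ShiftSequence.tautological K ℤ
  exact K.mem_homologicalKernel_trW_iff f

instance : K.homologicalKernel.trW.IsMultiplicative where
  id_mem X := (homologicalKernel_trW_iff _).2 fun n => by
    rw [(shiftFunctor C n).map_id, K.map_id]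
    infer_instance
  comp_mem f g hf hg := by
    rw [homologicalKernel_trW_iff] at hf hg ⊢
    intro n
    have := hf n
    have := hg n
    rw [Functor.map_comp, Functor.map_comp]
    infer_instance

end

lemma surjective_map_shift_mor₁ {K : C ⥤ AddCommGrpCat.{v}} [K.IsHomological] {D : Triangle C}
    (hD : D ∈ distTriang C) (h₃ : K.homologicalKernel D.obj₃) (n : ℤ) :
    Function.Surjective (K.map (D.mor₁⟦n⟧')) := fun x => by
  let := Functor.ShiftSequence.tautological K ℤ
  have := AddCommGrpCat.subsingleton_of_isZero (h₃ n)
  exact (ShortComplex.ab_exact_iff _).1 (K.homologySequence_exact₂ D hD n) x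
    (Subsingleton.elim (α := K.obj (D.obj₃⟦n⟧)) _ _)

end Acyclic

section Phantom

/-- The `K`-phantom morphisms: those which induce zero on all the homology groups `K_n`. -/
def phantoms {C A : Type*} [Category* C] [HasShift C ℤ] [Category* A] [HasZeroMorphisms A]
    (K : C ⥤ A) : MorphismProperty C :=
  fun _ _ f => ∀ n : ℤ, K.map (f⟦n⟧') = 0

variable {C : Type*} [Category* C] [HasShift C ℤ]

lemma phantoms_sigmaDesc {A : Type*} [Category* A] [HasZeroMorphisms A] {K : C ⥤ A} {α : Type*}
    [PreservesColimitsOfShape (Discrete α) K] {X : α → C} [HasCoproduct X] {Y : C}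
    {f : ∀ a, X a ⟶ Y} (hf : ∀ a, phantoms K (f a)) : phantoms K (Sigma.desc f) := fun n =>
  map_sigma_hom_ext (F := shiftFunctor C n ⋙ K) fun a => by
    rw [Functor.comp_map, ← K.map_comp, ← Functor.map_comp, Sigma.ι_desc, hf a n, comp_zero]

variable [Preadditive C] [HasZeroObject C] [∀ n : ℤ, (CategoryTheory.shiftFunctor C n).Additive]
  [Pretriangulated C]

lemma phantoms_mor₂ {K : C ⥤ AddCommGrpCat.{v}} [K.PreservesZeroMorphisms] {D : Triangle C}
    (hD : D ∈ distTriang C) (h : ∀ n : ℤ, Function.Surjective (K.map (D.mor₁⟦n⟧'))) :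
    phantoms K D.mor₂ := fun n => by
  ext x
  obtain ⟨y, rfl⟩ := h n x
  rw [← K.map_comp_apply, ← Functor.map_comp, comp_distTriang_mor_zero₁₂ _ hD, Functor.map_zero,
    map_zero_apply]
  rfl

lemma exists_acyclic_telescope {A : Type*} [Category* A] [Abelian A]
    [HasColimitsOfShape (Discrete ℕ) C] {K : C ⥤ A} [K.IsHomological]
    [PreservesColimitsOfShape (Discrete ℕ) K] (X : ℕ → C) (e : ∀ n, X n ⟶ X (n + 1))
    (he : ∀ n, phantoms K (e n)) :
    ∃ (U : C) (u : X 0 ⟶ U), K.homologicalKernel U ∧ ∀ (V : C) (g : ∀ n, X n ⟶ V),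
      (∀ n, e n ≫ g (n + 1) = g n) → ∃ h : U ⟶ V, u ≫ h = g 0 := by
  let φ : ∐ X ⟶ ∐ X := Sigma.desc fun n => e n ≫ Sigma.ι X (n + 1)
  have hφ : phantoms K φ := phantoms_sigmaDesc fun a n => by
    rw [Functor.map_comp, K.map_comp, he, zero_comp]
  obtain ⟨U, u, δ, hU⟩ := distinguished_cocone_triangle (𝟙 (∐ X) - φ)
  refine ⟨U, Sigma.ι X 0 ≫ u, ?_, fun V g hg => ?_⟩
  · refine (K.homologicalKernel.trW_iff_of_distinguished _ hU).1
      ((homologicalKernel_trW_iff _).2 fun n => ?_)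
    -- As `φ` is phantom, `𝟙 - φ` induces the identity on homology.
    change IsIso (K.map ((𝟙 (∐ X) - φ)⟦n⟧'))
    rw [Functor.map_sub, K.map_sub, hφ n, sub_zero,
      (shiftFunctor C n).map_id, K.map_id]
    infer_instance
  · have hφg : (𝟙 (∐ X) - φ) ≫ Sigma.desc g = 0 := by
      ext n
      simp [φ, hg]
    obtain ⟨h, hh⟩ : ∃ h : U ⟶ V, Sigma.desc g = u ≫ h := Triangle.yoneda_exact₂ _ hU _ hφg
    exact ⟨h, by rw [Category.assoc, ← hh, Sigma.ι_desc]⟩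

end Phantom

section WeaklyInitial

/-- Every morphism from an object `X` to an object satisfying `P` factors through a member of a
small family, depending on `X` only, of morphisms in `W` with source `X`. -/
def HasSmallFactorizations {C : Type u} [Category.{v} C] (W : MorphismProperty C)
    (P : ObjectProperty C) : Prop :=
  ∀ X : C, ∃ (I : Type v) (N : I → C) (e : ∀ i, X ⟶ N i), (∀ i, W (e i)) ∧
    ∀ (V : C), P V → ∀ g : X ⟶ V, ∃ (i : I) (h : N i ⟶ V), e i ≫ h = g

namespace HasSmallFactorizations

variable {C : Type u} [Category.{v} C] {W : MorphismProperty C} {P : ObjectProperty C}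

lemma exists_closed_family (H : HasSmallFactorizations W P) (X : C) :
    ∃ (D : Type v) (A : D → C) (d₀ : D) (_ : A d₀ = X), ∀ (V : C), P V →
      ∀ (d : D) (g : A d ⟶ V),
        ∃ (d' : D) (e : A d ⟶ A d') (h : A d' ⟶ V), W e ∧ e ≫ h = g := by
  choose I N e he hfac using H
  let level (n : ℕ) : Σ J : Type v, J → C :=
    n.rec ⟨PUnit, fun _ => X⟩ fun _ L => ⟨Σ j : L.1, I (L.2 j), fun j => N (L.2 j.1) j.2⟩
  refine ⟨Σ n, (level n).1, fun d => (level d.1).2 d.2, ⟨0, PUnit.unit⟩, rfl, ?_⟩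
  rintro V hV ⟨n, j⟩ g
  obtain ⟨i, h, hh⟩ := hfac _ V hV g
  exact ⟨⟨n + 1, ⟨j, i⟩⟩, e _ i, h, he _ i, hh⟩

lemma exists_sequences (H : HasSmallFactorizations W P) (X : C) :
    ∃ (I : Type v) (A : I → ℕ → C) (f : ∀ i, X ⟶ A i 0) (e : ∀ i n, A i n ⟶ A i (n + 1)),
      (∀ i n, W (e i n)) ∧ ∀ (V : C), P V → ∀ g : X ⟶ V, ∃ (i : I) (k : ∀ n, A i n ⟶ V),
        f i ≫ k 0 = g ∧ ∀ n, e i n ≫ k (n + 1) = k n := by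
  obtain ⟨D, A, d₀, rfl, hA⟩ := H.exists_closed_family X
  let I : Type v := Σ s : ℕ → D, (A d₀ ⟶ A (s 0)) ×
    { e : ∀ n, A (s n) ⟶ A (s (n + 1)) // ∀ n, W (e n) }
  refine ⟨I, fun i n => A (i.1 n), fun i => i.2.1, fun i => i.2.2.1, fun i => i.2.2.2,
    fun V hV g => ?_⟩
  choose next e h he heh using hA V hV
  let state (n : ℕ) : Σ d : D, (A d ⟶ V) :=
    n.rec ⟨d₀, g⟩ fun _ S => ⟨next S.1 S.2, h S.1 S.2⟩
  exact ⟨⟨fun n => (state n).1, 𝟙 _, fun n => e (state n).1 (state n).2, fun n => he _ _⟩,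
    fun n => (state n).2, Category.id_comp g, fun n => heh _ _⟩

end HasSmallFactorizations

/-- The objects `c s` cover the homology theory `K_*` if every element of a group `K_n(X)` comes
from `K_n(c s)` along some morphism `c s ⟶ X`. -/
def CoversHomology {C : Type*} [Category* C] [HasShift C ℤ] (K : C ⥤ AddCommGrpCat.{v})
    {σ : Type*} (c : σ → C) : Prop :=
  ∀ (X : C) (n : ℤ) (x : K.obj (X⟦n⟧)),
    ∃ (s : σ) (f : c s ⟶ X) (t : K.obj ((c s)⟦n⟧)), K.map (f⟦n⟧') t = x

lemma essentiallySmall_of_fullSubcategory {C : Type*} [Category* C] (P : ObjectProperty C)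
    [EssentiallySmall.{v} P.FullSubcategory] : ObjectProperty.EssentiallySmall.{v} P :=
  .of_le (Q := P.ι.essImage) fun X hX => P.ι.obj_mem_essImage ⟨X, hX⟩

lemma exists_coversHomology {C : Type*} [Category* C] [HasShift C ℤ]
    {K : C ⥤ AddCommGrpCat.{v}} {Q : ObjectProperty C} [Q.IsStableUnderShift ℤ]
    [ObjectProperty.EssentiallySmall.{v} Q] (hQ : ∀ X, homologyDetermined Q K X) :
    ∃ (σ : Type v) (c : σ → C), CoversHomology K c := by
  obtain ⟨Q₀, _, -, hQ₀⟩ := ObjectProperty.EssentiallySmall.exists_small_le.{v} Q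
  refine ⟨Shrink.{v} (Subtype Q₀), fun s => ((equivShrink _).symm s).1, fun X n x => ?_⟩
  obtain ⟨T, hT, f, t, rfl⟩ := (hQ X n).exists_lift x
  obtain ⟨S, hS, ⟨w⟩⟩ := hQ₀ _ (Q.le_shift (-n) T hT)
  obtain ⟨s, hs⟩ := (equivShrink.{v} (Subtype Q₀)).symm.surjective ⟨S, hS⟩
  obtain rfl : ((equivShrink _).symm s).1 = S := congr_arg Subtype.val hs
  let e : T ≅ (((equivShrink _).symm s).1)⟦n⟧ :=
    ((shiftFunctorCompIsoId C (-n) n (by simp)).app T).symm ≪≫ (shiftFunctor C n).mapIso w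
  obtain ⟨f', hf'⟩ := (shiftFunctor C n).map_surjective (e.inv ≫ f)
  exact ⟨s, f', K.map e.hom t, by rw [hf', ← K.map_comp_apply, e.hom_inv_id_assoc]⟩

variable {C : Type u} [Category.{v} C] [Preadditive C] [HasZeroObject C] [HasShift C ℤ]
  [∀ n : ℤ, (CategoryTheory.shiftFunctor C n).Additive] [Pretriangulated C]
  [HasCoproducts.{v} C] {K : C ⥤ AddCommGrpCat.{v}} [K.IsHomological]

lemma CoversHomology.hasSmallFactorizations {σ : Type v} {c : σ → C} (hc : CoversHomology K c) :
    HasSmallFactorizations (phantoms K) K.homologicalKernel := by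
  intro X
  -- An index `p` chooses, for each element of each group `K_n(X)`, a morphism `c s ⟶ X`.
  choose N e d hd using fun p : (Σ n : ℤ, K.obj (X⟦n⟧)) → Σ s, (c s ⟶ X) =>
    distinguished_cocone_triangle (Sigma.desc fun x => (p x).2)
  refine ⟨{p // phantoms K (e p)}, fun p => N p, fun p => e p, fun p => p.2, fun V hV g => ?_⟩
  obtain ⟨F, q, δ, hF⟩ := distinguished_cocone_triangle₁ g
  have hlift (x : Σ n : ℤ, K.obj (X⟦n⟧)) : ∃ (s : σ) (f : c s ⟶ F) (t : K.obj ((c s)⟦x.1⟧)),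
      K.map ((f ≫ q)⟦x.1⟧') t = x.2 := by
    obtain ⟨y, hy⟩ := surjective_map_shift_mor₁ hF hV x.1 x.2
    obtain ⟨s, f, t, rfl⟩ := hc F x.1 y
    exact ⟨s, f, t, by rw [Functor.map_comp, K.map_comp_apply]; exact hy⟩
  choose s f t ht using hlift
  let p (x : Σ n : ℤ, K.obj (X⟦n⟧)) : Σ s, (c s ⟶ X) := ⟨s x, f x ≫ q⟩
  have hsurj (n : ℤ) (x : K.obj (X⟦n⟧)) :
      ∃ y, K.map ((Sigma.desc fun x => (p x).2)⟦n⟧') y = x :=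
    ⟨K.map ((Sigma.ι (fun x => c (p x).1) ⟨n, x⟩)⟦n⟧') (t ⟨n, x⟩), by
      rw [← K.map_comp_apply, ← Functor.map_comp, Sigma.ι_desc]
      exact ht ⟨n, x⟩⟩
  have hp : phantoms K (e p) := phantoms_mor₂ (hd p) hsurj
  have hpg : Sigma.desc (fun x => (p x).2) ≫ g = 0 := by
    ext x
    have hqg : q ≫ g = 0 := comp_distTriang_mor_zero₁₂ _ hF
    simp [p, hqg]
  obtain ⟨h, hh⟩ := Triangle.yoneda_exact₂ _ (hd p) g hpg
  exact ⟨⟨p, hp⟩, h, hh.symm⟩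

lemma solutionSetCondition_homologicalKernel [∀ α : Type v, PreservesColimitsOfShape (Discrete α) K]
    (H : HasSmallFactorizations (phantoms K) K.homologicalKernel) :
    SolutionSetCondition.{v} K.homologicalKernel.ι := fun X => by
  have := hasColimitsOfShape_of_equivalence (C := C)
    (Discrete.equivalence (Equiv.ulift.{v} (α := ℕ)))
  have := preservesColimitsOfShape_of_equiv
    (Discrete.equivalence (Equiv.ulift.{v} (α := ℕ))) K
  obtain ⟨I, A, f, e, he, hfac⟩ := H.exists_sequences X
  choose U u hU hext using fun i => exists_acyclic_telescope (A i) (e i) (he i)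
  refine ⟨I, fun i => ⟨U i, hU i⟩, fun i => f i ≫ u i, fun V g => ?_⟩
  obtain ⟨i, k, hk₀, hk⟩ := hfac V.obj V.property g
  obtain ⟨h, hh⟩ := hext i V.obj k hk
  exact ⟨i, ObjectProperty.homMk h, by simpa [hh] using hk₀⟩

end WeaklyInitial

section VerdierQuotient

lemma small_hom_of_hasRightCalculusOfFractions {C D : Type*} [Category.{v} C] [Category* D]
    (L : C ⥤ D) (W : MorphismProperty C) [L.IsLocalization W] [W.HasRightCalculusOfFractions]
    {X : C} {ι : Type v} {F : ι → C} (s : ∀ i, F i ⟶ X) (hs : ∀ i, W (s i))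
    (hF : ∀ ⦃X' : C⦄ (t : X' ⟶ X), W t → ∃ (i : ι) (a : F i ⟶ X'), a ≫ t = s i) (Y : C) :
    Small.{v} (L.obj X ⟶ L.obj Y) := by
  have (i : ι) : IsIso (L.map (s i)) := Localization.inverts L W _ (hs i)
  refine small_of_surjective (α := Σ i, (F i ⟶ Y))
    (f := fun p => inv (L.map (s p.1)) ≫ L.map p.2) fun f => ?_
  obtain ⟨φ, rfl⟩ := Localization.exists_rightFraction L W f
  obtain ⟨i, a, ha⟩ := hF φ.s φ.hs
  refine ⟨⟨i, a ≫ φ.f⟩, ?_⟩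
  rw [IsIso.inv_comp_eq, ← ha, L.map_comp, L.map_comp, Category.assoc,
    MorphismProperty.RightFraction.map_s_comp_map]

variable {C : Type*} [Category.{v} C] [Preadditive C] [HasZeroObject C] [HasShift C ℤ]
  [∀ n : ℤ, (CategoryTheory.shiftFunctor C n).Additive] [Pretriangulated C] {P : ObjectProperty C}

lemma exists_trW_comp_eq_zero {X V : C} (g : X ⟶ V) (hV : P V) :
    ∃ (F : C) (s : F ⟶ X), P.trW s ∧ s ≫ g = 0 := by
  obtain ⟨F, s, δ, hF⟩ := distinguished_cocone_triangle₁ g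
  exact ⟨F, s, ⟨V, g, δ, hF, hV⟩, comp_distTriang_mor_zero₁₂ _ hF⟩

lemma exists_lift_of_trW {X' X : C} {s : X' ⟶ X} (hs : P.trW s) :
    ∃ (V : C) (_ : P V) (g : X ⟶ V), ∀ ⦃Z : C⦄ (b : Z ⟶ X), b ≫ g = 0 → ∃ a, b = a ≫ s := by
  obtain ⟨V, g, δ, hT, hV⟩ := hs
  exact ⟨V, hV, g, fun Z b hb => Triangle.coyoneda_exact₂ _ hT b hb⟩

-- The Mathlib instance assumes `IsTriangulated C`; here `C` is only pretriangulated.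
lemma hasRightCalculusOfFractions_trW [P.IsStableUnderShift ℤ] [P.trW.IsMultiplicative] :
    P.trW.HasRightCalculusOfFractions where
  exists_rightFraction X Y φ := by
    obtain ⟨V, hV, g, hlift⟩ := exists_lift_of_trW φ.hs
    obtain ⟨F, t, ht, htg⟩ := exists_trW_comp_eq_zero (φ.f ≫ g) hV
    obtain ⟨a, ha⟩ := hlift (t ≫ φ.f) (by rw [Category.assoc, htg])
    exact ⟨.mk t ht a, ha⟩
  ext X Y Y' f₁ f₂ s hs h := by
    obtain ⟨V, g, δ, hT, hV⟩ := (P.trW_iff' s).1 hs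
    obtain ⟨q, hq⟩ : ∃ q : X ⟶ V, f₁ - f₂ = q ≫ g := Triangle.coyoneda_exact₂ _ hT _
      (show (f₁ - f₂) ≫ s = 0 by rw [Preadditive.sub_comp, h, sub_self])
    obtain ⟨F, t, ht, htq⟩ := exists_trW_comp_eq_zero q hV
    exact ⟨F, t, ht, by rw [← sub_eq_zero, ← Preadditive.comp_sub, hq, reassoc_of% htq, zero_comp]⟩

lemma locallySmall_localization_trW [P.trW.HasRightCalculusOfFractions]
    (hP : SolutionSetCondition.{v} P.ι) : LocallySmall.{v} P.trW.Localization where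
  hom_small A B := by
    obtain ⟨X, rfl⟩ := (Localization.Construction.objEquiv P.trW).surjective A
    obtain ⟨Y, rfl⟩ := (Localization.Construction.objEquiv P.trW).surjective B
    obtain ⟨ι, U, e, hU⟩ := hP X
    choose F s hs hse using fun i => exists_trW_comp_eq_zero (e i) (U i).property
    refine small_hom_of_hasRightCalculusOfFractions P.trW.Q P.trW s hs (fun X' t ht => ?_) Y
    obtain ⟨V, hV, g, hlift⟩ := exists_lift_of_trW ht
    obtain ⟨i, h, hh⟩ := hU ⟨V, hV⟩ g
    obtain ⟨a, ha⟩ := hlift (s i) (by rw [← hh, reassoc_of% hse, zero_comp])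
    exact ⟨i, a, ha.symm⟩

lemma coneW_eq_trW {C : Type u} [Category.{v} C] [Preadditive C] [HasZeroObject C] [HasShift C ℤ]
    [∀ n : ℤ, (CategoryTheory.shiftFunctor C n).Additive] [Pretriangulated C]
    (P : ObjectProperty C) : coneW C P = P.trW := by
  ext X Y f
  simp only [coneW, P.trW_iff, exists_prop]

end VerdierQuotient

/-- For a homology theory `K` on a compactly generated triangulated category, the kernel
`𝒰 = ker K_*` is a localising subcategory, each `X/𝒰` has a weakly initial set, and
consequently the Verdier quotient `𝒯/𝒰` is locally small. -/
theorem stmt19 (C : Type u) [Category.{v} C] [HasZeroObject C] [Preadditive C]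
    [HasShift C ℤ] [∀ n : ℤ, (CategoryTheory.shiftFunctor C n).Additive]
    [Pretriangulated C] [HasCoproducts.{v} C]
    -- `𝒯` is compactly generated:
    (hsmall : EssentiallySmall.{v} (ObjectProperty.FullSubcategory (IsCompactObj C)))
    (hgen : ∀ (P : C → Prop),
      (∀ Z : C, IsZero Z → P Z) →
      (∀ ⦃X Y : C⦄, (X ≅ Y) → P X → P Y) →
      (∀ (X : C) (n : ℤ), P X → P (X⟦n⟧)) →
      (∀ (T : Triangle C), T ∈ (distTriang C) → P T.obj₁ → P T.obj₃ → P T.obj₂) →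
      (∀ ⦃X Y : C⦄ (i : X ⟶ Y) (r : Y ⟶ X), i ≫ r = 𝟙 X → P Y → P X) →
      (∀ ⦃α : Type v⦄ (f : α → C), (∀ a, P (f a)) → P (∐ f)) →
      (∀ T : C, IsCompactObj C T → P T) → ∀ X, P X)
    -- `K` is a homology theory:
    (K : C ⥤ AddCommGrpCat.{v}) [K.Additive]
    [∀ α : Type v, PreservesColimitsOfShape (Discrete α) K]
    (hexact : ∀ (T : Triangle C), T ∈ (distTriang C) →
      Function.Exact (K.map T.mor₁) (K.map T.mor₂)) :
    -- `𝒰 = ker K_*` is a localising subcategory: ...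
    ((∀ Z : C, IsZero Z → KAcyclic C K Z) ∧
      (∀ ⦃X Y : C⦄, (X ≅ Y) → KAcyclic C K X → KAcyclic C K Y) ∧
      (∀ (X : C) (n : ℤ), KAcyclic C K X → KAcyclic C K (X⟦n⟧)) ∧
      (∀ (T : Triangle C), T ∈ (distTriang C) →
        KAcyclic C K T.obj₁ → KAcyclic C K T.obj₃ → KAcyclic C K T.obj₂) ∧
      (∀ ⦃X Y : C⦄ (i : X ⟶ Y) (r : Y ⟶ X), i ≫ r = 𝟙 X →
        KAcyclic C K Y → KAcyclic C K X) ∧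
      (∀ ⦃α : Type v⦄ (f : α → C), (∀ a, KAcyclic C K (f a)) → KAcyclic C K (∐ f))) ∧
    -- ... every comma category `X/𝒰` has a weakly initial set ...
    (∀ X : C, ∃ (ι : Type v) (U : ι → C) (e : ∀ i, X ⟶ U i),
      (∀ i, KAcyclic C K (U i)) ∧
        ∀ (V : C), KAcyclic C K V → ∀ g : X ⟶ V, ∃ (i : ι) (h : U i ⟶ V), e i ≫ h = g) ∧
    -- ... and consequently the Verdier quotient `𝒯/𝒰` has small hom sets
    LocallySmall.{v} (coneW C (KAcyclic C K)).Localization := by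
  have : K.IsHomological := isHomological_of_exact K hexact
  have := essentiallySmall_of_fullSubcategory (IsCompactObj C)
  have hdet : ∀ X, homologyDetermined (IsCompactObj C) K X :=
    hgen _ (fun _ => ObjectProperty.prop_of_isZero _) (fun _ _ => ObjectProperty.prop_of_iso _)
      (fun X n => ObjectProperty.le_shift _ n X)
      (fun T hT => ObjectProperty.ext_of_isTriangulatedClosed₂ _ T hT)
      (fun _ _ i r hir => ObjectProperty.prop_of_retract _ ⟨i, r, hir⟩)
      (fun _ _ => homologyDetermined_sigma le_rfl) (le_homologyDetermined _ K)
  obtain ⟨σ, c, hc⟩ := exists_coversHomology hdet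
  have hinit : SolutionSetCondition.{v} K.homologicalKernel.ι :=
    solutionSetCondition_homologicalKernel hc.hasSmallFactorizations
  have := hasRightCalculusOfFractions_trW (P := K.homologicalKernel)
  refine ⟨⟨fun _ => K.homologicalKernel.prop_of_isZero, fun _ _ => K.homologicalKernel.prop_of_iso,
    fun X n => K.homologicalKernel.le_shift n X,
    K.homologicalKernel.ext_of_isTriangulatedClosed₂,
    fun _ _ i r hir => K.homologicalKernel.prop_of_retract ⟨i, r, hir⟩,
    fun _ _ => homologicalKernel_sigma⟩, fun X => ?_, ?_⟩
  · obtain ⟨ι, U, e, hU⟩ := hinit X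
    refine ⟨ι, fun i => (U i).obj, e, fun i => (U i).property, fun V hV g => ?_⟩
    obtain ⟨i, h, hh⟩ := hU ⟨V, hV⟩ g
    exact ⟨i, h.hom, hh⟩
  · exact coneW_eq_trW K.homologicalKernel ▸ locallySmall_localization_trW hinit
end
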